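/- Second Growth Theorem: Let Y = (y,s) ∈ ℝ^{n+1}, r > 0, and let u ∈ C^{2,1} on the closure of Q_r(Y) satisfy −u_t + Lu ≥ 0 at every point of Q_r(Y). Suppose u ≤ 0 on the disk D_ρ := B_ρ(z) × {τ}, where B_ρ(z) ⊂ B_r(y) and s − r² ≤ τ ≤ s − r²/4 − ρ². Then u(Y) ≤ β₃ · sup_{Q_r(Y)} u₊, where u₊ := max(u,0) and β₃ < 1 is a positive constant depending only on n, ν, the ratio ρ/r, and S. -/

import Mathlib

open MeasureTheory ENNReal Metric Set RealInnerProductSpace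

noncomputable section

/-- `n`-dimensional Euclidean space. -/
abbrev En (n : ℕ) : Type := EuclideanSpace ℝ (Fin n)

variable {n : ℕ}

/-- Time derivative `u_t`. -/
def Dt (u : En n × ℝ → ℝ) (X : En n × ℝ) : ℝ :=
  deriv (fun t => u (X.1, t)) X.2

/-- First spatial derivative `D_i u`. -/
def Dx (u : En n × ℝ → ℝ) (i : Fin n) (X : En n × ℝ) : ℝ :=
  fderiv ℝ (fun x => u (x, X.2)) X.1 (EuclideanSpace.single i 1)

/-- Second spatial derivative `D_{ij} u`. -/
def Dxx (u : En n × ℝ → ℝ) (i j : Fin n) (X : En n × ℝ) : ℝ :=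
  Dx (Dx u j) i X

/-- `u` is of class `C^{2,1}` on `Q`: `u`, `D_i u`, `D_{ij} u`, `u_t` exist and are
continuous on `Q`. -/
structure IsC21 (u : En n × ℝ → ℝ) (Q : Set (En n × ℝ)) : Prop where
  cont : ContinuousOn u Q
  diff_t : ∀ X ∈ Q, DifferentiableAt ℝ (fun t => u (X.1, t)) X.2
  diff_x : ∀ X ∈ Q, DifferentiableAt ℝ (fun x => u (x, X.2)) X.1
  diff_xx : ∀ j : Fin n, ∀ X ∈ Q, DifferentiableAt ℝ (fun x => Dx u j (x, X.2)) X.1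
  cont_t : ContinuousOn (Dt u) Q
  cont_x : ∀ i, ContinuousOn (Dx u i) Q
  cont_xx : ∀ i j, ContinuousOn (Dxx u i j) Q

/-- Uniform parabolicity with constant `ν` on `Q`:
`ν⁻¹|ξ|² ≤ Σ a_ij ξ_i ξ_j` and `Σ a_ij² ≤ ν²`. -/
def UnifParabolic (ν : ℝ) (a : En n × ℝ → Matrix (Fin n) (Fin n) ℝ)
    (Q : Set (En n × ℝ)) : Prop :=
  ∀ X ∈ Q, (∀ ξ : Fin n → ℝ, ν⁻¹ * (∑ i, ξ i ^ 2) ≤ ∑ i, ∑ j, a X i j * ξ i * ξ j) ∧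
    (∑ i, ∑ j, (a X i j) ^ 2) ≤ ν ^ 2

/-- `Lu = Σ_{ij} a_ij D_ij u + Σ_i b_i D_i u`. -/
def Lop (a : En n × ℝ → Matrix (Fin n) (Fin n) ℝ) (b : En n × ℝ → En n)
    (u : En n × ℝ → ℝ) (X : En n × ℝ) : ℝ :=
  (∑ i, ∑ j, a X i j * Dxx u i j X) + ∑ i, b X i * Dx u i X

/-- `∫ (ess sup_t |f(x,t)|)ⁿ dx`, the `n`-th power of the `L^n_x L^∞_t` norm of `f`
over the set `Q ⊆ ℝⁿ × ℝ`. -/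
def LxnLtinfPow {E : Type*} [NNNorm E] (f : En n × ℝ → E) (Q : Set (En n × ℝ)) : ℝ≥0∞ :=
  ∫⁻ x, (essSup (fun t => (‖f (x, t)‖₊ : ℝ≥0∞)) (volume.restrict {t | (x, t) ∈ Q})) ^ n

/-- The `L^n_x L^∞_t` norm of `f` over `Q`. -/
def LxnLtinf {E : Type*} [NNNorm E] (f : En n × ℝ → E) (Q : Set (En n × ℝ)) : ℝ≥0∞ :=
  (LxnLtinfPow f Q) ^ (1 / (n : ℝ))

/-- The box `B_ρ(y) × (t₁, t₂)`. -/
def box (y : En n) (ρ t₁ t₂ : ℝ) : Set (En n × ℝ) := ball y ρ ×ˢ Ioo t₁ t₂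

/-- The standard parabolic cylinder `Q_r(Y) = B_r(y) × (s - r², s)`. -/
def pcyl (Y : En n × ℝ) (r : ℝ) : Set (En n × ℝ) := box Y.1 r (Y.2 - r ^ 2) Y.2

/-- The slanted cylinder `V_r(Y) = {(x,t) : |x - (t/s)y| < r, 0 < t < s}`. -/
def slantCyl (Y : En n × ℝ) (r : ℝ) : Set (En n × ℝ) :=
  {X | ‖X.1 - (X.2 / Y.2) • Y.1‖ < r ∧ 0 < X.2 ∧ X.2 < Y.2}

/-- Supremum of the positive part `u₊` over a set `A`. -/
def supPos (u : En n × ℝ → ℝ) (A : Set (En n × ℝ)) : ℝ :=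
  sSup ((fun X => max (u X) 0) '' A)

/-- `Ω` is a Lipschitz domain with character `(rΩ, mΩ)`: at every boundary point `y`
there is a coordinate frame, encoded by the unit "vertical" direction `e`, in which
`Ω ∩ B_{rΩ}(y)` is the region above the graph of an `mΩ`-Lipschitz function `φ`
of the tangential variables. -/
def IsLipschitzDomain (Ω : Set (En n)) (rΩ mΩ : ℝ) : Prop :=
  0 < rΩ ∧ 0 ≤ mΩ ∧
  ∀ y ∈ frontier Ω, ∃ (e : En n) (φ : En n → ℝ),
    ‖e‖ = 1 ∧ LipschitzWith (Real.toNNReal mΩ) φ ∧ φ 0 = 0 ∧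
    (∀ x, x ∈ Ω ∩ ball y rΩ ↔
      dist x y < rΩ ∧ φ ((x - y) - ⟪x - y, e⟫ • e) < ⟪x - y, e⟫) ∧
    (∀ ρ : ℝ, 0 < ρ → ρ ≤ rΩ → y + ρ • e ∈ Ω)

open Filter Topology Measure

/-!
Taking essential suprema in time turns `-u_t + Lu ≥ 0` into a differential inequality with a
time-independent drift majorant `g`, where `∫ gⁿ` is controlled. A parabolic ABP estimate is proved
by counting contact points over concentric annuli of slopes, of which one carries little drift.
Comparison with an explicit barrier shows that, at scale `σ` and where the drift is small, a gap
`u ≤ M - μ` on a ball of radius `σ` spreads in time `σ²` to the ball of radius `2σ`, `μ` being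
replaced by `c μ`; iterating transports the gap along curves.

If `n ≥ 2`, a radius and a direction can be chosen, by the pigeonhole principle, such that the drift
is small near a segment from the disk to a sphere about `y` and near the sphere itself. The gap is
transported along the segment and then over the sphere, and reaches the centre `y` by one more use
of the ABP estimate. If `n = 1` spheres are disconnected, but a one-dimensional change of metric
absorbs a continuous drift entirely, and the remaining part of the drift is small in `L¹`.
-/

/-! ### Measure of the image of a pointwise Lipschitz map -/

section LipschitzImage

open Module

variable {E : Type*} [NormedAddCommGroup E] [NormedSpace ℝ E] [FiniteDimensional ℝ E]
  [MeasurableSpace E] [BorelSpace E] (μ : Measure E) [IsAddHaarMeasure μ] {F : E → E} {A : Set E}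

lemma addHaar_image_le_of_lipschitzOnWith {K : NNReal} (h : LipschitzOnWith K F A) :
    μ (F '' A) ≤ (K : ℝ≥0∞) ^ finrank ℝ E * μ A := by
  have hH := h.hausdorffMeasure_image_le (d := (finrank ℝ E : ℝ)) (by positivity)
  rw [ENNReal.rpow_natCast] at hH
  rw [isAddLeftInvariant_eq_smul μ μH[(finrank ℝ E : ℝ)], Measure.smul_apply, Measure.smul_apply,
    mul_smul_comm]
  gcongr

lemma addHaar_image_le_of_lipschitz_at_scale {L : NNReal} {δ : ℝ} (hδ : 0 < δ)
    (h : ∀ x ∈ A, ∀ x' ∈ A, dist x' x < δ → dist (F x') (F x) ≤ L * dist x' x) :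
    μ (F '' A) ≤ (L : ℝ≥0∞) ^ finrank ℝ E * μ A := by
  obtain ⟨q, hq⟩ := TopologicalSpace.exists_dense_seq E
  let c : ℕ → Set E := disjointed fun i => ball (q i) (δ / 2)
  have hc : ∀ i, MeasurableSet (c i) := MeasurableSet.disjointed fun i => measurableSet_ball
  have hcover : ⋃ i, c i = univ := by
    rw [iUnion_disjointed]
    exact eq_univ_of_forall fun x => mem_iUnion.2 (hq.exists_dist_lt x (half_pos hδ))
  have hpiece (i : ℕ) : μ (F '' (c i ∩ A)) ≤ (L : ℝ≥0∞) ^ finrank ℝ E * μ (c i ∩ A) := by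
    refine addHaar_image_le_of_lipschitzOnWith μ (LipschitzOnWith.of_dist_le_mul ?_)
    rintro x ⟨hxc, hx⟩ x' ⟨hxc', hx'⟩
    have hxq : dist x (q i) < δ / 2 := disjointed_subset _ i hxc
    have hxq' : dist x' (q i) < δ / 2 := disjointed_subset _ i hxc'
    exact h x' hx' x hx (by linarith [dist_triangle_right x x' (q i)])
  calc μ (F '' A) = μ (⋃ i, F '' (c i ∩ A)) := by
        rw [← image_iUnion, ← iUnion_inter, hcover, univ_inter]
    _ ≤ ∑' i, μ (F '' (c i ∩ A)) := measure_iUnion_le _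
    _ ≤ ∑' i, (L : ℝ≥0∞) ^ finrank ℝ E * μ.restrict A (c i) := by
        gcongr with i
        exact (hpiece i).trans_eq (by rw [Measure.restrict_apply (hc i)])
    _ = (L : ℝ≥0∞) ^ finrank ℝ E * μ A := by
        rw [ENNReal.tsum_mul_left, ← measure_iUnion (disjoint_disjointed _) hc, hcover,
          Measure.restrict_apply_univ]

lemma addHaar_image_le_of_eventually_lipschitz {L : NNReal}
    (h : ∀ x ∈ A, ∀ᶠ x' in 𝓝[A] x, dist (F x') (F x) ≤ L * dist x' x) :
    μ (F '' A) ≤ (L : ℝ≥0∞) ^ finrank ℝ E * μ A := by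
  let B (m : ℕ) : Set E :=
    {x ∈ A | ∀ x' ∈ A, dist x' x < 1 / ((m : ℝ) + 1) → dist (F x') (F x) ≤ L * dist x' x}
  have hBA (m : ℕ) : B m ⊆ A := fun x hx => hx.1
  have hmono : Monotone B := fun m k hmk x hx =>
    ⟨hx.1, fun x' hx' hd => hx.2 x' hx' (hd.trans_le (Nat.one_div_le_one_div hmk))⟩
  have hU : ⋃ m, B m = A := by
    refine (iUnion_subset hBA).antisymm fun x hx => ?_
    obtain ⟨ε, hε, hεx⟩ := Metric.eventually_nhds_iff.1 (eventually_nhdsWithin_iff.1 (h x hx))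
    obtain ⟨m, hm⟩ := exists_nat_one_div_lt hε
    exact mem_iUnion.2 ⟨m, hx, fun x' hx' hd => hεx (hd.trans hm) hx'⟩
  have hB (m : ℕ) : μ (F '' B m) ≤ (L : ℝ≥0∞) ^ finrank ℝ E * μ A := by
    have hδ : 0 < 1 / ((m : ℝ) + 1) := by positivity
    calc μ (F '' B m) ≤ (L : ℝ≥0∞) ^ finrank ℝ E * μ (B m) :=
          addHaar_image_le_of_lipschitz_at_scale μ hδ fun x hx x' hx' => hx.2 x' hx'.1
      _ ≤ (L : ℝ≥0∞) ^ finrank ℝ E * μ A := by gcongr; exact hBA m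
  calc μ (F '' A) = ⨆ m, μ (F '' B m) := by
        rw [← hU, image_iUnion, Monotone.measure_iUnion fun _ _ h => image_mono (hmono h)]
    _ ≤ (L : ℝ≥0∞) ^ finrank ℝ E * μ A := iSup_le hB

lemma addHaar_image_eq_zero_of_eventually_lipschitz (hA : μ A = 0)
    (h : ∀ x ∈ A, ∃ L : ℝ, ∀ᶠ x' in 𝓝[A] x, dist (F x') (F x) ≤ L * dist x' x) :
    μ (F '' A) = 0 := by
  let B (L : ℕ) : Set E := {x ∈ A | ∀ᶠ x' in 𝓝[A] x, dist (F x') (F x) ≤ L * dist x' x}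
  have hAB : A ⊆ ⋃ L, B L := fun x hx => by
    obtain ⟨L, hL⟩ := h x hx
    obtain ⟨k, hk⟩ := exists_nat_ge L
    exact mem_iUnion.2 ⟨k, hx, hL.mono fun x' hx' => hx'.trans (by gcongr)⟩
  refine measure_mono_null (image_mono hAB) ?_
  rw [image_iUnion]
  refine measure_iUnion_null fun L => le_antisymm ?_ zero_le
  calc μ (F '' B L) ≤ ((L : NNReal) : ℝ≥0∞) ^ finrank ℝ E * μ (B L) :=
        addHaar_image_le_of_eventually_lipschitz μ fun x hx =>
          hx.2.filter_mono (nhdsWithin_mono _ fun _ hy => hy.1)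
    _ = 0 := by rw [measure_mono_null (fun x hx => hx.1) hA, mul_zero]

lemma addHaar_image_le_const_mul_lintegral (hA : MeasurableSet A) {Λ : E → ℝ} (hΛ : Measurable Λ)
    (hpos : ∀ x, 0 < Λ x)
    (h : ∀ x ∈ A, ∀ᶠ x' in 𝓝[A] x, dist (F x') (F x) ≤ Λ x * dist x' x)
    {c : NNReal} (hc : 1 < c) :
    μ (F '' A) ≤ (c : ℝ≥0∞) ^ finrank ℝ E *
      ∫⁻ x in A, ENNReal.ofReal (Λ x) ^ finrank ℝ E ∂μ := by
  let level (k : ℤ) : Set E := A ∩ Λ ⁻¹' Ico ((c : ℝ) ^ k) (c ^ (k + 1))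
  have hlevel (k : ℤ) : MeasurableSet (level k) := hA.inter (hΛ measurableSet_Ico)
  have hcover : ⋃ k, level k = A := by
    refine (iUnion_subset fun k => inter_subset_left).antisymm fun x hx => ?_
    obtain ⟨k, hk⟩ := exists_mem_Ico_zpow (hpos x) (by exact_mod_cast hc : (1 : ℝ) < c)
    exact mem_iUnion.2 ⟨k, hx, hk⟩
  have hdisj : Pairwise (Function.onFun Disjoint level) := fun k l hkl =>
    (((zpow_right_mono₀ (by exact_mod_cast hc.le : (1 : ℝ) ≤ c)).pairwise_disjoint_on_Ico_succ
      hkl).preimage Λ).mono inter_subset_right inter_subset_right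
  have hpiece (k : ℤ) : μ (F '' level k) ≤ (c : ℝ≥0∞) ^ finrank ℝ E *
      ∫⁻ x in level k, ENNReal.ofReal (Λ x) ^ finrank ℝ E ∂μ := by
    have hck : (c ^ (k + 1) : NNReal) = (c : ℝ≥0∞) * ENNReal.ofReal ((c : ℝ) ^ k) := by
      rw [← NNReal.coe_zpow, ENNReal.ofReal_coe_nnreal, ← ENNReal.coe_mul,
        zpow_add_one₀ (by positivity), mul_comm]
    calc μ (F '' level k) ≤ ((c ^ (k + 1) : NNReal) : ℝ≥0∞) ^ finrank ℝ E * μ (level k) := by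
          refine addHaar_image_le_of_eventually_lipschitz μ fun x hx => ?_
          filter_upwards [(h x hx.1).filter_mono (nhdsWithin_mono _ inter_subset_left)] with x' hx'
          refine hx'.trans (mul_le_mul_of_nonneg_right ?_ dist_nonneg)
          exact_mod_cast hx.2.2.le
      _ = (c : ℝ≥0∞) ^ finrank ℝ E *
          ∫⁻ _ in level k, ENNReal.ofReal ((c : ℝ) ^ k) ^ finrank ℝ E ∂μ := by
          rw [hck, mul_pow, setLIntegral_const, mul_assoc]
      _ ≤ _ := by
          refine mul_le_mul_right (setLIntegral_mono' (hlevel k) fun x hx => ?_) _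
          gcongr
          exact hx.2.1
  calc μ (F '' A) = μ (⋃ k, F '' level k) := by rw [← image_iUnion, hcover]
    _ ≤ ∑' k, μ (F '' level k) := measure_iUnion_le _
    _ ≤ ∑' k, (c : ℝ≥0∞) ^ finrank ℝ E *
        ∫⁻ x in level k, ENNReal.ofReal (Λ x) ^ finrank ℝ E ∂μ := ENNReal.tsum_le_tsum hpiece
    _ = _ := by rw [ENNReal.tsum_mul_left, ← lintegral_iUnion hlevel hdisj, hcover]

theorem addHaar_image_le_lintegral_pow (hA : MeasurableSet A) {Λ : E → ℝ} (hΛ : Measurable Λ)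
    (hpos : ∀ x, 0 < Λ x)
    (hlip : ∀ x ∈ A, ∃ L : ℝ, ∀ᶠ x' in 𝓝[A] x, dist (F x') (F x) ≤ L * dist x' x)
    (hae : ∀ᵐ x ∂μ, x ∈ A → ∀ᶠ x' in 𝓝[A] x, dist (F x') (F x) ≤ Λ x * dist x' x) :
    μ (F '' A) ≤ ∫⁻ x in A, ENNReal.ofReal (Λ x) ^ finrank ℝ E ∂μ := by
  set I := ∫⁻ x in A, ENNReal.ofReal (Λ x) ^ finrank ℝ E ∂μ
  obtain ⟨T, hbad, hT, hT0⟩ := exists_measurable_superset_of_null hae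
  have hnull : μ (F '' (A ∩ T)) = 0 :=
    addHaar_image_eq_zero_of_eventually_lipschitz μ (measure_mono_null inter_subset_right hT0)
      fun x hx => (hlip x hx.1).imp fun _ hL => hL.filter_mono (nhdsWithin_mono _ inter_subset_left)
  have hgood (x) (hx : x ∈ A \ T) : ∀ᶠ x' in 𝓝[A \ T] x, dist (F x') (F x) ≤ Λ x * dist x' x :=
    (not_not.1 (notMem_subset hbad hx.2) hx.1).filter_mono (nhdsWithin_mono _ sdiff_subset)
  have hc (c : NNReal) (hc : 1 < c) : μ (F '' A) ≤ (c : ℝ≥0∞) ^ finrank ℝ E * I :=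
    calc μ (F '' A) ≤ μ (F '' (A ∩ T)) + μ (F '' (A \ T)) := by
          rw [← inter_union_sdiff A T, image_union, inter_union_sdiff]
          exact measure_union_le _ _
      _ ≤ 0 + (c : ℝ≥0∞) ^ finrank ℝ E *
          ∫⁻ x in A \ T, ENNReal.ofReal (Λ x) ^ finrank ℝ E ∂μ := by
          rw [hnull]
          gcongr
          exact addHaar_image_le_const_mul_lintegral μ (hA.diff hT) hΛ hpos hgood hc
      _ ≤ (c : ℝ≥0∞) ^ finrank ℝ E * I := by
          rw [zero_add]
          exact mul_le_mul_right (lintegral_mono_set sdiff_subset) _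
  have hlim : Tendsto (fun c : NNReal => (c : ℝ≥0∞) ^ finrank ℝ E * I) (𝓝[>] 1) (𝓝 I) := by
    have hpow : Tendsto (fun c : NNReal => (c : ℝ≥0∞) ^ finrank ℝ E) (𝓝[>] 1) (𝓝 1) := by
      have hcont : Continuous fun c : NNReal => (c : ℝ≥0∞) ^ finrank ℝ E :=
        (ENNReal.continuous_pow _).comp ENNReal.continuous_coe
      simpa using (hcont.tendsto 1).mono_left nhdsWithin_le_nhds
    simpa using ENNReal.Tendsto.mul_const hpow (Or.inl one_ne_zero)
  exact ge_of_tendsto hlim (eventually_nhdsWithin_of_forall hc)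

end LipschitzImage

/-! ### Second-order conditions at a maximum -/

section SecondOrder

variable {E F : Type*} [NormedAddCommGroup E] [NormedSpace ℝ E]
  [NormedAddCommGroup F] [NormedSpace ℝ F]

lemma eventually_norm_taylor_two_sub_le {f : E → F} {f' : E → E →L[ℝ] F}
    {f'' : E →L[ℝ] E →L[ℝ] F} {x : E} (hf : ∀ᶠ y in 𝓝 x, HasFDerivAt f (f' y) y)
    (hx : HasFDerivAt f' f'' x) {ε : ℝ} (hε : 0 < ε) :
    ∀ᶠ z in 𝓝 (0 : E), ‖f (x + z) - f x - f' x z - (1 / 2 : ℝ) • f'' z z‖ ≤ ε * ‖z‖ ^ 2 := by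
  have hsym := second_derivative_symmetric_of_eventually hf hx
  obtain ⟨δ, hδ, hb⟩ := Metric.eventually_nhds_iff_ball.1 (hf.and (hx.isLittleO.def hε))
  filter_upwards [Metric.ball_mem_nhds (0 : E) hδ] with z hz
  rw [mem_ball_zero_iff] at hz
  let φ : E → F := fun y => f y - f' x (y - x) - (1 / 2 : ℝ) • f'' (y - x) (y - x)
  have hφ : ∀ y ∈ ball x δ, HasFDerivAt φ (f' y - f' x - f'' (y - x)) y := by
    intro y hy
    have hsub : HasFDerivAt (fun y : E => y - x) (ContinuousLinearMap.id ℝ E) y :=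
      (hasFDerivAt_id y).sub_const x
    have hlin : HasFDerivAt (fun y => f' x (y - x)) (f' x) y := (f' x).hasFDerivAt.comp y hsub
    have hquad := (f''.hasFDerivAt_of_bilinear hsub hsub).const_smul (1 / 2 : ℝ)
    refine (((hb y hy).1.sub hlin).sub hquad).congr_fderiv ?_
    ext v
    simp only [_root_.sub_apply, _root_.smul_apply, _root_.add_apply,
      ContinuousLinearMap.precompR_apply, ContinuousLinearMap.precompL_apply,
      ContinuousLinearMap.compL_apply, ContinuousLinearMap.comp_id,
      ContinuousLinearMap.id_apply, hsym v (y - x)]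
    module
  have hball : closedBall x ‖z‖ ⊆ ball x δ := closedBall_subset_ball hz
  have hbound : ∀ y ∈ closedBall x ‖z‖, ‖f' y - f' x - f'' (y - x)‖ ≤ ε * ‖z‖ := fun y hy =>
    (hb y (hball hy)).2.trans (by gcongr; exact mem_closedBall_iff_norm.1 hy)
  have hmvt := (convex_closedBall x ‖z‖).norm_image_sub_le_of_norm_hasFDerivWithin_le
    (fun y hy => (hφ y (hball hy)).hasFDerivWithinAt) hbound
    (mem_closedBall_self (norm_nonneg z)) (y := x + z) (by simp)
  calc _ = ‖φ (x + z) - φ x‖ := by simp [φ]; abel_nf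
    _ ≤ ε * ‖z‖ * ‖x + z - x‖ := hmvt
    _ = ε * ‖z‖ ^ 2 := by rw [add_sub_cancel_left]; ring

lemma second_fderiv_apply_self_nonpos_of_isLocalMax {f : E → ℝ} {f' : E → E →L[ℝ] ℝ}
    {f'' : E →L[ℝ] E →L[ℝ] ℝ} {x : E} (hmax : IsLocalMax f x)
    (hf : ∀ᶠ y in 𝓝 x, HasFDerivAt f (f' y) y) (hx : HasFDerivAt f' f'' x) (z : E) :
    f'' z z ≤ 0 := by
  have hbound : ∀ ε > 0, f'' z z ≤ 2 * ε * ‖z‖ ^ 2 := by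
    intro ε hε
    have hmax' : ∀ᶠ w in 𝓝 (0 : E), f (x + w) ≤ f x :=
      (Continuous.tendsto' (f := fun w => x + w) (by fun_prop) 0 x (by simp)).eventually hmax
    have hray : Tendsto (fun s : ℝ => s • z) (𝓝[>] 0) (𝓝 0) :=
      (Continuous.tendsto' (by fun_prop) 0 0 (by simp)).mono_left nhdsWithin_le_nhds
    obtain ⟨s, ⟨hs, hle⟩, hpos : 0 < s⟩ := ((hray.eventually
      ((eventually_norm_taylor_two_sub_le hf hx hε).and hmax')).and self_mem_nhdsWithin).exists
    rw [hmax.hasFDerivAt_eq_zero hf.self_of_nhds, Real.norm_eq_abs] at hs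
    have hs := (abs_le.1 hs).1
    simp only [map_smul, _root_.smul_apply, smul_eq_mul, norm_smul, Real.norm_eq_abs, mul_pow,
      sq_abs, _root_.zero_apply] at hs
    have hss : s ^ 2 * f'' z z ≤ s ^ 2 * (2 * ε * ‖z‖ ^ 2) := by linarith
    exact le_of_mul_le_mul_left hss (by positivity)
  have hlim : Tendsto (fun ε : ℝ => 2 * ε * ‖z‖ ^ 2) (𝓝[>] 0) (𝓝 0) :=
    (Continuous.tendsto' (by fun_prop) 0 0 (by simp)).mono_left nhdsWithin_le_nhds
  exact ge_of_tendsto hlim (eventually_nhdsWithin_of_forall hbound)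

end SecondOrder

/-- Elliptic coefficient matrices with constant `ν`; `UnifParabolic ν a Q` says that `a X` is one
for every `X ∈ Q`. -/
def IsUnifElliptic (ν : ℝ) (A : Matrix (Fin n) (Fin n) ℝ) : Prop :=
  (∀ ξ : Fin n → ℝ, ν⁻¹ * (∑ i, ξ i ^ 2) ≤ ∑ i, ∑ j, A i j * ξ i * ξ j) ∧
    (∑ i, ∑ j, (A i j) ^ 2) ≤ ν ^ 2

lemma IsUnifElliptic.sq_apply_le {ν : ℝ} {A : Matrix (Fin n) (Fin n) ℝ} (hA : IsUnifElliptic ν A)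
    (i j : Fin n) : A i j ^ 2 ≤ ν ^ 2 :=
  calc A i j ^ 2 ≤ ∑ j, A i j ^ 2 :=
        Finset.single_le_sum (fun j _ => sq_nonneg (A i j)) (Finset.mem_univ j)
    _ ≤ ∑ i, ∑ j, A i j ^ 2 :=
        Finset.single_le_sum (f := fun i => ∑ j, A i j ^ 2)
          (fun _ _ => Finset.sum_nonneg fun _ _ => sq_nonneg _) (Finset.mem_univ i)
    _ ≤ ν ^ 2 := hA.2

section PosSemidef

variable {H : Matrix (Fin n) (Fin n) ℝ}

lemma exists_gram_of_posSemidef (hH : H.PosSemidef) :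
    ∃ B : Matrix (Fin n) (Fin n) ℝ, ∀ i j, H i j = ∑ k, B k i * B k j := by
  obtain ⟨B, rfl⟩ : ∃ B : Matrix (Fin n) (Fin n) ℝ, H = star B * B := by
    open scoped MatrixOrder in exact CStarAlgebra.nonneg_iff_eq_star_mul_self.1 hH.nonneg
  exact ⟨B, fun i j => by simp [Matrix.mul_apply, Matrix.star_apply]⟩

lemma trace_eq_sum_sq_of_gram {B : Matrix (Fin n) (Fin n) ℝ}
    (hB : ∀ i j, H i j = ∑ k, B k i * B k j) : H.trace = ∑ k, ∑ i, B k i ^ 2 := by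
  simp only [Matrix.trace, Matrix.diag_apply, hB, sq]
  exact Finset.sum_comm

lemma sum_mul_mul_eq_sum_sum_of_gram {B : Matrix (Fin n) (Fin n) ℝ}
    (hB : ∀ i j, H i j = ∑ k, B k i * B k j) (A : Matrix (Fin n) (Fin n) ℝ) :
    ∑ i, ∑ j, A i j * H i j = ∑ k, ∑ i, ∑ j, A i j * B k i * B k j := by
  simp_rw [hB, Finset.mul_sum]
  rw [Finset.sum_congr rfl fun i _ => Finset.sum_comm, Finset.sum_comm]
  simp only [mul_assoc]

lemma quadForm_le_trace_mul_sq_norm (hH : H.PosSemidef) (z : En n) :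
    ∑ i, ∑ j, H i j * z i * z j ≤ H.trace * ‖z‖ ^ 2 := by
  obtain ⟨B, hB⟩ := exists_gram_of_posSemidef hH
  calc ∑ i, ∑ j, H i j * z i * z j = ∑ i, ∑ j, (z i * z j) * H i j :=
        Finset.sum_congr rfl fun i _ => Finset.sum_congr rfl fun j _ => by ring
    _ = ∑ k, (∑ i, B k i * z i) ^ 2 := by
        rw [sum_mul_mul_eq_sum_sum_of_gram hB fun i j => z i * z j]
        refine Finset.sum_congr rfl fun k _ => ?_
        rw [sq, Finset.sum_mul_sum]
        exact Finset.sum_congr rfl fun i _ => Finset.sum_congr rfl fun j _ => by ring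
    _ ≤ ∑ k, (∑ i, B k i ^ 2) * ∑ i, z i ^ 2 :=
        Finset.sum_le_sum fun k _ => Finset.sum_mul_sq_le_sq_mul_sq _ _ _
    _ = H.trace * ‖z‖ ^ 2 := by
        rw [trace_eq_sum_sq_of_gram hB, Finset.sum_mul, EuclideanSpace.real_norm_sq_eq]

lemma IsUnifElliptic.trace_le_mul_sum {ν : ℝ} (hν : 0 < ν) {A : Matrix (Fin n) (Fin n) ℝ}
    (hA : IsUnifElliptic ν A) (hH : H.PosSemidef) :
    H.trace ≤ ν * ∑ i, ∑ j, A i j * H i j := by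
  obtain ⟨B, hB⟩ := exists_gram_of_posSemidef hH
  rw [trace_eq_sum_sq_of_gram hB, sum_mul_mul_eq_sum_sum_of_gram hB, Finset.mul_sum]
  gcongr with k
  rw [← inv_mul_le_iff₀ hν]
  exact hA.1 (B k)

end PosSemidef

section Hessian

/-- The matrix of iterated partial derivatives `D_{ij} f (x)`, with the conventions of `Dxx`. -/
def hessian (f : En n → ℝ) (x : En n) : Matrix (Fin n) (Fin n) ℝ := fun i j =>
  fderiv ℝ (fun y => fderiv ℝ f y (EuclideanSpace.single j 1)) x (EuclideanSpace.single i 1)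

variable {f : En n → ℝ} {x p : En n}

lemma clm_apply_eq_sum_single (L : En n →L[ℝ] ℝ) (v : En n) :
    L v = ∑ j, L (EuclideanSpace.single j 1) * v j := by
  conv_lhs => rw [← (EuclideanSpace.basisFun (Fin n) ℝ).sum_repr v]
  simp [mul_comm]

lemma exists_hasFDerivAt_fderiv_of_partials
    (hff : ∀ j, DifferentiableAt ℝ (fun y => fderiv ℝ f y (EuclideanSpace.single j 1)) x) :
    ∃ f'' : En n →L[ℝ] En n →L[ℝ] ℝ, HasFDerivAt (fderiv ℝ f) f'' x ∧
      ∀ v w, f'' v w = ∑ i, ∑ j, hessian f x i j * v i * w j := by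
  let D (j : Fin n) : En n →L[ℝ] ℝ :=
    fderiv ℝ (fun y => fderiv ℝ f y (EuclideanSpace.single j 1)) x
  refine ⟨∑ j, (D j).smulRight (EuclideanSpace.proj j : En n →L[ℝ] ℝ), ?_, fun v w => ?_⟩
  · refine (HasFDerivAt.fun_sum fun j _ => (hff j).hasFDerivAt.smul_const
      (EuclideanSpace.proj j : En n →L[ℝ] ℝ)).congr_of_eventuallyEq (.of_forall fun y => ?_)
    ext v
    simp [clm_apply_eq_sum_single (fderiv ℝ f y) v]
  · rw [Finset.sum_comm]
    simp [D, hessian, clm_apply_eq_sum_single (fderiv ℝ _ x) v, Finset.sum_mul]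

lemma fderiv_eq_innerSL_of_isLocalMax (hf : DifferentiableAt ℝ f x)
    (hmax : IsLocalMax (fun y => f y - ⟪p, y⟫) x) : fderiv ℝ f x = innerSL ℝ p :=
  sub_eq_zero.1 (hmax.hasFDerivAt_eq_zero (hf.hasFDerivAt.sub (innerSL ℝ p).hasFDerivAt))

lemma posSemidef_neg_hessian_of_isLocalMax (hf : ∀ᶠ y in 𝓝 x, DifferentiableAt ℝ f y)
    (hff : ∀ j, DifferentiableAt ℝ (fun y => fderiv ℝ f y (EuclideanSpace.single j 1)) x)
    (hmax : IsLocalMax (fun y => f y - ⟪p, y⟫) x) : (-hessian f x).PosSemidef := by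
  obtain ⟨f'', hf'', hquad⟩ := exists_hasFDerivAt_fderiv_of_partials hff
  have hfd : ∀ᶠ y in 𝓝 x, HasFDerivAt f (fderiv ℝ f y) y := hf.mono fun y hy => hy.hasFDerivAt
  have hsym := second_derivative_symmetric_of_eventually hfd hf''
  have hentry (i j : Fin n) : hessian f x i j =
      f'' (EuclideanSpace.single i 1) (EuclideanSpace.single j 1) := by
    simp [hquad]
  refine Matrix.PosSemidef.of_dotProduct_mulVec_nonneg ?_ fun v => ?_
  · ext i j
    simp [hentry, hsym]
  · have hneg := second_fderiv_apply_self_nonpos_of_isLocalMax hmax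
      (hfd.mono fun y hy => hy.sub (innerSL ℝ p).hasFDerivAt) (hf''.sub_const _) (WithLp.toLp 2 v)
    rw [hquad] at hneg
    calc 0 ≤ -∑ i, ∑ j, hessian f x i j * v i * v j := neg_nonneg.2 hneg
      _ = star v ⬝ᵥ (-hessian f x).mulVec v := by
        simp only [dotProduct, Matrix.mulVec, Finset.mul_sum, star_trivial,
          ← Finset.sum_neg_distrib, Matrix.neg_apply]
        exact Finset.sum_congr rfl fun i _ => Finset.sum_congr rfl fun j _ => by ring

lemma eventually_paraboloid_le_of_isLocalMax (hf : ∀ᶠ y in 𝓝 x, DifferentiableAt ℝ f y)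
    (hff : ∀ j, DifferentiableAt ℝ (fun y => fderiv ℝ f y (EuclideanSpace.single j 1)) x)
    (hmax : IsLocalMax (fun y => f y - ⟪p, y⟫) x) {ε : ℝ} (hε : 0 < ε) :
    ∀ᶠ z in 𝓝 0,
      f x + ⟪p, z⟫ - ((-hessian f x).trace / 2 + ε) * ‖z‖ ^ 2 ≤ f (x + z) := by
  obtain ⟨f'', hf'', hquad⟩ := exists_hasFDerivAt_fderiv_of_partials hff
  filter_upwards [eventually_norm_taylor_two_sub_le
    (hf.mono fun y hy => hy.hasFDerivAt) hf'' hε] with z hz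
  rw [fderiv_eq_innerSL_of_isLocalMax hf.self_of_nhds hmax, innerSL_apply_apply,
    Real.norm_eq_abs, smul_eq_mul] at hz
  have htrace := quadForm_le_trace_mul_sq_norm (posSemidef_neg_hessian_of_isLocalMax hf hff hmax) z
  simp only [Matrix.neg_apply, neg_mul, Finset.sum_neg_distrib, ← hquad] at htrace
  linarith [(abs_le.1 hz).1]

end Hessian

/-! ### The Aleksandrov–Bakelman–Pucci estimate -/

/-- The closed cylinder `B̄_R(x₀) × [t₁, t₂]`. -/
abbrev closedCyl (x₀ : En n) (R t₁ t₂ : ℝ) : Set (En n × ℝ) := closedBall x₀ R ×ˢ Icc t₁ t₂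

/-- The cylinder `B_R(x₀) × (t₁, t₂]`, i.e. `closedCyl x₀ R t₁ t₂` without its parabolic
boundary. -/
abbrev upperCyl (x₀ : En n) (R t₁ t₂ : ℝ) : Set (En n × ℝ) := ball x₀ R ×ˢ Ioc t₁ t₂

/-- The spatial gradient `(D_1 u, …, D_n u)`. -/
def spatialGrad (u : En n × ℝ → ℝ) (X : En n × ℝ) : En n := WithLp.toLp 2 fun i => Dx u i X

/-- Existence of the derivatives `u_t`, `D_i u` and `D_{ij} u` at every point of `D`. -/
structure IsDiff21 (u : En n × ℝ → ℝ) (D : Set (En n × ℝ)) : Prop where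
  diff_t : ∀ X ∈ D, DifferentiableAt ℝ (fun t => u (X.1, t)) X.2
  diff_x : ∀ X ∈ D, DifferentiableAt ℝ (fun x => u (x, X.2)) X.1
  diff_xx : ∀ j : Fin n, ∀ X ∈ D, DifferentiableAt ℝ (fun x => Dx u j (x, X.2)) X.1

/-- `u_t ≤ a_{ij} D_{ij} u + β |Du| + c` at `X` for some elliptic matrix `a`. -/
def IsSubsolutionAt (ν β c : ℝ) (u : En n × ℝ → ℝ) (X : En n × ℝ) : Prop :=
  ∃ A, IsUnifElliptic ν A ∧
    Dt u X ≤ ∑ i, ∑ j, A i j * Dxx u i j X + β * ‖spatialGrad u X‖ + c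

/-- `u` satisfies `u_t ≤ a_{ij} D_{ij} u + g |Du| + f` on `B_R(x₀) × (t₁, t₂]` for almost every
`x` and all `t`. The drift bound `g` does not depend on time, and `∫ gⁿ ≤ S`. -/
structure IsSubsolution (ν S : ℝ) (x₀ : En n) (R t₁ t₂ : ℝ) (g f : En n → ℝ)
    (u : En n × ℝ → ℝ) : Prop where
  cont : ContinuousOn u (closedCyl x₀ R t₁ t₂)
  diff : IsDiff21 u (upperCyl x₀ R t₁ t₂)
  drift_measurable : Measurable g
  drift_pos : ∀ x, 0 < g x
  lintegral_drift_le : ∫⁻ x in ball x₀ R, ENNReal.ofReal (g x) ^ n ≤ ENNReal.ofReal S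
  subsol : ∀ᵐ x, x ∈ ball x₀ R → ∀ t ∈ Ioc t₁ t₂, IsSubsolutionAt ν (g x) (f x) u (x, t)

/-- The affine function of `x` with slope `p` touches `w` from above on `K` at `X`, once it is
shifted to the right height. -/
def IsContact (w : En n × ℝ → ℝ) (K : Set (En n × ℝ)) (p : En n) (X : En n × ℝ) : Prop :=
  X ∈ K ∧ IsMaxOn (fun Y => w Y - ⟪p, Y.1⟫) K X

/-- The spatial projection of the set of contact points with slope in `P`. -/
def contactSet (w : En n × ℝ → ℝ) (K : Set (En n × ℝ)) (P : Set (En n)) : Set (En n) :=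
  {x | ∃ t, ∃ p ∈ P, IsContact w K p (x, t)}

section Contact

variable {w : En n × ℝ → ℝ} {x₀ : En n} {R t₁ t₂ ν : ℝ} {K : Set (En n × ℝ)}
  {p p' : En n} {X : En n × ℝ}

lemma exists_isContact (hK : IsCompact K) (hne : K.Nonempty) (hw : ContinuousOn w K) (p : En n) :
    ∃ X, IsContact w K p X :=
  hK.exists_isMaxOn hne (hw.sub (by fun_prop))

lemma isClosed_setOf_isContact (hK : IsCompact K) (hw : ContinuousOn w K) :
    IsClosed {q : (En n × ℝ) × En n | IsContact w K q.2 q.1} := by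
  have hset : {q : (En n × ℝ) × En n | IsContact w K q.2 q.1} =
      K ×ˢ univ ∩ ⋂ Y ∈ K, (K ×ˢ univ) ∩
        (fun q : (En n × ℝ) × En n => w Y - ⟪q.2, Y.1⟫ - (w q.1 - ⟪q.2, q.1.1⟫)) ⁻¹' Iic 0 := by
    ext q
    simp only [IsContact, isMaxOn_iff, mem_ofPred_eq, mem_inter_iff, mem_prod, mem_univ, and_true,
      mem_iInter, mem_preimage, mem_Iic, sub_nonpos]
    exact ⟨fun h => ⟨h.1, fun Y hY => ⟨h.1, h.2 Y hY⟩⟩, fun h => ⟨h.1, fun Y hY => (h.2 Y hY).2⟩⟩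
  have hKu := hK.isClosed.prod (isClosed_univ (X := En n))
  rw [hset]
  refine hKu.inter (isClosed_biInter fun Y _ => ?_)
  refine ContinuousOn.preimage_isClosed_of_isClosed ?_ hKu isClosed_Iic
  have hwq : ContinuousOn (fun q : (En n × ℝ) × En n => w q.1) (K ×ˢ univ) :=
    hw.comp continuousOn_fst fun q hq => hq.1
  exact .sub (by fun_prop) (hwq.sub (by fun_prop))

lemma isCompact_contactSet (hK : IsCompact K) (hw : ContinuousOn w K) {P : Set (En n)}
    (hP : IsCompact P) : IsCompact (contactSet w K P) := by
  have himage : contactSet w K P = (fun q : (En n × ℝ) × En n => q.1.1) ''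
      ((K ×ˢ P) ∩ {q | IsContact w K q.2 q.1}) := by
    ext x
    constructor
    · rintro ⟨t, p, hp, hc⟩
      exact ⟨((x, t), p), ⟨⟨hc.1, hp⟩, hc⟩, rfl⟩
    · rintro ⟨⟨⟨x', t⟩, p⟩, ⟨⟨-, hp⟩, hc⟩, rfl⟩
      exact ⟨t, p, hp, hc⟩
  rw [himage]
  exact ((hK.prod hP).inter_right (isClosed_setOf_isContact hK hw)).image (by fun_prop)

lemma IsDiff21.eventually_diff_x (hw : IsDiff21 w (upperCyl x₀ R t₁ t₂))
    (hX : X ∈ upperCyl x₀ R t₁ t₂) :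
    ∀ᶠ y in 𝓝 X.1, DifferentiableAt ℝ (fun x => w (x, X.2)) y := by
  filter_upwards [isOpen_ball.mem_nhds hX.1] with y hy
  exact hw.diff_x (y, X.2) ⟨hy, hX.2⟩

namespace IsContact

lemma le {Y : En n × ℝ} (hc : IsContact w K p X) (hY : Y ∈ K) :
    w Y - ⟪p, Y.1⟫ ≤ w X - ⟪p, X.1⟫ :=
  hc.2 hY

lemma isLocalMax (hc : IsContact w (closedCyl x₀ R t₁ t₂) p X) (hX : X ∈ upperCyl x₀ R t₁ t₂) :
    IsLocalMax (fun y => w (y, X.2) - ⟪p, y⟫) X.1 := by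
  filter_upwards [isOpen_ball.mem_nhds hX.1] with y hy
  exact hc.le (Y := (y, X.2)) ⟨ball_subset_closedBall hy, Ioc_subset_Icc_self hX.2⟩

lemma spatialGrad_eq (hc : IsContact w (closedCyl x₀ R t₁ t₂) p X)
    (hw : IsDiff21 w (upperCyl x₀ R t₁ t₂)) (hX : X ∈ upperCyl x₀ R t₁ t₂) :
    spatialGrad w X = p := by
  ext i
  simp [spatialGrad, Dx, fderiv_eq_innerSL_of_isLocalMax (hw.diff_x X hX) (hc.isLocalMax hX),
    EuclideanSpace.inner_single_right]

lemma Dt_nonneg (hc : IsContact w (closedCyl x₀ R t₁ t₂) p X)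
    (hw : IsDiff21 w (upperCyl x₀ R t₁ t₂)) (hX : X ∈ upperCyl x₀ R t₁ t₂) : 0 ≤ Dt w X := by
  have hslope : Tendsto (slope (fun τ => w (X.1, τ)) X.2) (𝓝[<] X.2) (𝓝 (Dt w X)) :=
    (hasDerivAt_iff_tendsto_slope.1 (hw.diff_t X hX).hasDerivAt).mono_left
      (nhdsWithin_mono _ fun a ha => ne_of_lt ha)
  refine ge_of_tendsto hslope ?_
  filter_upwards [Ioo_mem_nhdsLT hX.2.1] with τ hτ
  have hle := hc.le (Y := (X.1, τ)) ⟨ball_subset_closedBall hX.1, hτ.1.le, hτ.2.le.trans hX.2.2⟩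
  rw [sub_le_sub_iff_right] at hle
  rw [slope_def_field]
  exact div_nonneg_of_nonpos (sub_nonpos.2 hle) (sub_nonpos.2 hτ.2.le)

lemma posSemidef (hc : IsContact w (closedCyl x₀ R t₁ t₂) p X)
    (hw : IsDiff21 w (upperCyl x₀ R t₁ t₂)) (hX : X ∈ upperCyl x₀ R t₁ t₂) :
    (-hessian (fun y => w (y, X.2)) X.1).PosSemidef :=
  posSemidef_neg_hessian_of_isLocalMax (hw.eventually_diff_x hX) (fun j => hw.diff_xx j X hX)
    (hc.isLocalMax hX)

lemma trace_le (hc : IsContact w (closedCyl x₀ R t₁ t₂) p X)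
    (hw : IsDiff21 w (upperCyl x₀ R t₁ t₂)) (hX : X ∈ upperCyl x₀ R t₁ t₂) (hν : 0 < ν)
    {β c : ℝ} (hsub : IsSubsolutionAt ν β c w X) :
    (-hessian (fun y => w (y, X.2)) X.1).trace ≤ ν * (β * ‖p‖ + c) := by
  obtain ⟨A, hA, hle⟩ := hsub
  rw [hc.spatialGrad_eq hw hX] at hle
  refine (hA.trace_le_mul_sum hν (hc.posSemidef hw hX)).trans ?_
  gcongr
  calc ∑ i, ∑ j, A i j * (-hessian (fun y => w (y, X.2)) X.1) i j
      = -∑ i, ∑ j, A i j * Dxx w i j X := by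
        simp only [Matrix.neg_apply, mul_neg, Finset.sum_neg_distrib]; rfl
    _ ≤ β * ‖p‖ + c := by linarith [hc.Dt_nonneg hw hX]

lemma slope_eq {x : En n} {t t' : ℝ} (hc : IsContact w (closedCyl x₀ R t₁ t₂) p (x, t))
    (hc' : IsContact w (closedCyl x₀ R t₁ t₂) p' (x, t'))
    (hw : IsDiff21 w (upperCyl x₀ R t₁ t₂)) (hX' : (x, t') ∈ upperCyl x₀ R t₁ t₂) : p = p' := by
  have hc_at : IsContact w (closedCyl x₀ R t₁ t₂) p (x, t') := by
    refine ⟨hc'.1, fun Y hY => (hc.le hY).trans ?_⟩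
    have hle := hc'.le hc.1
    simp only at hle ⊢
    linarith
  rw [← hc_at.spatialGrad_eq hw hX', ← hc'.spatialGrad_eq hw hX']

/-- An opening paraboloid below `w` at a contact point controls the variation of the slope: test
the second contact at `x' + |x' - x| (p - p') / |p - p'|`. -/
lemma norm_slope_sub_le {x x' : En n} {t t' c δ : ℝ} (hc : IsContact w K p (x, t))
    (hc' : IsContact w K p' (x', t'))
    (hδ : ∀ z : En n, ‖z‖ < δ → (x + z, t) ∈ K ∧ w (x, t) + ⟪p, z⟫ - c * ‖z‖ ^ 2 ≤ w (x + z, t))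
    (hx : ‖x' - x‖ < δ / 2) (hc0 : 0 ≤ c) (hne : x ≠ x') :
    ‖p' - p‖ ≤ 4 * c * ‖x' - x‖ := by
  rcases eq_or_ne p p' with rfl | hp
  · rw [sub_self, norm_zero]
    positivity
  set y := x' - x with hy
  set q := p - p' with hq
  have hq0 : 0 < ‖q‖ := norm_pos_iff.2 (sub_ne_zero.2 hp)
  have hy0 : 0 < ‖y‖ := norm_pos_iff.2 (sub_ne_zero.2 hne.symm)
  let z : En n := y + (‖y‖ / ‖q‖) • q
  have hz : ‖z‖ ≤ 2 * ‖y‖ := by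
    refine (norm_add_le _ _).trans ?_
    rw [norm_smul, Real.norm_of_nonneg (by positivity), div_mul_cancel₀ _ hq0.ne', two_mul]
  obtain ⟨hzK, hwz⟩ := hδ z (by linarith)
  have hmax' := hc'.le hzK
  have hmax := hc.le hc'.1
  simp only [inner_add_right] at hmax hmax'
  have hinner : ⟪q, z - y⟫ = ‖y‖ * ‖q‖ := by
    simp only [z, add_sub_cancel_left, inner_smul_right, real_inner_self_eq_norm_sq]
    field_simp
  have hle : ‖y‖ * ‖q‖ ≤ ‖y‖ * (4 * c * ‖y‖) :=
    calc ‖y‖ * ‖q‖ = ⟪q, z - y⟫ := hinner.symm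
      _ ≤ c * ‖z‖ ^ 2 := by
        simp only [hq, hy, inner_sub_left, inner_sub_right]
        linarith
      _ ≤ c * (2 * ‖y‖) ^ 2 := by gcongr
      _ = ‖y‖ * (4 * c * ‖y‖) := by ring
  rw [norm_sub_rev]
  exact le_of_mul_le_mul_left hle hy0

lemma eventually_dist_slope_le {E : Set (En n)} {F : En n → En n} {T : En n → ℝ}
    (hF : ∀ x ∈ E, IsContact w (closedCyl x₀ R t₁ t₂) (F x) (x, T x))
    (hw : IsDiff21 w (upperCyl x₀ R t₁ t₂)) {x : En n} (hx : x ∈ E)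
    (hxT : (x, T x) ∈ upperCyl x₀ R t₁ t₂) {ε : ℝ} (hε : 0 < ε) :
    ∀ᶠ x' in 𝓝[E] x, dist (F x') (F x) ≤
      4 * ((-hessian (fun y => w (y, T x)) x).trace / 2 + ε) * dist x' x := by
  have htrace := ((hF x hx).posSemidef hw hxT).trace_nonneg
  have hnear : ∀ᶠ z in 𝓝 (0 : En n), x + z ∈ ball x₀ R :=
    (Continuous.tendsto' (f := fun z => x + z) (by fun_prop) 0 x (add_zero x)).eventually
      (isOpen_ball.mem_nhds hxT.1)
  obtain ⟨δ, hδ, hball⟩ := Metric.eventually_nhds_iff_ball.1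
    ((eventually_paraboloid_le_of_isLocalMax (hw.eventually_diff_x hxT)
      (fun j => hw.diff_xx j _ hxT) ((hF x hx).isLocalMax hxT) hε).and hnear)
  filter_upwards [self_mem_nhdsWithin,
    mem_nhdsWithin_of_mem_nhds (ball_mem_nhds x (half_pos hδ))] with x' hx'E hx'
  rcases eq_or_ne x x' with rfl | hne
  · simp
  rw [mem_ball, dist_eq_norm] at hx'
  simp only [dist_eq_norm]
  refine norm_slope_sub_le (hF x hx) (hF x' hx'E) (fun z hz => ?_) hx' (by positivity) hne
  obtain ⟨hle, hmem⟩ := hball z (mem_ball_zero_iff.2 hz)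
  exact ⟨⟨ball_subset_closedBall hmem, Ioc_subset_Icc_self hxT.2⟩, hle⟩

end IsContact

end Contact

section ABP

variable {w : En n × ℝ → ℝ} {x₀ : En n} {R t₁ t₂ ν S : ℝ} {g f : En n → ℝ}

lemma volume_le_lintegral_contactSet {P : Set (En n)} {b : ℝ} (hν : 0 < ν)
    (hw : IsSubsolution ν S x₀ R t₁ t₂ g f w) (hfm : Measurable f) (hf : ∀ x, 0 < f x)
    (hP : IsCompact P) (hPb : ∀ p ∈ P, ‖p‖ ≤ b) (hb : 0 ≤ b)
    (hne : (closedCyl x₀ R t₁ t₂).Nonempty)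
    (hin : ∀ p ∈ P, ∀ X, IsContact w (closedCyl x₀ R t₁ t₂) p X → X ∈ upperCyl x₀ R t₁ t₂) :
    volume P ≤ ∫⁻ x in contactSet w (closedCyl x₀ R t₁ t₂) P,
      ENNReal.ofReal (4 * ν * (b * g x + f x)) ^ n := by
  have hK : IsCompact (closedCyl x₀ R t₁ t₂) := (isCompact_closedBall x₀ R).prod isCompact_Icc
  set E := contactSet w (closedCyl x₀ R t₁ t₂) P
  have hchoice : ∀ x ∈ E, ∃ t p, p ∈ P ∧ IsContact w (closedCyl x₀ R t₁ t₂) p (x, t) :=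
    fun x hx => hx
  choose! T F hF using hchoice
  have hFin (x : En n) (hx : x ∈ E) : (x, T x) ∈ upperCyl x₀ R t₁ t₂ :=
    hin _ (hF x hx).1 _ (hF x hx).2
  have hlip {x : En n} (hx : x ∈ E) {ε : ℝ} (hε : 0 < ε) :=
    IsContact.eventually_dist_slope_le (fun x hx => (hF x hx).2) hw.diff hx (hFin x hx) hε
  have hΛ (x : En n) : 0 ≤ b * g x := mul_nonneg hb (hw.drift_pos x).le
  have hsub : P ⊆ F '' E := by
    intro p hp
    obtain ⟨⟨x, t⟩, hX⟩ := exists_isContact hK hne hw.cont p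
    have hx : x ∈ E := ⟨t, p, hp, hX⟩
    exact ⟨x, hx, (hF x hx).2.slope_eq hX hw.diff (hin p hp _ hX)⟩
  have hmeas := hw.drift_measurable
  have hae : ∀ᵐ x, x ∈ E → ∀ᶠ x' in 𝓝[E] x,
      dist (F x') (F x) ≤ 4 * ν * (b * g x + f x) * dist x' x := by
    filter_upwards [hw.subsol] with x hsub hx
    have hfx := hf x
    have hε : 0 < ν * f x / 2 := by positivity
    filter_upwards [hlip hx hε] with x' hx'
    refine hx'.trans (mul_le_mul_of_nonneg_right ?_ dist_nonneg)
    have htrace := (hF x hx).2.trace_le hw.diff (hFin x hx) hν (hsub (hFin x hx).1 _ (hFin x hx).2)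
    have hslope : g x * ‖F x‖ ≤ b * g x :=
      (mul_le_mul_of_nonneg_left (hPb _ (hF x hx).1) (hw.drift_pos x).le).trans_eq (mul_comm _ _)
    have htrace' := htrace.trans (mul_le_mul_of_nonneg_left (add_le_add_left hslope _) hν.le)
    linarith [mul_nonneg hν.le (hΛ x)]
  have harea := addHaar_image_le_lintegral_pow volume
    (isCompact_contactSet hK hw.cont hP).isClosed.measurableSet
    (by fun_prop : Measurable fun x => 4 * ν * (b * g x + f x))
    (fun x => mul_pos (by positivity) (add_pos_of_nonneg_of_pos (hΛ x) (hf x)))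
    (fun x hx => ⟨_, hlip hx one_pos⟩) hae
  rw [finrank_euclideanSpace_fin] at harea
  exact (measure_mono hsub).trans harea

lemma addHaar_ball_le_addHaar_annulus {E : Type*} [NormedAddCommGroup E] [NormedSpace ℝ E]
    [FiniteDimensional ℝ E] [Nontrivial E] [MeasurableSpace E] [BorelSpace E] (μ : Measure E)
    [μ.IsAddHaarMeasure] {ρ : ℝ} (hρ : 0 < ρ) :
    μ (ball 0 ρ) ≤ μ (closedBall 0 (2 * ρ) \ ball 0 ρ) := by
  have hsub : ball (0 : E) ρ ⊆ closedBall 0 (2 * ρ) :=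
    ball_subset_closedBall.trans (closedBall_subset_closedBall (by linarith))
  have htwo : 2 * μ (ball 0 ρ) ≤ μ (closedBall 0 (2 * ρ)) := by
    rw [addHaar_closedBall_mul _ _ zero_le_two hρ.le, addHaar_closedBall_eq_addHaar_ball,
      ← ENNReal.ofReal_ofNat 2]
    gcongr
    exact le_self_pow₀ one_le_two Module.finrank_pos.ne'
  rw [measure_sdiff hsub measurableSet_ball.nullMeasurableSet measure_ball_lt_top.ne]
  exact ENNReal.le_sub_of_add_le_right measure_ball_lt_top.ne (by rwa [← two_mul])

lemma ofReal_mul_add_pow_le {a b c ρ : ℝ} (ha : 0 ≤ a) (hb : 0 ≤ b) (hc : 0 ≤ c) (hρ : 0 ≤ ρ) :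
    ENNReal.ofReal (4 * c * (2 * ρ * a + b)) ^ n ≤ ENNReal.ofReal ((16 * c) ^ n) *
      (ENNReal.ofReal (ρ ^ n) * ENNReal.ofReal a ^ n + ENNReal.ofReal b ^ n) := by
  rw [← ENNReal.ofReal_pow (by positivity), ← ENNReal.ofReal_pow ha, ← ENNReal.ofReal_pow hb,
    ← ENNReal.ofReal_mul (by positivity), ← ENNReal.ofReal_add (by positivity) (by positivity),
    ← ENNReal.ofReal_mul (by positivity)]
  refine ENNReal.ofReal_le_ofReal ?_
  have hmono : (2 : ℝ) ^ (n - 1) ≤ 2 ^ n := pow_le_pow_right₀ one_le_two (Nat.sub_le n 1)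
  calc (4 * c * (2 * ρ * a + b)) ^ n ≤ (4 * c * (2 * ρ * a + 2 * b)) ^ n := by gcongr; linarith
    _ = (8 * c) ^ n * (ρ * a + b) ^ n := by rw [← mul_pow]; ring
    _ ≤ (8 * c) ^ n * (2 ^ n * ((ρ * a) ^ n + b ^ n)) := by
      gcongr
      exact (add_pow_le (by positivity) hb n).trans (by gcongr)
    _ = (16 * c) ^ n * (ρ ^ n * a ^ n + b ^ n) := by
      rw [mul_pow ρ, ← mul_assoc, ← mul_pow]; ring

lemma IsSubsolution.annulus_le [NeZero n] {ρ : ℝ} (hν : 0 < ν) (hρ : 0 < ρ)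
    (hw : IsSubsolution ν S x₀ R t₁ t₂ g f w) (hfm : Measurable f) (hf : ∀ x, 0 < f x)
    (hne : (closedCyl x₀ R t₁ t₂).Nonempty)
    (hin : ∀ p, ‖p‖ ≤ 2 * ρ → ∀ X, IsContact w (closedCyl x₀ R t₁ t₂) p X →
      X ∈ upperCyl x₀ R t₁ t₂) :
    ENNReal.ofReal (ρ ^ n) * volume (ball (0 : En n) 1) ≤ ENNReal.ofReal ((16 * ν) ^ n) *
      (ENNReal.ofReal (ρ ^ n) * (∫⁻ x in contactSet w (closedCyl x₀ R t₁ t₂)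
          (closedBall 0 (2 * ρ) \ ball 0 ρ), ENNReal.ofReal (g x) ^ n)
        + ∫⁻ x in ball x₀ R, ENNReal.ofReal (f x) ^ n) := by
  set P : Set (En n) := closedBall 0 (2 * ρ) \ ball 0 ρ
  set E := contactSet w (closedCyl x₀ R t₁ t₂) P
  have hPb : ∀ p ∈ P, ‖p‖ ≤ 2 * ρ := fun p hp => mem_closedBall_zero_iff.1 hp.1
  have hEball : E ⊆ ball x₀ R := fun x ⟨t, p, hp, hc⟩ => (hin p (hPb p hp) _ hc).1
  have hmeas := hw.drift_measurable
  calc ENNReal.ofReal (ρ ^ n) * volume (ball (0 : En n) 1) = volume (ball (0 : En n) ρ) := by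
        rw [addHaar_ball _ _ hρ.le, finrank_euclideanSpace_fin]
    _ ≤ volume P := addHaar_ball_le_addHaar_annulus volume hρ
    _ ≤ ∫⁻ x in E, ENNReal.ofReal (4 * ν * (2 * ρ * g x + f x)) ^ n :=
        volume_le_lintegral_contactSet hν hw hfm hf ((isCompact_closedBall _ _).diff isOpen_ball)
          hPb (by positivity) hne fun p hp => hin p (hPb p hp)
    _ ≤ ∫⁻ x in E, ENNReal.ofReal ((16 * ν) ^ n) * (ENNReal.ofReal (ρ ^ n) *
          ENNReal.ofReal (g x) ^ n + ENNReal.ofReal (f x) ^ n) :=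
        lintegral_mono fun x => ofReal_mul_add_pow_le (hw.drift_pos x).le (hf x).le hν.le hρ.le
    _ = ENNReal.ofReal ((16 * ν) ^ n) * (ENNReal.ofReal (ρ ^ n) *
          (∫⁻ x in E, ENNReal.ofReal (g x) ^ n) + ∫⁻ x in E, ENNReal.ofReal (f x) ^ n) := by
        rw [lintegral_const_mul _ (by fun_prop), lintegral_add_left (by fun_prop),
          lintegral_const_mul _ (by fun_prop)]
    _ ≤ _ := by gcongr

lemma IsContact.mem_upperCyl {p : En n} {X Y : En n × ℝ}
    (hX : IsContact w (closedCyl x₀ R t₁ t₂) p X) (hY : Y ∈ closedCyl x₀ R t₁ t₂)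
    (hp : 2 * R * ‖p‖ < w Y) (hbot : ∀ x ∈ closedBall x₀ R, w (x, t₁) ≤ 0)
    (hlat : ∀ x ∈ sphere x₀ R, ∀ t ∈ Icc t₁ t₂, w (x, t) ≤ 0) : X ∈ upperCyl x₀ R t₁ t₂ := by
  have hdist : ‖Y.1 - X.1‖ ≤ 2 * R := by
    rw [← dist_eq_norm]
    linarith [dist_triangle_right Y.1 X.1 x₀, mem_closedBall.1 hY.1, mem_closedBall.1 hX.1.1]
  have hinner : ⟪p, Y.1 - X.1⟫ ≤ ‖p‖ * (2 * R) := (real_inner_le_norm _ _).trans (by gcongr)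
  rw [inner_sub_right] at hinner
  have hpos : 0 < w X := by linarith [hX.le hY]
  obtain ⟨hx, ht⟩ := hX.1
  refine ⟨mem_ball.2 (lt_of_le_of_ne (mem_closedBall.1 hx) fun h => ?_),
    lt_of_le_of_ne ht.1 fun h => ?_, ht.2⟩
  · exact (hlat X.1 h X.2 ht).not_gt hpos
  · exact (hbot X.1 hx).not_gt (by rwa [h])

lemma disjoint_contactSet {P P' : Set (En n)} (hw : IsDiff21 w (upperCyl x₀ R t₁ t₂))
    (hPP' : Disjoint P P')
    (hin : ∀ p ∈ P', ∀ X, IsContact w (closedCyl x₀ R t₁ t₂) p X → X ∈ upperCyl x₀ R t₁ t₂) :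
    Disjoint (contactSet w (closedCyl x₀ R t₁ t₂) P)
      (contactSet w (closedCyl x₀ R t₁ t₂) P') := by
  refine disjoint_left.2 ?_
  rintro x ⟨t, p, hp, hc⟩ ⟨t', p', hp', hc'⟩
  exact disjoint_left.1 hPP' hp (hc.slope_eq hc' hw (hin p' hp' _ hc') ▸ hp')

lemma exists_card_mul_setLIntegral_le {α ι : Type*} [MeasurableSpace α] {μ : Measure α}
    {s : Finset ι} (hs : s.Nonempty) {E : ι → Set α} {D : Set α}
    (hE : ∀ i ∈ s, MeasurableSet (E i)) (hdisj : (s : Set ι).PairwiseDisjoint E)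
    (hsub : ∀ i ∈ s, E i ⊆ D) (h : α → ℝ≥0∞) :
    ∃ i ∈ s, s.card * ∫⁻ x in E i, h x ∂μ ≤ ∫⁻ x in D, h x ∂μ := by
  obtain ⟨i, hi, hmin⟩ := s.exists_min_image (fun i => ∫⁻ x in E i, h x ∂μ) hs
  refine ⟨i, hi, ?_⟩
  calc s.card * ∫⁻ x in E i, h x ∂μ ≤ ∑ j ∈ s, ∫⁻ x in E j, h x ∂μ := by
        rw [← nsmul_eq_mul]
        exact s.card_nsmul_le_sum _ _ hmin
    _ = ∫⁻ x in ⋃ j ∈ s, E j, h x ∂μ := (lintegral_biUnion_finset hdisj hE _).symm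
    _ ≤ ∫⁻ x in D, h x ∂μ := lintegral_mono_set (iUnion₂_subset hsub)

lemma IsSubsolution.slope_le [NeZero n] {ρ κ : ℝ} (hν : 0 < ν) (hρ : 0 < ρ)
    (hw : IsSubsolution ν S x₀ R t₁ t₂ g f w) (hfm : Measurable f) (hf : ∀ x, 0 < f x)
    (hne : (closedCyl x₀ R t₁ t₂).Nonempty)
    (hin : ∀ p, ‖p‖ ≤ 2 * ρ → ∀ X, IsContact w (closedCyl x₀ R t₁ t₂) p X →
      X ∈ upperCyl x₀ R t₁ t₂)
    (hκ : 0 ≤ κ) (hfκ : ∫⁻ x in ball x₀ R, ENNReal.ofReal (f x) ^ n ≤ ENNReal.ofReal (κ ^ n))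
    (hdrift : ENNReal.ofReal ((16 * ν) ^ n) * ∫⁻ x in contactSet w (closedCyl x₀ R t₁ t₂)
      (closedBall 0 (2 * ρ) \ ball 0 ρ), ENNReal.ofReal (g x) ^ n ≤
        ENNReal.ofReal (volume.real (ball (0 : En n) 1) / 2)) :
    ρ ≤ max 1 (2 * (16 * ν) ^ n / volume.real (ball (0 : En n) 1)) * κ := by
  set ω := volume.real (ball (0 : En n) 1) with hω
  have hωpos : 0 < ω := ENNReal.toReal_pos (measure_ball_pos volume _ one_pos).ne'
    measure_ball_lt_top.ne
  set B := max 1 (2 * (16 * ν) ^ n / ω)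
  have hB : 1 ≤ B := le_max_left _ _
  have henn : ENNReal.ofReal (ρ ^ n * ω) ≤
      ENNReal.ofReal (ρ ^ n * (ω / 2) + (16 * ν) ^ n * κ ^ n) := by
    rw [ENNReal.ofReal_add (by positivity) (by positivity), ENNReal.ofReal_mul (by positivity),
      ENNReal.ofReal_mul (by positivity), ENNReal.ofReal_mul (by positivity), hω,
      ofReal_measureReal]
    refine (hw.annulus_le hν hρ hfm hf hne hin).trans ?_
    rw [mul_add, mul_left_comm]
    gcongr
  have hreal := (ENNReal.ofReal_le_ofReal_iff (by positivity)).1 henn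
  refine le_of_pow_le_pow_left₀ (NeZero.ne n) (by positivity) ?_
  calc ρ ^ n ≤ 2 * (16 * ν) ^ n / ω * κ ^ n := by
        rw [div_mul_eq_mul_div, le_div_iff₀ hωpos]
        linarith
    _ ≤ B ^ n * κ ^ n := by
        gcongr
        exact (le_max_right _ _).trans (le_self_pow₀ hB (NeZero.ne n))
    _ = (B * κ) ^ n := (mul_pow _ _ _).symm

lemma IsSubsolution.exists_annulus_lintegral_le {ρ : ℕ → ℝ}
    (hw : IsSubsolution ν S x₀ R t₁ t₂ g f w) (hρ : ∀ j k, j < k → 2 * ρ k < ρ j)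
    (hin : ∀ j p, ‖p‖ ≤ 2 * ρ j → ∀ X, IsContact w (closedCyl x₀ R t₁ t₂) p X →
      X ∈ upperCyl x₀ R t₁ t₂)
    {N : ℕ} (hN : N ≠ 0) {c ε : ℝ} (hc : 0 ≤ c) (hNS : c * S ≤ N * ε) :
    ∃ j < N, ENNReal.ofReal c * ∫⁻ x in contactSet w (closedCyl x₀ R t₁ t₂)
      (closedBall 0 (2 * ρ j) \ ball 0 (ρ j)), ENNReal.ofReal (g x) ^ n ≤ ENNReal.ofReal ε := by
  have hK : IsCompact (closedCyl x₀ R t₁ t₂) := (isCompact_closedBall x₀ R).prod isCompact_Icc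
  let P (j : ℕ) : Set (En n) := closedBall 0 (2 * ρ j) \ ball 0 (ρ j)
  have hPin (j : ℕ) (p : En n) (hp : p ∈ P j) := hin j p (mem_closedBall_zero_iff.1 hp.1)
  have hPlt {j k : ℕ} (hjk : j < k) : Disjoint (P k) (P j) :=
    disjoint_left.2 fun p hk hj => hj.2 (mem_ball_zero_iff.2
      ((mem_closedBall_zero_iff.1 hk.1).trans_lt (hρ j k hjk)))
  obtain ⟨j, hj, hjN⟩ := exists_card_mul_setLIntegral_le (μ := volume) (s := Finset.range N)
    (E := fun j => contactSet w (closedCyl x₀ R t₁ t₂) (P j)) (D := ball x₀ R) (by simpa)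
    (fun j _ => (isCompact_contactSet hK hw.cont
      ((isCompact_closedBall _ _).diff isOpen_ball)).isClosed.measurableSet)
    (fun j _ k _ hjk => disjoint_contactSet hw.diff
      (hjk.lt_or_gt.elim (fun h => (hPlt h).symm) hPlt) (hPin k))
    (fun j _ x ⟨t, p, hp, hc⟩ => (hPin j p hp _ hc).1) fun x => ENNReal.ofReal (g x) ^ n
  rw [Finset.card_range] at hjN
  refine ⟨j, Finset.mem_range.1 hj, ?_⟩
  refine (ENNReal.mul_le_mul_iff_right (a := N) (by simpa) (by simp)).1 ?_
  calc N * (ENNReal.ofReal c * _) = ENNReal.ofReal c * (N * _) := mul_left_comm _ _ _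
    _ ≤ ENNReal.ofReal c * ENNReal.ofReal S := by
        gcongr
        exact hjN.trans hw.lintegral_drift_le
    _ ≤ N * ENNReal.ofReal ε := by
        rw [← ENNReal.ofReal_mul hc, ← ENNReal.ofReal_natCast N,
          ← ENNReal.ofReal_mul (Nat.cast_nonneg N)]
        exact ENNReal.ofReal_le_ofReal hNS

/-- The slopes `|p| < w(Y) / (2R)` are split into annuli of geometrically decreasing radii. Their
contact sets are disjoint, so the drift is negligible on one of them. -/
theorem IsSubsolution.exists_le_mul_of_boundary_nonpos [NeZero n] (hν : 0 < ν) (S : ℝ) :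
    ∃ C > 0, ∀ {w : En n × ℝ → ℝ} {x₀ : En n} {R t₁ t₂ κ : ℝ} {g f : En n → ℝ}, 0 < R →
      IsSubsolution ν S x₀ R t₁ t₂ g f w → Measurable f → (∀ x, 0 < f x) →
      (∀ x ∈ closedBall x₀ R, w (x, t₁) ≤ 0) →
      (∀ x ∈ sphere x₀ R, ∀ t ∈ Icc t₁ t₂, w (x, t) ≤ 0) →
      0 ≤ κ → ∫⁻ x in ball x₀ R, ENNReal.ofReal (f x) ^ n ≤ ENNReal.ofReal (κ ^ n) →
      ∀ X ∈ closedCyl x₀ R t₁ t₂, w X ≤ C * R * κ := by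
  set ω := volume.real (ball (0 : En n) 1)
  have hωpos : 0 < ω := ENNReal.toReal_pos (measure_ball_pos volume _ one_pos).ne'
    measure_ball_lt_top.ne
  set B := max 1 (2 * (16 * ν) ^ n / ω)
  have : 0 < B := one_pos.trans_le (le_max_left _ _)
  obtain ⟨m, hm⟩ := exists_nat_ge ((16 * ν) ^ n * S / (ω / 2))
  let N := m + 1
  have hNS : (16 * ν) ^ n * S ≤ N * (ω / 2) := by
    rw [div_le_iff₀ (by positivity)] at hm
    simp only [N]
    push_cast
    linarith
  refine ⟨5 * 4 ^ N * B, by positivity, ?_⟩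
  intro w x₀ R t₁ t₂ κ g f hR hw hfm hf hbot hlat hκ hfκ Y hY
  rcases le_or_gt (w Y) 0 with hY0 | hY0
  · exact hY0.trans (by positivity)
  let ρ (j : ℕ) : ℝ := w Y / (5 * R) / 4 ^ j
  have hρpos (j : ℕ) : 0 < ρ j := by positivity
  have hρanti : Antitone ρ := fun j k hjk => by
    simp only [ρ]
    gcongr
    norm_num
  have hρ (j k : ℕ) (hjk : j < k) : 2 * ρ k < ρ j := by
    have hsucc : ρ (j + 1) = ρ j / 4 := by simp only [ρ]; rw [pow_succ, ← div_div]
    have hle : ρ k ≤ ρ (j + 1) := hρanti hjk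
    linarith [hρpos j]
  have hin (j : ℕ) (p : En n) (hp : ‖p‖ ≤ 2 * ρ j) (X : En n × ℝ)
      (hX : IsContact w (closedCyl x₀ R t₁ t₂) p X) : X ∈ upperCyl x₀ R t₁ t₂ := by
    refine hX.mem_upperCyl hY ?_ hbot hlat
    calc 2 * R * ‖p‖ ≤ 2 * R * (2 * ρ 0) := by
          gcongr
          exact hp.trans (by gcongr; exact hρanti (Nat.zero_le j))
      _ = 4 / 5 * w Y := by simp only [ρ]; field_simp; ring
      _ < w Y := by linarith
  obtain ⟨j, hj, hdrift⟩ := hw.exists_annulus_lintegral_le hρ hin m.succ_ne_zero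
    (by positivity) hNS
  have hρN : ρ N ≤ B * κ :=
    (hρanti hj.le).trans (hw.slope_le hν (hρpos j) hfm hf ⟨Y, hY⟩ (hin j) hκ hfκ hdrift)
  simp only [ρ, div_div] at hρN
  rw [div_le_iff₀ (by positivity)] at hρN
  linarith

end ABP

/-! ### Reduction to a time-independent measurable drift bound -/

section Reduction

variable {ν β c r s : ℝ} {y : En n} {u : En n × ℝ → ℝ} {b : En n × ℝ → En n}

lemma isCompact_setOf_isUnifElliptic (ν : ℝ) :
    IsCompact {A : Fin n → Fin n → ℝ | IsUnifElliptic ν A} := by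
  have hbox : IsCompact (univ.pi fun _ : Fin n => univ.pi fun _ : Fin n => Icc (-|ν|) |ν|) :=
    isCompact_univ_pi fun _ => isCompact_univ_pi fun _ => isCompact_Icc
  refine hbox.of_isClosed_subset ?_ fun A hA i _ j _ => ?_
  · have hlower : IsClosed {A : Fin n → Fin n → ℝ | ∀ ξ : Fin n → ℝ,
        ν⁻¹ * (∑ i, ξ i ^ 2) ≤ ∑ i, ∑ j, A i j * ξ i * ξ j} := by
      rw [Set.ofPred_forall]
      exact isClosed_iInter fun ξ => isClosed_le (by fun_prop) (by fun_prop)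
    have hupper : IsClosed {A : Fin n → Fin n → ℝ | ∑ i, ∑ j, A i j ^ 2 ≤ ν ^ 2} :=
      isClosed_le (by fun_prop) (by fun_prop)
    exact hlower.inter hupper
  · exact abs_le.1 (sq_le_sq.1 (hA.sq_apply_le i j))

lemma continuousOn_spatialGrad {D : Set (En n × ℝ)} (hu : IsC21 u D) :
    ContinuousOn (spatialGrad u) D :=
  (PiLp.continuous_toLp 2 _).comp_continuousOn (continuousOn_pi.2 hu.cont_x)

lemma sum_mul_Dx_le (v : En n) (u : En n × ℝ → ℝ) (X : En n × ℝ) :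
    ∑ i, v i * Dx u i X ≤ ‖v‖ * ‖spatialGrad u X‖ := by
  refine le_trans (le_of_eq ?_) (real_inner_le_norm v (spatialGrad u X))
  simp [PiLp.inner_apply, spatialGrad, mul_comm]

lemma IsSubsolutionAt.of_Lop {a : En n × ℝ → Matrix (Fin n) (Fin n) ℝ} {X : En n × ℝ}
    (ha : IsUnifElliptic ν (a X)) (hb : ‖b X‖ ≤ β) (hL : 0 ≤ -Dt u X + Lop a b u X) :
    IsSubsolutionAt ν β 0 u X := by
  refine ⟨a X, ha, ?_⟩
  have hdrift : ∑ i, b X i * Dx u i X ≤ β * ‖spatialGrad u X‖ :=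
    (sum_mul_Dx_le _ u X).trans (by gcongr)
  simp only [Lop] at hL
  linarith

lemma IsSubsolutionAt.of_frequently {D : Set (En n × ℝ)} {X : En n × ℝ} (hu : IsC21 u D)
    (hX : X ∈ D) (h : ∃ᶠ X' in 𝓝[D] X, IsSubsolutionAt ν β c u X') :
    IsSubsolutionAt ν β c u X := by
  obtain ⟨Z, hZ, hsub⟩ := exists_seq_forall_of_frequently h
  choose (A : ℕ → Fin n → Fin n → ℝ) hA hle using hsub
  obtain ⟨B, hB, φ, hφ, hAφ⟩ := (isCompact_setOf_isUnifElliptic ν).tendsto_subseq hA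
  have hlim {E : Type} [TopologicalSpace E] {F : En n × ℝ → E} (hF : ContinuousOn F D) :
      Tendsto (fun m => F (Z (φ m))) atTop (𝓝 (F X)) :=
    (hF X hX).tendsto.comp (hZ.comp hφ.tendsto_atTop)
  refine ⟨B, hB, le_of_tendsto_of_tendsto' (hlim hu.cont_t) (.add (.add ?_ ?_) ?_)
    fun m => hle (φ m)⟩
  · refine tendsto_finsetSum _ fun i _ => tendsto_finsetSum _ fun j _ => ?_
    exact (tendsto_pi_nhds.1 (tendsto_pi_nhds.1 hAφ i) j).mul (hlim (hu.cont_xx i j))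
  · exact (hlim (continuousOn_spatialGrad hu)).norm.const_mul β
  · exact tendsto_const_nhds

lemma closure_pcyl (hr : 0 < r) :
    closure (pcyl (y, s) r) = closedCyl y r (s - r ^ 2) s := by
  have hr2 : s - r ^ 2 ≠ s := by simp [hr.ne']
  rw [pcyl, box, closure_prod_eq, closure_ball _ hr.ne', closure_Ioo hr2]

section MeasurableMinorant

variable {E : Type*} [MeasurableSpace E] {μ : Measure E}

lemma exists_mem_le_add_of_lintegral_eq {γ h : E → ℝ≥0∞} (hh : Measurable h) (hle : h ≤ γ)
    (heq : ∫⁻ x, γ x ∂μ = ∫⁻ x, h x ∂μ) (hfin : ∫⁻ x, γ x ∂μ ≠ ⊤) {ε : ℝ≥0∞} (hε : ε ≠ 0)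
    {A : Set E} (hA : MeasurableSet A) (hpos : μ A ≠ 0) : ∃ x ∈ A, γ x ≤ h x + ε := by
  by_contra! hcon
  have hgap : ∫⁻ x, h x + A.indicator (fun _ => ε) x ∂μ ≤ ∫⁻ x, γ x ∂μ := by
    refine lintegral_mono fun x => ?_
    by_cases hx : x ∈ A
    · simpa only [hx, indicator_of_mem] using (hcon x hx).le
    · simpa only [hx, not_false_eq_true, indicator_of_notMem, add_zero] using hle x
  rw [lintegral_add_left hh, lintegral_indicator_const hA, heq] at hgap
  exact hgap.not_gt (ENNReal.lt_add_right (heq ▸ hfin) (mul_ne_zero hε hpos))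

variable [TopologicalSpace E] [SecondCountableTopology E]

lemma ae_forall_nhds_measure_inter_ne_zero (A : Set E) :
    ∀ᵐ x ∂μ, x ∈ A → ∀ U ∈ 𝓝 x, μ (U ∩ A) ≠ 0 := by
  have hnull : μ {x | x ∈ A ∧ ∃ U ∈ 𝓝 x, μ (U ∩ A) = 0} = 0 := by
    refine measure_null_of_locally_null _ ?_
    rintro x ⟨-, U, hU, h0⟩
    refine ⟨U ∩ {x | x ∈ A ∧ ∃ U ∈ 𝓝 x, μ (U ∩ A) = 0},
      inter_mem (mem_nhdsWithin_of_mem_nhds hU) self_mem_nhdsWithin, ?_⟩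
    exact measure_mono_null (inter_subset_inter_right _ fun z hz => hz.1) h0
  filter_upwards [compl_mem_ae_iff.2 hnull] with x hx hxA U hU h0
  exact hx ⟨hxA, U, hU, h0⟩

lemma exists_measurable_frequently_le [OpensMeasurableSpace E] {γ : E → ℝ≥0∞}
    (hγ : ∫⁻ x, γ x ∂μ ≠ ⊤) {ε : ℝ≥0∞} (hε : ε ≠ 0) :
    ∃ h : E → ℝ≥0∞, Measurable h ∧ ∫⁻ x, γ x ∂μ = ∫⁻ x, h x ∂μ ∧
      ∀ᵐ x ∂μ, ∃ᶠ x' in 𝓝 x, γ x' ≤ h x + ε := by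
  obtain ⟨h, hm, hle, heq⟩ := exists_measurable_le_lintegral_eq μ γ
  refine ⟨h, hm, heq, ?_⟩
  have hdense : ∀ᵐ x ∂μ, ∀ q : ℚ, h x < Real.toNNReal q →
      ∀ U ∈ 𝓝 x, μ (U ∩ {x | h x < Real.toNNReal q}) ≠ 0 :=
    ae_all_iff.2 fun q => ae_forall_nhds_measure_inter_ne_zero _
  filter_upwards [hdense, ae_lt_top hm (heq ▸ hγ)] with x hx hfin
  have hε2 : ε / 2 ≠ 0 := by simpa using hε
  obtain ⟨q, -, hxq, hq⟩ := ENNReal.lt_iff_exists_rat_btwn.1 (ENNReal.lt_add_right hfin.ne hε2)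
  rw [frequently_iff]
  intro U hU
  obtain ⟨V, hVU, hV, hxV⟩ := mem_nhds_iff.1 hU
  obtain ⟨x', ⟨hx'V, hx'q⟩, hx'⟩ := exists_mem_le_add_of_lintegral_eq hm hle heq hγ hε2
    (hV.measurableSet.inter (measurableSet_lt hm measurable_const)) (hx q hxq V (hV.mem_nhds hxV))
  refine ⟨x', hVU hx'V, hx'.trans ?_⟩
  calc h x' + ε / 2 ≤ h x + ε / 2 + ε / 2 := by gcongr; exact (hx'q.trans hq).le
    _ = h x + ε := by rw [add_assoc, ENNReal.add_halves]

end MeasurableMinorant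

/-- `(ess sup_t |b(x,t)|)ⁿ`, the integrand of `LxnLtinfPow`. -/
def driftPow (b : En n × ℝ → En n) (Q : Set (En n × ℝ)) (x : En n) : ℝ≥0∞ :=
  (essSup (fun t => (‖b (x, t)‖₊ : ℝ≥0∞)) (volume.restrict {t | (x, t) ∈ Q})) ^ n

lemma ae_norm_le_of_driftPow_le [NeZero n] {I : Set ℝ} {x : En n} (hx : x ∈ ball y r)
    (hβ : 0 ≤ β) (h : driftPow b (ball y r ×ˢ I) x ≤ ENNReal.ofReal β ^ n) :
    ∀ᵐ t ∂volume.restrict I, ‖b (x, t)‖ ≤ β := by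
  have hslice : {t | (x, t) ∈ ball y r ×ˢ I} = I := by
    ext t
    simp only [mem_ofPred_eq, mem_prod, hx, true_and]
  rw [driftPow, hslice, ENNReal.pow_le_pow_left_iff (NeZero.ne n)] at h
  filter_upwards [ENNReal.ae_le_essSup fun t => (‖b (x, t)‖₊ : ℝ≥0∞)] with t ht
  have hle := ht.trans h
  rwa [← ENNReal.ofReal_coe_nnreal, ENNReal.ofReal_le_ofReal_iff hβ, coe_nnnorm] at hle

lemma frequently_mem_and_norm_le [NeZero n] {t₁ t₂ t : ℝ} {x : En n} (hx : x ∈ ball y r)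
    (ht : t ∈ Ioc t₁ t₂) (hβ : 0 ≤ β)
    (h : ∃ᶠ x' in 𝓝 x, driftPow b (box y r t₁ t₂) x' ≤ ENNReal.ofReal β ^ n) :
    ∃ᶠ X in 𝓝 (x, t), X ∈ box y r t₁ t₂ ∧ ‖b X‖ ≤ β := by
  intro hev
  rw [nhds_prod_eq] at hev
  obtain ⟨x', hx', ⟨hnot, hx'y⟩⟩ :=
    (h.and_eventually (hev.curry.and (isOpen_ball.mem_nhds hx))).exists
  obtain ⟨l, hl, hlt⟩ := exists_Ioc_subset_of_mem_nhds hnot ⟨t₁, ht.1⟩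
  have hsub : Ioo (max t₁ l) t ⊆ Ioo t₁ t₂ :=
    Ioo_subset_Ioo (le_max_left _ _) ht.2
  have hne : (ae (volume.restrict (Ioo (max t₁ l) t))).NeBot := by
    rw [ae_restrict_neBot, Real.volume_Ioo]
    simp [ht.1, hl]
  have hae : ∀ᵐ t' ∂volume.restrict (Ioo (max t₁ l) t), ‖b (x', t')‖ ≤ β :=
    ae_mono (Measure.restrict_mono hsub le_rfl) (ae_norm_le_of_driftPow_le hx'y hβ hx')
  obtain ⟨t', ht'b, ht'⟩ := (hae.and (ae_restrict_mem measurableSet_Ioo)).exists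
  exact hlt ⟨(le_max_right _ _).trans_lt ht'.1, ht'.2.le⟩ ⟨⟨hx'y, hsub ht'⟩, ht'b⟩

lemma setLIntegral_ball_add_le {S : ℝ} {h : En n → ℝ≥0∞} (hm : Measurable h)
    (hS : ∫⁻ x, h x ≤ ENNReal.ofReal S) (hr : 0 < r) :
    ∫⁻ x in ball y r, h x + ENNReal.ofReal (r ^ n)⁻¹ ≤
      ENNReal.ofReal (max S 0 + volume.real (ball (0 : En n) 1)) := by
  rw [lintegral_add_left hm, setLIntegral_const,
    ENNReal.ofReal_add (le_max_right _ _) measureReal_nonneg,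
    ofReal_measureReal measure_ball_lt_top.ne]
  gcongr
  · exact (setLIntegral_le_lintegral _ _).trans
      (hS.trans (ENNReal.ofReal_le_ofReal (le_max_left _ _)))
  · rw [addHaar_ball_of_pos _ _ hr, finrank_euclideanSpace_fin, ← mul_assoc,
      ← ENNReal.ofReal_mul (by positivity), inv_mul_cancel₀ (by positivity), ENNReal.ofReal_one,
      one_mul]

theorem exists_isSubsolution [NeZero n] {S : ℝ} {a : En n × ℝ → Matrix (Fin n) (Fin n) ℝ}
    (hr : 0 < r) (hu : IsC21 u (closure (pcyl (y, s) r))) (ha : UnifParabolic ν a (pcyl (y, s) r))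
    (hb : LxnLtinfPow b (pcyl (y, s) r) ≤ ENNReal.ofReal S)
    (hL : ∀ X ∈ pcyl (y, s) r, 0 ≤ -Dt u X + Lop a b u X) :
    ∃ g, IsSubsolution ν (max S 0 + volume.real (ball (0 : En n) 1)) y r (s - r ^ 2) s g
      (fun _ => 0) u := by
  set e : ℝ := (r ^ n)⁻¹
  have he : 0 < e := by positivity
  have hγfin : ∫⁻ x, driftPow b (pcyl (y, s) r) x ≠ ⊤ := (hb.trans_lt ENNReal.ofReal_lt_top).ne
  obtain ⟨h, hm, heq, hfreq⟩ := exists_measurable_frequently_le hγfin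
    (ENNReal.ofReal_pos.2 he).ne'
  let g (x : En n) : ℝ := ((h x).toReal + e) ^ (n⁻¹ : ℝ)
  have hg (x : En n) : ENNReal.ofReal (g x) ^ n = ENNReal.ofReal ((h x).toReal + e) := by
    rw [← ENNReal.ofReal_pow (by positivity), Real.rpow_inv_natCast_pow (by positivity)
      (NeZero.ne n)]
  have hcyl := closure_pcyl (y := y) (s := s) hr
  have hsub : upperCyl y r (s - r ^ 2) s ⊆ closure (pcyl (y, s) r) :=
    hcyl ▸ prod_mono ball_subset_closedBall Ioc_subset_Icc_self
  refine ⟨g, hcyl ▸ hu.cont, ⟨fun X hX => hu.diff_t X (hsub hX), fun X hX => hu.diff_x X (hsub hX),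
    fun j X hX => hu.diff_xx j X (hsub hX)⟩, by fun_prop, fun x => by positivity, ?_, ?_⟩
  · refine le_trans (lintegral_mono fun x => ?_) (setLIntegral_ball_add_le hm (heq ▸ hb) hr)
    rw [hg, ENNReal.ofReal_add (by positivity) he.le]
    gcongr
    exact ENNReal.ofReal_toReal_le
  · filter_upwards [hfreq, ae_lt_top hm (heq ▸ hγfin)] with x hx hfin hxr t ht
    have hγ : ∃ᶠ x' in 𝓝 x, driftPow b (pcyl (y, s) r) x' ≤ ENNReal.ofReal (g x) ^ n := by
      rwa [hg, ENNReal.ofReal_add (by positivity) he.le, ENNReal.ofReal_toReal hfin.ne]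
    refine .of_frequently hu (hsub ⟨hxr, ht⟩) ?_
    rw [frequently_nhdsWithin_iff]
    refine (frequently_mem_and_norm_le hxr ht (by positivity) hγ).mono fun X ⟨hX, hbX⟩ => ?_
    exact ⟨.of_Lop (ha X hX) hbX (hL X hX), subset_closure hX⟩

end Reduction

/-! ### Comparison with barriers -/

/-- `v_t + β |Dv| ≤ a_{ij} D_{ij} v + c` at `X` for every elliptic matrix `a`: adding such a `v` to
a subsolution whose matrix is not known gives a subsolution again. -/
def IsBarrierAt (ν β c : ℝ) (v : En n × ℝ → ℝ) (X : En n × ℝ) : Prop :=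
  ∀ A, IsUnifElliptic ν A →
    Dt v X + β * ‖spatialGrad v X‖ ≤ ∑ i, ∑ j, A i j * Dxx v i j X + c

lemma Dx_add {u v : En n × ℝ → ℝ} {X : En n × ℝ}
    (hu : DifferentiableAt ℝ (fun x => u (x, X.2)) X.1)
    (hv : DifferentiableAt ℝ (fun x => v (x, X.2)) X.1) (i : Fin n) :
    Dx (u + v) i X = Dx u i X + Dx v i X :=
  congrArg (fun L : En n →L[ℝ] ℝ => L (EuclideanSpace.single i 1)) (fderiv_add hu hv)

namespace IsDiff21

variable {u v : En n × ℝ → ℝ} {D D' : Set (En n × ℝ)} {X : En n × ℝ}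

lemma mono (hu : IsDiff21 u D) (hD : D' ⊆ D) : IsDiff21 u D' :=
  ⟨fun X hX => hu.diff_t X (hD hX), fun X hX => hu.diff_x X (hD hX),
    fun j X hX => hu.diff_xx j X (hD hX)⟩

variable {B : Set (En n)} {I : Set ℝ}

lemma eventually_Dx_add (hB : IsOpen B) (hu : IsDiff21 u (B ×ˢ I)) (hv : IsDiff21 v (B ×ˢ I))
    (hX : X ∈ B ×ˢ I) (j : Fin n) :
    (fun x => Dx (u + v) j (x, X.2)) =ᶠ[𝓝 X.1]
      (fun x => Dx u j (x, X.2)) + fun x => Dx v j (x, X.2) := by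
  filter_upwards [hB.mem_nhds hX.1] with x hx
  exact Dx_add (hu.diff_x (x, X.2) ⟨hx, hX.2⟩) (hv.diff_x (x, X.2) ⟨hx, hX.2⟩) j

lemma add (hB : IsOpen B) (hu : IsDiff21 u (B ×ˢ I)) (hv : IsDiff21 v (B ×ˢ I)) :
    IsDiff21 (u + v) (B ×ˢ I) where
  diff_t X hX := (hu.diff_t X hX).add (hv.diff_t X hX)
  diff_x X hX := (hu.diff_x X hX).add (hv.diff_x X hX)
  diff_xx j X hX := ((hu.diff_xx j X hX).add (hv.diff_xx j X hX)).congr_of_eventuallyEq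
    (eventually_Dx_add hB hu hv hX j)

lemma Dxx_add (hB : IsOpen B) (hu : IsDiff21 u (B ×ˢ I)) (hv : IsDiff21 v (B ×ˢ I))
    (hX : X ∈ B ×ˢ I) (i j : Fin n) : Dxx (u + v) i j X = Dxx u i j X + Dxx v i j X :=
  calc Dxx (u + v) i j X = Dx (Dx u j + Dx v j) i X :=
        congrArg (fun L : En n →L[ℝ] ℝ => L (EuclideanSpace.single i 1))
          (eventually_Dx_add hB hu hv hX j).fderiv_eq
    _ = Dxx u i j X + Dxx v i j X := Dx_add (hu.diff_xx j X hX) (hv.diff_xx j X hX) i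

lemma spatialGrad_add (hu : IsDiff21 u D) (hv : IsDiff21 v D) (hX : X ∈ D) :
    spatialGrad (u + v) X = spatialGrad u X + spatialGrad v X := by
  ext i
  exact Dx_add (hu.diff_x X hX) (hv.diff_x X hX) i

end IsDiff21

lemma IsSubsolutionAt.add_barrier {ν β c : ℝ} {u v : En n × ℝ → ℝ} {X : En n × ℝ}
    {B : Set (En n)} {I : Set ℝ} (hB : IsOpen B) (hX : X ∈ B ×ˢ I) (hβ : 0 ≤ β)
    (hdu : IsDiff21 u (B ×ˢ I)) (hdv : IsDiff21 v (B ×ˢ I)) (hu : IsSubsolutionAt ν β 0 u X)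
    (hv : IsBarrierAt ν β c v X) : IsSubsolutionAt ν β c (u + v) X := by
  obtain ⟨A, hA, hle⟩ := hu
  refine ⟨A, hA, ?_⟩
  have hDt : Dt (u + v) X = Dt u X + Dt v X := deriv_add (hdu.diff_t X hX) (hdv.diff_t X hX)
  have hgrad : ‖spatialGrad u X‖ ≤ ‖spatialGrad (u + v) X‖ + ‖spatialGrad v X‖ := by
    rw [eq_sub_of_add_eq (hdu.spatialGrad_add hdv hX).symm]
    exact norm_sub_le _ _
  have hβgrad := mul_le_mul_of_nonneg_left hgrad hβ
  simp only [hDt, hdu.Dxx_add hB hdv hX, mul_add, Finset.sum_add_distrib]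
  linarith [hv A hA]

lemma closedBall_subset_closedBall_of_ball_subset {E : Type*} [SeminormedAddCommGroup E]
    [NormedSpace ℝ E] {x y : E} {R r : ℝ} (hR : R ≠ 0) (h : ball x R ⊆ ball y r) :
    closedBall x R ⊆ closedBall y r := by
  rw [← closure_ball x hR]
  exact (closure_mono h).trans closure_ball_subset_closedBall

namespace IsSubsolution

variable {ν S : ℝ} {x₀ y : En n} {R r s₁ s₂ t₁ t₂ : ℝ} {u v : En n × ℝ → ℝ} {g f : En n → ℝ}

lemma mono (h : IsSubsolution ν S y r t₁ t₂ g f u) (hR : R ≠ 0) (hb : ball x₀ R ⊆ ball y r)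
    (h₁ : t₁ ≤ s₁) (h₂ : s₂ ≤ t₂) : IsSubsolution ν S x₀ R s₁ s₂ g f u where
  cont := h.cont.mono
    (prod_mono (closedBall_subset_closedBall_of_ball_subset hR hb) (Icc_subset_Icc h₁ h₂))
  diff := h.diff.mono (prod_mono hb (Ioc_subset_Ioc h₁ h₂))
  drift_measurable := h.drift_measurable
  drift_pos := h.drift_pos
  lintegral_drift_le := (lintegral_mono_set hb).trans h.lintegral_drift_le
  subsol := by
    filter_upwards [h.subsol] with x hx hxb t ht
    exact hx (hb hxb) t (Ioc_subset_Ioc h₁ h₂ ht)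

lemma add_barrier (hu : IsSubsolution ν S x₀ R t₁ t₂ g (fun _ => 0) u)
    (hvc : ContinuousOn v (closedCyl x₀ R t₁ t₂)) (hvd : IsDiff21 v (upperCyl x₀ R t₁ t₂))
    (hv : ∀ X ∈ upperCyl x₀ R t₁ t₂, IsBarrierAt ν (g X.1) (f X.1) v X) :
    IsSubsolution ν S x₀ R t₁ t₂ g f (u + v) where
  cont := hu.cont.add hvc
  diff := hu.diff.add isOpen_ball hvd
  drift_measurable := hu.drift_measurable
  drift_pos := hu.drift_pos
  lintegral_drift_le := hu.lintegral_drift_le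
  subsol := by
    filter_upwards [hu.subsol] with x hx hxb t ht
    exact (hx hxb t ht).add_barrier isOpen_ball ⟨hxb, ht⟩ (hu.drift_pos x).le hu.diff hvd
      (hv (x, t) ⟨hxb, ht⟩)

end IsSubsolution

/-! ### The decaying barrier -/

lemma hasDerivAt_max_zero_pow (k : ℕ) (y : ℝ) :
    HasDerivAt (fun z : ℝ => max z 0 ^ (k + 2)) ((k + 2) * max y 0 ^ (k + 1)) y := by
  rcases lt_trichotomy y 0 with hy | rfl | hy
  · have hzero : (fun z : ℝ => max z 0 ^ (k + 2)) =ᶠ[𝓝 y] fun _ => 0 := by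
      filter_upwards [Iio_mem_nhds hy] with z hz
      simp [max_eq_right (mem_Iio.1 hz).le]
    simpa [max_eq_right hy.le] using (hasDerivAt_const y (0 : ℝ)).congr_of_eventuallyEq hzero
  · have hleft : HasDerivWithinAt (fun z : ℝ => max z 0 ^ (k + 2)) 0 (Iic 0) 0 :=
      (hasDerivWithinAt_const (0 : ℝ) (Iic 0) (0 : ℝ)).congr
        (fun z hz => by simp [max_eq_right (mem_Iic.1 hz)]) (by simp)
    have hpow : HasDerivWithinAt (fun z : ℝ => z ^ (k + 2)) 0 (Ici 0) 0 := by
      simpa using (hasDerivAt_pow (k + 2) (0 : ℝ)).hasDerivWithinAt (s := Ici 0)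
    have hright : HasDerivWithinAt (fun z : ℝ => max z 0 ^ (k + 2)) 0 (Ici 0) 0 :=
      hpow.congr (fun z hz => by rw [max_eq_left (mem_Ici.1 hz)]) (by simp)
    simpa [Iic_union_Ici, hasDerivWithinAt_univ] using hleft.union hright
  · have hpos : (fun z : ℝ => max z 0 ^ (k + 2)) =ᶠ[𝓝 y] fun z => z ^ (k + 2) := by
      filter_upwards [Ioi_mem_nhds hy] with z hz
      rw [max_eq_left (mem_Ioi.1 hz).le]
    simpa [max_eq_left hy.le] using (hasDerivAt_pow (k + 2) y).congr_of_eventuallyEq hpos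

/-- The barrier `K θ^{-(p+3)} (θ - Φ)₊³ - M`, supported in the growing region `{Φ < θ(t)}`. -/
def decayBarrier (Φ : En n → ℝ) (θ : ℝ → ℝ) (p : ℕ) (K M : ℝ) (X : En n × ℝ) : ℝ :=
  K * (θ X.2)⁻¹ ^ (p + 3) * max (θ X.2 - Φ X.1) 0 ^ 3 - M

section DecayBarrier

variable {Φ : En n → ℝ} {Φ' : En n → En n} {Φ'' : En n → En n →L[ℝ] En n} {θ : ℝ → ℝ} {p : ℕ}
  {K M a t : ℝ} {x : En n}

lemma decayBarrier_of_le (h : θ t ≤ Φ x) : decayBarrier Φ θ p K M (x, t) = -M := by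
  simp [decayBarrier, max_eq_right (sub_nonpos.2 h)]

lemma continuousOn_decayBarrier (hΦ : Continuous Φ) (hθ : Continuous θ) {D : Set (En n × ℝ)}
    (hD : ∀ X ∈ D, θ X.2 ≠ 0) : ContinuousOn (decayBarrier Φ θ p K M) D := by
  have hinv : ContinuousOn (fun X : En n × ℝ => (θ X.2)⁻¹ ^ (p + 3)) D :=
    (ContinuousOn.inv₀ (by fun_prop) hD).pow _
  have hmax : ContinuousOn (fun X : En n × ℝ => max (θ X.2 - Φ X.1) 0 ^ 3) D := by fun_prop
  exact ((continuousOn_const.mul hinv).mul hmax).sub continuousOn_const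

lemma hasDerivAt_decayBarrier (hθ : HasDerivAt θ a t) (ht : θ t ≠ 0) :
    HasDerivAt (fun t => decayBarrier Φ θ p K M (x, t)) (K * (θ t)⁻¹ ^ (p + 3) *
      (3 * max (θ t - Φ x) 0 ^ 2 * a - (p + 3) * max (θ t - Φ x) 0 ^ 3 * a * (θ t)⁻¹)) t := by
  have hcube := (hasDerivAt_max_zero_pow 1 _).comp t (hθ.sub_const (Φ x))
  have hpow := ((hθ.inv ht).pow (p + 3)).const_mul K
  refine ((hpow.mul hcube).sub_const M).congr_deriv ?_
  simp only [Pi.inv_apply, Pi.pow_apply, Function.comp_apply, Nat.add_succ_sub_one]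
  push_cast
  ring

lemma hasFDerivAt_max_zero_pow (hΦ : HasGradientAt Φ (Φ' x) x) (k : ℕ) (τ : ℝ) :
    HasFDerivAt (fun x => max (τ - Φ x) 0 ^ (k + 2))
      (((k + 2) * max (τ - Φ x) 0 ^ (k + 1)) • -innerSL ℝ (Φ' x)) x :=
  (hasDerivAt_max_zero_pow k _).comp_hasFDerivAt x (hΦ.hasFDerivAt.const_sub τ)

lemma hasFDerivAt_decayBarrier (hΦ : HasGradientAt Φ (Φ' x) x) :
    HasFDerivAt (fun x => decayBarrier Φ θ p K M (x, t))
      (-(3 * (K * (θ t)⁻¹ ^ (p + 3)) * max (θ t - Φ x) 0 ^ 2) • innerSL ℝ (Φ' x)) x := by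
  have hcube := ((hasFDerivAt_max_zero_pow hΦ 1 (θ t)).const_mul
    (K * (θ t)⁻¹ ^ (p + 3))).sub_const M
  refine HasFDerivAt.congr_fderiv hcube ?_
  ext z
  simp only [_root_.smul_apply, _root_.neg_apply, smul_eq_mul]
  push_cast
  ring

lemma Dx_decayBarrier (hΦ : HasGradientAt Φ (Φ' x) x) (i : Fin n) :
    Dx (decayBarrier Φ θ p K M) i (x, t) =
      -(3 * (K * (θ t)⁻¹ ^ (p + 3)) * max (θ t - Φ x) 0 ^ 2) * Φ' x i := by
  simp only [Dx, (hasFDerivAt_decayBarrier hΦ).fderiv, _root_.smul_apply, innerSL_apply_apply,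
    EuclideanSpace.inner_single_right, one_mul, smul_eq_mul]
  rfl

lemma spatialGrad_decayBarrier (hΦ : HasGradientAt Φ (Φ' x) x) :
    spatialGrad (decayBarrier Φ θ p K M) (x, t) =
      (-(3 * (K * (θ t)⁻¹ ^ (p + 3)) * max (θ t - Φ x) 0 ^ 2)) • Φ' x := by
  ext i
  exact Dx_decayBarrier hΦ i

lemma hasFDerivAt_Dx_decayBarrier (hΦ : ∀ x, HasGradientAt Φ (Φ' x) x)
    (hΦ' : HasFDerivAt Φ' (Φ'' x) x) (j : Fin n) :
    HasFDerivAt (fun x => Dx (decayBarrier Φ θ p K M) j (x, t))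
      (-(3 * (K * (θ t)⁻¹ ^ (p + 3))) • (max (θ t - Φ x) 0 ^ 2 •
          (EuclideanSpace.proj (𝕜 := ℝ) j).comp (Φ'' x) +
        Φ' x j • (2 * max (θ t - Φ x) 0) • -innerSL ℝ (Φ' x))) x := by
  have hcoord : HasFDerivAt (fun x => Φ' x j) ((EuclideanSpace.proj (𝕜 := ℝ) j).comp (Φ'' x)) x :=
    (EuclideanSpace.proj (𝕜 := ℝ) j).hasFDerivAt.comp x hΦ'
  have hDx : (fun x => Dx (decayBarrier Φ θ p K M) j (x, t)) = fun x =>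
      -(3 * (K * (θ t)⁻¹ ^ (p + 3))) * (max (θ t - Φ x) 0 ^ 2 * Φ' x j) := by
    ext x
    rw [Dx_decayBarrier (hΦ x)]
    ring
  rw [hDx]
  simpa using ((hasFDerivAt_max_zero_pow (hΦ x) 0 (θ t)).mul hcoord).const_mul
    (-(3 * (K * (θ t)⁻¹ ^ (p + 3))))

lemma Dxx_decayBarrier (hΦ : ∀ x, HasGradientAt Φ (Φ' x) x) (hΦ' : HasFDerivAt Φ' (Φ'' x) x)
    (i j : Fin n) :
    Dxx (decayBarrier Φ θ p K M) i j (x, t) = K * (θ t)⁻¹ ^ (p + 3) *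
      (6 * max (θ t - Φ x) 0 * (Φ' x i * Φ' x j) -
        3 * max (θ t - Φ x) 0 ^ 2 * Φ'' x (EuclideanSpace.single i 1) j) := by
  rw [Dxx, Dx, (hasFDerivAt_Dx_decayBarrier hΦ hΦ' j).fderiv]
  simp [EuclideanSpace.inner_single_right]
  ring

lemma isDiff21_decayBarrier (hΦ : ∀ x, HasGradientAt Φ (Φ' x) x)
    (hΦ' : ∀ x, HasFDerivAt Φ' (Φ'' x) x) (hθ : ∀ t, HasDerivAt θ a t) {D : Set (En n × ℝ)}
    (hD : ∀ X ∈ D, θ X.2 ≠ 0) : IsDiff21 (decayBarrier Φ θ p K M) D where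
  diff_t X hX := (hasDerivAt_decayBarrier (hθ X.2) (hD X hX)).differentiableAt
  diff_x X _ := (hasFDerivAt_decayBarrier (hΦ X.1)).differentiableAt
  diff_xx j X _ := (hasFDerivAt_Dx_decayBarrier hΦ (hΦ' X.1) j).differentiableAt

end DecayBarrier

/-- `Φ`, with gradient `Φ'` and second derivative `Φ''`, behaves like `|x - x₀|²` up to the
distortion `l`, and remains a supersolution up to a constant in the presence of the drift `g`. -/
structure IsDistSqProfile (ν l : ℝ) (x₀ : En n) (g Φ : En n → ℝ) (Φ' : En n → En n)
    (Φ'' : En n → En n →L[ℝ] En n) : Prop where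
  hasGradientAt : ∀ x, HasGradientAt Φ (Φ' x) x
  hasFDerivAt : ∀ x, HasFDerivAt Φ' (Φ'' x) x
  mul_sq_norm_le : ∀ x, l ^ 2 * ‖x - x₀‖ ^ 2 ≤ Φ x
  le_sq_norm : ∀ x, Φ x ≤ ‖x - x₀‖ ^ 2
  sq_norm_grad_le : ∀ x, ‖Φ' x‖ ^ 2 ≤ 4 * Φ x
  le_sq_norm_grad : ∀ x, 4 * l ^ 2 * Φ x ≤ ‖Φ' x‖ ^ 2
  hess_add_drift_le : ∀ x A, IsUnifElliptic ν A →
    ∑ i, ∑ j, A i j * Φ'' x (EuclideanSpace.single i 1) j + g x * ‖Φ' x‖ ≤ 2 * n * ν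

/-- Completing the square in `P` shows that the quadratic form
`6 c₀ θ² - (27 + 3 C₀ + 6 c₀) P θ + 4 q P²` is nonnegative. -/
lemma decay_inequality {c₀ C₀ q a P θ H G Q : ℝ} (hc₀ : 0 < c₀)
    (hq : (27 + 3 * C₀ + 6 * c₀) ^ 2 ≤ 96 * c₀ * q) (hP : 0 < P) (hθ : 0 < θ) (ha : a ∈ Icc 4 9)
    (hq0 : 0 ≤ q) (hQ : c₀ * (θ - P) ≤ Q) (hHG : H + G ≤ C₀) :
    3 * P * a - q * P ^ 2 * a * θ⁻¹ + 3 * P * G ≤ 6 * Q - 3 * P * H := by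
  set L := 27 + 3 * C₀ + 6 * c₀
  have hform : 0 ≤ 6 * c₀ * θ ^ 2 - L * P * θ + 4 * q * P ^ 2 := by
    refine nonneg_of_mul_nonneg_right (a := 24 * c₀) ?_ (by positivity)
    calc (0 : ℝ) ≤ (12 * c₀ * θ - L * P) ^ 2 + (96 * c₀ * q - L ^ 2) * P ^ 2 :=
          add_nonneg (sq_nonneg _) (mul_nonneg (sub_nonneg.2 hq) (sq_nonneg _))
      _ = _ := by ring
  have hform' : L * P ≤ 6 * c₀ * θ + q * P ^ 2 * 4 * θ⁻¹ := by
    have hdiv : 6 * c₀ * θ + q * P ^ 2 * 4 * θ⁻¹ - L * P =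
        (6 * c₀ * θ ^ 2 - L * P * θ + 4 * q * P ^ 2) * θ⁻¹ := by
      field_simp
      ring
    rw [← sub_nonneg, hdiv]
    positivity
  have ha9 : 3 * P * a ≤ 3 * P * 9 := by gcongr; exact ha.2
  have ha4 : q * P ^ 2 * 4 * θ⁻¹ ≤ q * P ^ 2 * a * θ⁻¹ := by gcongr; exact ha.1
  have hC : 3 * P * (H + G) ≤ 3 * P * C₀ := by gcongr
  simp only [L] at hform'
  linarith

lemma decay_weight_le {θ₀ θ P N b : ℝ} (p : ℕ) (hb : 0 < b) (hθ₀ : b ^ 2 = θ₀) (hθ : θ₀ ≤ θ)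
    (hP : 0 ≤ P) (hPθ : P ≤ θ) (hN : 0 ≤ N) (hNθ : N ^ 2 ≤ 4 * θ) :
    3 * (θ₀ ^ p * θ⁻¹ ^ (p + 3)) * P ^ 2 * N ≤ 6 / b := by
  have hθ₀' : 0 < θ₀ := hθ₀ ▸ by positivity
  have hθ' : 0 < θ := hθ₀'.trans_le hθ
  have hratio : θ₀ * θ⁻¹ ≤ 1 := by rwa [mul_inv_le_iff₀ hθ', one_mul]
  have hP1 : P * θ⁻¹ ≤ 1 := by rwa [mul_inv_le_iff₀ hθ', one_mul]
  have hNb : N * b ≤ 2 * θ := by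
    refine le_of_sq_le_sq ?_ (by positivity)
    calc (N * b) ^ 2 = N ^ 2 * θ₀ := by rw [mul_pow, hθ₀]
      _ ≤ 4 * θ * θ := by gcongr
      _ = (2 * θ) ^ 2 := by ring
  have hNθ' : N * θ⁻¹ ≤ 2 / b := by
    rw [mul_inv_le_iff₀ hθ', div_mul_eq_mul_div, le_div_iff₀ hb]
    exact hNb
  calc 3 * (θ₀ ^ p * θ⁻¹ ^ (p + 3)) * P ^ 2 * N
      = 3 * (θ₀ * θ⁻¹) ^ p * (P * θ⁻¹) ^ 2 * (N * θ⁻¹) := by ring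
    _ ≤ 3 * 1 ^ p * 1 ^ 2 * (2 / b) := by gcongr
    _ = 6 / b := by ring

namespace IsDistSqProfile

variable {ν l : ℝ} {x₀ : En n} {g Φ : En n → ℝ} {Φ' : En n → En n} {Φ'' : En n → En n →L[ℝ] En n}
  (h : IsDistSqProfile ν l x₀ g Φ Φ' Φ'') {θ : ℝ → ℝ} {p : ℕ} {K M a t : ℝ} {x : En n}

include h

lemma nonneg (x : En n) : 0 ≤ Φ x :=
  (by positivity : (0 : ℝ) ≤ l ^ 2 * ‖x - x₀‖ ^ 2).trans (h.mul_sq_norm_le x)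

lemma continuous : Continuous Φ :=
  continuous_iff_continuousAt.2 fun x => (h.hasGradientAt x).hasFDerivAt.continuousAt

lemma le_sum_mul_grad (hν : 0 < ν) {A : Matrix (Fin n) (Fin n) ℝ} (hA : IsUnifElliptic ν A)
    (x : En n) : 4 * l ^ 2 / ν * Φ x ≤ ∑ i, ∑ j, A i j * Φ' x i * Φ' x j :=
  calc 4 * l ^ 2 / ν * Φ x = ν⁻¹ * (4 * l ^ 2 * Φ x) := by ring
    _ ≤ ν⁻¹ * ‖Φ' x‖ ^ 2 := by gcongr; exact h.le_sq_norm_grad x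
    _ = ν⁻¹ * ∑ i, Φ' x i ^ 2 := by rw [EuclideanSpace.real_norm_sq_eq]
    _ ≤ _ := hA.1 (Φ' x)

lemma sum_mul_Dxx_decayBarrier (A : Matrix (Fin n) (Fin n) ℝ) :
    ∑ i, ∑ j, A i j * Dxx (decayBarrier Φ θ p K M) i j (x, t) = K * (θ t)⁻¹ ^ (p + 3) *
      (6 * max (θ t - Φ x) 0 * ∑ i, ∑ j, A i j * Φ' x i * Φ' x j -
        3 * max (θ t - Φ x) 0 ^ 2 *
          ∑ i, ∑ j, A i j * Φ'' x (EuclideanSpace.single i 1) j) := by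
  simp only [Dxx_decayBarrier h.hasGradientAt (h.hasFDerivAt x), Finset.mul_sum,
    ← Finset.sum_sub_distrib]
  refine Finset.sum_congr rfl fun i _ => Finset.sum_congr rfl fun j _ => ?_
  ring

lemma isBarrierAt_decayBarrier (hν : 0 < ν) (hl : 0 < l) (hK : 0 ≤ K)
    (hp : (27 + 3 * (2 * n * ν) + 6 * (4 * l ^ 2 / ν)) ^ 2 ≤ 96 * (4 * l ^ 2 / ν) * (p + 3))
    (hθ : HasDerivAt θ a t) (ht : 0 < θ t) (ha : a ∈ Icc 4 9) :
    IsBarrierAt ν (g x) 0 (decayBarrier Φ θ p K M) (x, t) := by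
  intro A hA
  have hnorm : ‖spatialGrad (decayBarrier Φ θ p K M) (x, t)‖ =
      3 * (K * (θ t)⁻¹ ^ (p + 3)) * max (θ t - Φ x) 0 ^ 2 * ‖Φ' x‖ := by
    rw [spatialGrad_decayBarrier (h.hasGradientAt x), norm_smul, norm_neg,
      Real.norm_of_nonneg (by positivity)]
  have hDt : Dt (decayBarrier Φ θ p K M) (x, t) = _ := (hasDerivAt_decayBarrier hθ ht.ne').deriv
  rw [h.sum_mul_Dxx_decayBarrier, hnorm, hDt]
  rcases le_or_gt (θ t) (Φ x) with hout | hin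
  · simp [max_eq_right (sub_nonpos.2 hout)]
  rw [max_eq_left (sub_pos.2 hin).le]
  have hP : 0 < θ t - Φ x := sub_pos.2 hin
  have hineq := decay_inequality (by positivity) hp hP ht ha (by positivity)
    (by simpa using h.le_sum_mul_grad hν hA x) (h.hess_add_drift_le x A hA)
  have hscaled := mul_le_mul_of_nonneg_left hineq
    (by positivity : 0 ≤ K * (θ t)⁻¹ ^ (p + 3) * (θ t - Φ x))
  linear_combination hscaled

lemma norm_spatialGrad_decayBarrier_le {μ b : ℝ} (hμ : 0 ≤ μ) (hb : 0 < b) (ht : b ^ 2 ≤ θ t) :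
    ‖spatialGrad (decayBarrier Φ θ p (μ * (b ^ 2) ^ p) M) (x, t)‖ ≤ μ * (6 / b) := by
  have ht0 : 0 < θ t := (by positivity : 0 < b ^ 2).trans_le ht
  rw [spatialGrad_decayBarrier (h.hasGradientAt x), norm_smul, norm_neg,
    Real.norm_of_nonneg (by positivity)]
  rcases le_or_gt (θ t) (Φ x) with hout | hin
  · rw [max_eq_right (sub_nonpos.2 hout)]
    simp only [ne_eq, OfNat.ofNat_ne_zero, not_false_eq_true, zero_pow, mul_zero, zero_mul]
    positivity
  have hweight := decay_weight_le p hb rfl ht (sub_pos.2 hin).le (sub_le_self _ (h.nonneg x))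
    (norm_nonneg (Φ' x)) ((h.sq_norm_grad_le x).trans (by gcongr))
  rw [max_eq_left (sub_pos.2 hin).le]
  calc 3 * (μ * (b ^ 2) ^ p * (θ t)⁻¹ ^ (p + 3)) * (θ t - Φ x) ^ 2 * ‖Φ' x‖
      = μ * (3 * ((b ^ 2) ^ p * (θ t)⁻¹ ^ (p + 3)) * (θ t - Φ x) ^ 2 * ‖Φ' x‖) := by ring
    _ ≤ μ * (6 / b) := by gcongr

lemma decayBarrier_initial_le {μ b : ℝ} (hμ : 0 ≤ μ) (hb : 0 < b) (ht : θ t = b ^ 2) :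
    decayBarrier Φ θ p (μ * (b ^ 2) ^ p) M (x, t) ≤ μ - M := by
  have hmax : max (b ^ 2 - Φ x) 0 ≤ b ^ 2 :=
    max_le (sub_le_self _ (h.nonneg x)) (by positivity)
  rw [decayBarrier, ht, sub_le_sub_iff_right]
  calc μ * (b ^ 2) ^ p * (b ^ 2)⁻¹ ^ (p + 3) * max (b ^ 2 - Φ x) 0 ^ 3
      ≤ μ * (b ^ 2) ^ p * (b ^ 2)⁻¹ ^ (p + 3) * (b ^ 2) ^ 3 := by gcongr
    _ = μ := by rw [mul_assoc μ, mul_assoc μ, inv_pow]; field_simp; ring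

lemma le_decayBarrier_final {μ σ : ℝ} (hμ : 0 ≤ μ) (hσ : 0 < σ) (ht : θ t = (3 * σ) ^ 2)
    (hx : x ∈ ball x₀ (2 * σ)) :
    (l ^ 2 / 9) ^ p * (5 / 9) ^ 3 * μ - M ≤
      decayBarrier Φ θ p (μ * ((l * σ) ^ 2) ^ p) M (x, t) := by
  have hdist : ‖x - x₀‖ ^ 2 ≤ (2 * σ) ^ 2 := by
    gcongr
    exact (mem_ball_iff_norm.1 hx).le
  have hmax : 5 * σ ^ 2 ≤ max ((3 * σ) ^ 2 - Φ x) 0 :=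
    le_max_of_le_left (by linarith [h.le_sq_norm x])
  rw [decayBarrier, ht, sub_le_sub_iff_right]
  calc (l ^ 2 / 9) ^ p * (5 / 9) ^ 3 * μ
      = μ * ((l * σ) ^ 2 * ((3 * σ) ^ 2)⁻¹) ^ p * (((3 * σ) ^ 2)⁻¹ * (5 * σ ^ 2)) ^ 3 := by
        have hl : (l * σ) ^ 2 * ((3 * σ) ^ 2)⁻¹ = l ^ 2 / 9 := by field_simp; ring
        have h5 : ((3 * σ) ^ 2)⁻¹ * (5 * σ ^ 2) = 5 / 9 := by field_simp; ring
        rw [hl, h5]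
        ring
    _ = μ * ((l * σ) ^ 2) ^ p * ((3 * σ) ^ 2)⁻¹ ^ (p + 3) * (5 * σ ^ 2) ^ 3 := by ring
    _ ≤ _ := by gcongr

end IsDistSqProfile

/-! ### Spreading of a gap from a ball to a larger ball -/

/-- The affine function of `t` with values `(l σ)²` at `t₁` and `(3 σ)²` at `t₂`. -/
def growingLevel (l σ t₁ t₂ t : ℝ) : ℝ :=
  (l * σ) ^ 2 + ((3 * σ) ^ 2 - (l * σ) ^ 2) / (t₂ - t₁) * (t - t₁)

section GrowingLevel

variable {l σ t₁ t₂ t : ℝ}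

lemma growingLevel_left : growingLevel l σ t₁ t₂ t₁ = (l * σ) ^ 2 := by simp [growingLevel]

lemma growingLevel_right (ht : t₁ < t₂) : growingLevel l σ t₁ t₂ t₂ = (3 * σ) ^ 2 := by
  rw [growingLevel, div_mul_cancel₀ _ (sub_pos.2 ht).ne', add_sub_cancel]

lemma hasDerivAt_growingLevel (t : ℝ) :
    HasDerivAt (growingLevel l σ t₁ t₂) (((3 * σ) ^ 2 - (l * σ) ^ 2) / (t₂ - t₁)) t :=
  ((((hasDerivAt_id t).sub_const t₁).const_mul _).const_add _).congr_deriv (mul_one _)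

variable (hl : 0 ≤ l) (hl1 : l ≤ 1)

include hl hl1

lemma growingLevel_slope_mem (hσ : 0 < σ) (ht : t₂ - t₁ ∈ Icc (σ ^ 2) (2 * σ ^ 2)) :
    ((3 * σ) ^ 2 - (l * σ) ^ 2) / (t₂ - t₁) ∈ Icc 4 9 := by
  have htpos : 0 < t₂ - t₁ := (by positivity : 0 < σ ^ 2).trans_le ht.1
  have hlσ : (l * σ) ^ 2 ≤ σ ^ 2 := by
    gcongr
    exact mul_le_of_le_one_left hσ.le hl1
  constructor
  · rw [le_div_iff₀ htpos]
    linarith [ht.2]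
  · rw [div_le_iff₀ htpos]
    linarith [ht.1, sq_nonneg (l * σ)]

lemma growingLevel_mem (hσ : 0 < σ) (ht : t ∈ Icc t₁ t₂) :
    growingLevel l σ t₁ t₂ t ∈ Icc ((l * σ) ^ 2) ((3 * σ) ^ 2) := by
  have hgap : 0 ≤ (3 * σ) ^ 2 - (l * σ) ^ 2 := by
    rw [sub_nonneg]
    gcongr
    linarith
  have hfrac : (t - t₁) / (t₂ - t₁) ≤ 1 :=
    div_le_one_of_le₀ (by linarith [ht.2]) (by linarith [ht.1, ht.2])
  have hfrac0 : 0 ≤ (t - t₁) / (t₂ - t₁) :=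
    div_nonneg (sub_nonneg.2 ht.1) (by linarith [ht.1, ht.2])
  have heq : growingLevel l σ t₁ t₂ t =
      (l * σ) ^ 2 + ((3 * σ) ^ 2 - (l * σ) ^ 2) * ((t - t₁) / (t₂ - t₁)) := by
    rw [growingLevel]
    ring
  rw [heq]
  exact ⟨le_add_of_nonneg_right (mul_nonneg hgap hfrac0),
    by linarith [mul_le_of_le_one_right hgap hfrac]⟩

end GrowingLevel

lemma IsBarrierAt.of_drift_le {ν β β₁ β₂ m : ℝ} {v : En n × ℝ → ℝ} {X : En n × ℝ}
    (hv : IsBarrierAt ν β₁ 0 v X) (hβ : β ≤ β₁ + β₂) (hβ₂ : 0 ≤ β₂) (hm : ‖spatialGrad v X‖ ≤ m) :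
    IsBarrierAt ν β (m * β₂) v X := by
  intro A hA
  have hdrift : β * ‖spatialGrad v X‖ ≤ β₁ * ‖spatialGrad v X‖ + m * β₂ :=
    calc β * ‖spatialGrad v X‖ ≤ (β₁ + β₂) * ‖spatialGrad v X‖ := by gcongr
      _ = β₁ * ‖spatialGrad v X‖ + ‖spatialGrad v X‖ * β₂ := by ring
      _ ≤ β₁ * ‖spatialGrad v X‖ + m * β₂ := by gcongr
  linarith [hv A hA]

lemma lintegral_ofReal_const_mul_pow_le {α : Type*} [MeasurableSpace α] {μ : Measure α} {m : ℝ}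
    {g : α → ℝ} {ε : ℝ} (hm : 0 ≤ m) (hg : Measurable g) (n : ℕ)
    (h : ∫⁻ x, ENNReal.ofReal (g x) ^ n ∂μ ≤ ENNReal.ofReal (ε ^ n)) :
    ∫⁻ x, ENNReal.ofReal (m * g x) ^ n ∂μ ≤ ENNReal.ofReal ((m * ε) ^ n) := by
  simp only [ENNReal.ofReal_mul hm, mul_pow, ← ENNReal.ofReal_pow hm]
  rw [lintegral_const_mul _ (by fun_prop), ENNReal.ofReal_mul (by positivity)]
  gcongr

/-- The decaying barrier of initial height `μ`, supported initially in `{Φ < (l σ)²}` and at the end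
in `{Φ < (3 σ)²}`. -/
def spreadBarrier (Φ : En n → ℝ) (l σ t₁ t₂ : ℝ) (p : ℕ) (μ M : ℝ) : En n × ℝ → ℝ :=
  decayBarrier Φ (growingLevel l σ t₁ t₂) p (μ * ((l * σ) ^ 2) ^ p) M

namespace IsDistSqProfile

variable {ν S l : ℝ} {x₀ : En n} {σ t₁ t₂ M μ : ℝ} {g g₁ g₂ Φ : En n → ℝ} {Φ' : En n → En n}
  {Φ'' : En n → En n →L[ℝ] En n} {u : En n × ℝ → ℝ} {p : ℕ}

lemma isSubsolution_add_spreadBarrier (h : IsDistSqProfile ν l x₀ g₁ Φ Φ' Φ'') (hν : 0 < ν)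
    (hl : 0 < l) (hl1 : l ≤ 1) (hσ : 0 < σ) (ht : t₂ - t₁ ∈ Icc (σ ^ 2) (2 * σ ^ 2)) (hμ : 0 ≤ μ)
    (hp : (27 + 3 * (2 * n * ν) + 6 * (4 * l ^ 2 / ν)) ^ 2 ≤ 96 * (4 * l ^ 2 / ν) * (p + 3))
    (hu : IsSubsolution ν S x₀ (3 * σ / l) t₁ t₂ g (fun _ => 0) u) (hg₂ : ∀ x, 0 ≤ g₂ x)
    (hg : ∀ x, g x ≤ g₁ x + g₂ x) :
    IsSubsolution ν S x₀ (3 * σ / l) t₁ t₂ g (fun x => μ * (6 / (l * σ)) * g₂ x)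
      (u + spreadBarrier Φ l σ t₁ t₂ p μ M) := by
  have hlσ : 0 < l * σ := mul_pos hl hσ
  have hlevel : ∀ {t}, t ∈ Icc t₁ t₂ → (l * σ) ^ 2 ≤ growingLevel l σ t₁ t₂ t := fun ht =>
    (growingLevel_mem hl.le hl1 hσ ht).1
  have hlevel_pos : ∀ {t}, t ∈ Icc t₁ t₂ → 0 < growingLevel l σ t₁ t₂ t := fun ht =>
    (by positivity : 0 < (l * σ) ^ 2).trans_le (hlevel ht)
  refine hu.add_barrier (continuousOn_decayBarrier h.continuous
      (continuous_iff_continuousAt.2 fun t => (hasDerivAt_growingLevel t).continuousAt)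
      fun X hX => (hlevel_pos hX.2).ne')
    (isDiff21_decayBarrier h.hasGradientAt h.hasFDerivAt hasDerivAt_growingLevel
      fun X hX => (hlevel_pos (Ioc_subset_Icc_self hX.2)).ne') fun X hX => ?_
  have hX2 := Ioc_subset_Icc_self hX.2
  exact (h.isBarrierAt_decayBarrier hν hl (by positivity) hp (hasDerivAt_growingLevel X.2)
    (hlevel_pos hX2) (growingLevel_slope_mem hl.le hl1 hσ ht)).of_drift_le (hg X.1) (hg₂ X.1)
    (h.norm_spatialGrad_decayBarrier_le hμ hlσ (hlevel hX2))

lemma add_spreadBarrier_initial_nonpos (h : IsDistSqProfile ν l x₀ g₁ Φ Φ' Φ'') (hl : 0 < l)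
    (hσ : 0 < σ) (hμ : 0 ≤ μ) {x : En n} (hM : u (x, t₁) ≤ M)
    (hgap : x ∈ ball x₀ σ → u (x, t₁) ≤ M - μ) :
    (u + spreadBarrier Φ l σ t₁ t₂ p μ M) (x, t₁) ≤ 0 := by
  rw [Pi.add_apply, spreadBarrier]
  by_cases hx : x ∈ ball x₀ σ
  · linarith [hgap hx, h.decayBarrier_initial_le (x := x) (p := p) (M := M) hμ (mul_pos hl hσ)
      (growingLevel_left (l := l) (σ := σ) (t₁ := t₁) (t₂ := t₂))]
  · have hout : growingLevel l σ t₁ t₂ t₁ ≤ Φ x := by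
      rw [growingLevel_left, mul_pow]
      refine le_trans ?_ (h.mul_sq_norm_le x)
      gcongr
      rwa [mem_ball_iff_norm, not_lt] at hx
    rw [decayBarrier_of_le hout]
    linarith

lemma add_spreadBarrier_lateral_nonpos (h : IsDistSqProfile ν l x₀ g₁ Φ Φ' Φ'') (hl : 0 < l)
    (hl1 : l ≤ 1) (hσ : 0 < σ) {x : En n} {t : ℝ} (ht : t ∈ Icc t₁ t₂)
    (hx : x ∈ sphere x₀ (3 * σ / l)) (hM : u (x, t) ≤ M) :
    (u + spreadBarrier Φ l σ t₁ t₂ p μ M) (x, t) ≤ 0 := by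
  have hout : growingLevel l σ t₁ t₂ t ≤ Φ x :=
    calc growingLevel l σ t₁ t₂ t ≤ (3 * σ) ^ 2 := (growingLevel_mem hl.le hl1 hσ ht).2
      _ = l ^ 2 * ‖x - x₀‖ ^ 2 := by rw [mem_sphere_iff_norm.1 hx]; field_simp
      _ ≤ Φ x := h.mul_sq_norm_le x
  rw [Pi.add_apply, spreadBarrier, decayBarrier_of_le hout]
  linarith

end IsDistSqProfile

/-- A gap `μ` between `u` and `M` on the ball of radius `σ` about `x₀` becomes, after a time between
`σ²` and `2 σ²` and within `[t₁, t₂]`, a gap `c μ` on the ball of radius `2 σ`. -/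
def SpreadsGap (u : En n × ℝ → ℝ) (M c σ t₁ t₂ : ℝ) (x₀ : En n) : Prop :=
  ∀ ⦃τ₁ τ₂ μ : ℝ⦄, t₁ ≤ τ₁ → τ₂ ≤ t₂ → τ₂ - τ₁ ∈ Icc (σ ^ 2) (2 * σ ^ 2) → 0 < μ →
    (∀ x ∈ ball x₀ σ, u (x, τ₁) ≤ M - μ) → ∀ x ∈ ball x₀ (2 * σ), u (x, τ₂) ≤ M - c * μ

theorem IsSubsolution.exists_spreadsGap [NeZero n] {ν l : ℝ} (hν : 0 < ν) (hl : 0 < l)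
    (hl1 : l ≤ 1) (S : ℝ) :
    ∃ c ∈ Ioo (0 : ℝ) 1, ∃ ε > 0, ∀ {u : En n × ℝ → ℝ} {g g₁ g₂ Φ : En n → ℝ} {Φ' : En n → En n}
      {Φ'' : En n → En n →L[ℝ] En n} {x₀ y : En n} {r σ t₁ t₂ M : ℝ}, 0 < σ →
      ball x₀ (3 * σ / l) ⊆ ball y r → IsSubsolution ν S y r t₁ t₂ g (fun _ => 0) u →
      (∀ X ∈ closedCyl y r t₁ t₂, u X ≤ M) →
      IsDistSqProfile ν l x₀ g₁ Φ Φ' Φ'' → Measurable g₂ → (∀ x, 0 < g₂ x) →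
      (∀ x, g x ≤ g₁ x + g₂ x) →
      ∫⁻ x in ball x₀ (3 * σ / l), ENNReal.ofReal (g₂ x) ^ n ≤ ENNReal.ofReal (ε ^ n) →
      SpreadsGap u M c σ t₁ t₂ x₀ := by
  obtain ⟨C, hC, habp⟩ := exists_le_mul_of_boundary_nonpos (n := n) hν S
  obtain ⟨p, hp⟩ := exists_nat_ge
    ((27 + 3 * (2 * n * ν) + 6 * (4 * l ^ 2 / ν)) ^ 2 / (96 * (4 * l ^ 2 / ν)))
  replace hp : (27 + 3 * (2 * n * ν) + 6 * (4 * l ^ 2 / ν)) ^ 2 ≤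
      96 * (4 * l ^ 2 / ν) * (p + 3) := by
    rw [div_le_iff₀' (by positivity)] at hp
    exact hp.trans (by gcongr; linarith)
  set c := (l ^ 2 / 9) ^ p * (5 / 9) ^ 3 with hc
  have hc0 : 0 < c := by positivity
  have hc1 : c ≤ 1 := mul_le_one₀
    (pow_le_one₀ (by positivity) (by linarith [pow_le_one₀ (n := 2) hl.le hl1])) (by positivity)
    (by norm_num)
  refine ⟨c / 2, ⟨by positivity, by linarith⟩, c * l ^ 2 / (36 * C), by positivity, ?_⟩
  intro u g g₁ g₂ Φ Φ' Φ'' x₀ y r σ s₁ s₂ M hσ hball hu hM hΦ hg₂m hg₂ hg hg₂int t₁ t₂ μ hs₁ hs₂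
    ht hμ hgap x hx
  have hR : 3 * σ / l ≠ 0 := by positivity
  have ht₁₂ : t₁ < t₂ := by linarith [ht.1, sq_pos_of_pos hσ]
  replace hu := hu.mono hR hball hs₁ hs₂
  replace hM : ∀ X ∈ closedCyl x₀ (3 * σ / l) t₁ t₂, u X ≤ M := fun X hX => hM X
    ⟨closedBall_subset_closedBall_of_ball_subset hR hball hX.1, Icc_subset_Icc hs₁ hs₂ hX.2⟩
  have hxR : x ∈ closedBall x₀ (3 * σ / l) :=
    ball_subset_closedBall (ball_subset_ball (by rw [le_div_iff₀ hl]; nlinarith) hx)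
  have hmax := habp (by positivity)
    (hΦ.isSubsolution_add_spreadBarrier (M := M) hν hl hl1 hσ ht hμ.le hp hu (fun x => (hg₂ x).le)
      hg) (by fun_prop) (fun x => mul_pos (by positivity) (hg₂ x))
    (fun x hx => hΦ.add_spreadBarrier_initial_nonpos hl hσ hμ.le
      (hM (x, t₁) ⟨hx, left_mem_Icc.2 ht₁₂.le⟩) (hgap x))
    (fun x hx t ht => hΦ.add_spreadBarrier_lateral_nonpos hl hl1 hσ ht hx
      (hM (x, t) ⟨sphere_subset_closedBall hx, ht⟩))
    (by positivity) (lintegral_ofReal_const_mul_pow_le (by positivity) hg₂m n hg₂int) (x, t₂)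
    ⟨hxR, right_mem_Icc.2 ht₁₂.le⟩
  have hfinal := hΦ.le_decayBarrier_final (l := l) (p := p) (M := M) hμ.le hσ
    (growingLevel_right (l := l) ht₁₂) hx
  have hloss : C * (3 * σ / l) * (μ * (6 / (l * σ)) * (c * l ^ 2 / (36 * C))) = c / 2 * μ := by
    field_simp
    ring
  rw [hloss, Pi.add_apply, spreadBarrier] at hmax
  rw [← hc] at hfinal
  linarith

section Chain

variable {u : En n × ℝ → ℝ} {M c σ t₁ t₂ : ℝ} {x₀ : En n}

lemma SpreadsGap.mono {s₁ s₂ : ℝ} (h : SpreadsGap u M c σ t₁ t₂ x₀) (h₁ : t₁ ≤ s₁) (h₂ : s₂ ≤ t₂) :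
    SpreadsGap u M c σ s₁ s₂ x₀ :=
  fun _ _ _ hτ₁ hτ₂ => h (h₁.trans hτ₁) (hτ₂.trans h₂)

lemma exists_natCast_div_mem_Icc {D q : ℝ} {K : ℕ} (hq : 0 < q) (hD : q ≤ D) (hK : D ≤ K * q) :
    ∃ k : ℕ, 0 < k ∧ k ≤ K ∧ D / k ∈ Icc q (2 * q) := by
  have hone : 1 ≤ D / q := (one_le_div hq).2 hD
  have hk : 0 < ⌊D / q⌋₊ := Nat.floor_pos.2 hone
  have hk1 : (1 : ℝ) ≤ ⌊D / q⌋₊ := by exact_mod_cast hk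
  have hle : ⌊D / q⌋₊ * q ≤ D := (le_div_iff₀ hq).1 (Nat.floor_le (zero_le_one.trans hone))
  have hlt : D < (⌊D / q⌋₊ + 1) * q := (div_lt_iff₀ hq).1 (Nat.lt_floor_add_one _)
  refine ⟨⌊D / q⌋₊, hk, Nat.floor_le_of_le ((div_le_iff₀ hq).2 hK), ?_, ?_⟩
  · rw [le_div_iff₀ (by positivity)]
    linarith
  · rw [div_le_iff₀ (by positivity)]
    nlinarith

/-- Divide `[t₁, t₂]` into `k ≤ K` steps of length about `σ²`; during each of them the curve moves
by at most `σ`. -/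
theorem SpreadsGap.along_curve {γ : ℝ → En n} {L : NNReal} {K : ℕ} {μ : ℝ}
    (h : ∀ a ∈ Icc (0 : ℝ) 1, SpreadsGap u M c σ t₁ t₂ (γ a)) (hγ : LipschitzOnWith L γ (Icc 0 1))
    (hc : c ∈ Ioo (0 : ℝ) 1) (hσ : 0 < σ) (hσt : σ ^ 2 ≤ t₂ - t₁) (hL : 2 * L * σ ≤ t₂ - t₁)
    (hK : t₂ - t₁ ≤ K * σ ^ 2) (hμ : 0 < μ) (hgap : ∀ x ∈ ball (γ 0) σ, u (x, t₁) ≤ M - μ) :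
    ∀ x ∈ ball (γ 1) σ, u (x, t₂) ≤ M - c ^ K * μ := by
  obtain ⟨k, hk, hkK, hstep⟩ := exists_natCast_div_mem_Icc (by positivity) hσt hK
  have hk0 : (0 : ℝ) < k := by exact_mod_cast hk
  set T := (t₂ - t₁) / k
  have hkT : k * T = t₂ - t₁ := mul_div_cancel₀ _ hk0.ne'
  have hT0 : 0 < T := (by positivity : 0 < σ ^ 2).trans_le hstep.1
  have hLk : L / k ≤ σ := by
    rw [div_le_iff₀ hk0]
    refine le_of_mul_le_mul_right (a := 2 * σ) ?_ (by positivity)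
    linarith [mul_le_mul_of_nonneg_left hstep.2 hk0.le]
  have hmem : ∀ i : ℕ, i ≤ k → (i / k : ℝ) ∈ Icc (0 : ℝ) 1 := fun i hi =>
    ⟨by positivity, div_le_one_of_le₀ (by exact_mod_cast hi) hk0.le⟩
  have hgap_step : ∀ i : ℕ, i ≤ k →
      ∀ x ∈ ball (γ (i / k)) σ, u (x, t₁ + i * T) ≤ M - c ^ i * μ := by
    intro i
    induction i with
    | zero => simpa using hgap
    | succ i ih =>
      intro hi x hx
      have hi' : ((i + 1 : ℕ) : ℝ) * T ≤ k * T := by gcongr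
      have hmove : dist (γ ((i + 1 : ℕ) / k)) (γ (i / k)) ≤ σ := by
        refine (hγ.dist_le_mul _ (hmem _ hi) _ (hmem i (by omega))).trans ?_
        have hdist : dist ((i + 1 : ℕ) / k : ℝ) (i / k) = 1 / k := by
          rw [Real.dist_eq, ← sub_div, Nat.cast_succ, add_sub_cancel_left,
            abs_of_pos (by positivity)]
        rwa [hdist, mul_one_div]
      have hx' : x ∈ ball (γ (i / k)) (2 * σ) := by
        rw [mem_ball] at hx ⊢
        linarith [dist_triangle x (γ ((i + 1 : ℕ) / k)) (γ (i / k))]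
      have hspread := h _ (hmem i (by omega)) (τ₁ := t₁ + i * T) (τ₂ := t₁ + (i + 1 : ℕ) * T)
        (le_add_of_nonneg_right (by positivity)) (by linarith)
        (by push_cast; convert hstep using 1; ring) (mul_pos (pow_pos hc.1 i) hμ)
        (ih (by omega)) x hx'
      rwa [← mul_assoc, ← pow_succ'] at hspread
  intro x hx
  have hend := hgap_step k le_rfl x (by rwa [div_self hk0.ne'])
  rw [hkT, add_sub_cancel] at hend
  refine hend.trans (sub_le_sub_left ?_ M)
  gcongr 1
  exact pow_le_pow_of_le_one hc.1.le hc.2.le hkK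

end Chain

/-! ### Decay at the centre of a cylinder with lateral gap -/

lemma isDistSqProfile_sq_norm {ν : ℝ} (hν : 0 ≤ ν) (x₀ : En n) :
    IsDistSqProfile ν 1 x₀ (fun _ => 0) (fun x => ‖x - x₀‖ ^ 2) (fun x => (2 : ℝ) • (x - x₀))
      fun _ => (2 : ℝ) • ContinuousLinearMap.id ℝ (En n) where
  hasGradientAt x := by
    rw [hasGradientAt_iff_hasFDerivAt]
    refine ((hasFDerivAt_id x).sub_const x₀).norm_sq.congr_fderiv ?_
    ext v
    simp
  hasFDerivAt x := ((hasFDerivAt_id x).sub_const x₀).const_smul (2 : ℝ)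
  mul_sq_norm_le x := by simp
  le_sq_norm x := le_rfl
  sq_norm_grad_le x := by rw [norm_smul, mul_pow]; norm_num
  le_sq_norm_grad x := by rw [norm_smul, mul_pow]; norm_num
  hess_add_drift_le x A hA :=
    calc ∑ i, ∑ j, A i j * ((2 : ℝ) • ContinuousLinearMap.id ℝ (En n))
            (EuclideanSpace.single i 1) j + 0 * ‖(2 : ℝ) • (x - x₀)‖
        = ∑ i, A i i * 2 := by simp
      _ ≤ ∑ _i : Fin n, ν * 2 := by
          gcongr with i
          exact le_of_sq_le_sq (hA.sq_apply_le i i) hν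
      _ = 2 * n * ν := by
          rw [Finset.sum_const, Finset.card_univ, Fintype.card_fin, nsmul_eq_mul]
          ring

lemma isDiff21_comp_snd {φ : ℝ → ℝ} (hφ : Differentiable ℝ φ) (D : Set (En n × ℝ)) :
    IsDiff21 (fun X => φ X.2) D where
  diff_t X _ := hφ X.2
  diff_x X _ := differentiableAt_const (φ X.2)
  diff_xx j X _ := by simp [Dx]

lemma isBarrierAt_comp_snd {ν β c : ℝ} {φ : ℝ → ℝ} {X : En n × ℝ} (hφ : HasDerivAt φ c X.2) :
    IsBarrierAt ν β c (fun X => φ X.2) X := by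
  have hgrad : spatialGrad (fun X : En n × ℝ => φ X.2) X = 0 := by
    ext i
    simp [spatialGrad, Dx]
  have hDt : Dt (fun X : En n × ℝ => φ X.2) X = c := hφ.deriv
  intro A _
  simp [hgrad, hDt, Dxx, Dx]

lemma lintegral_ball_ofReal_const_pow_le [NeZero n] (x₀ : En n) {R κ : ℝ} (hR : 0 < R)
    (hκ : 0 ≤ κ) : ∫⁻ _ in ball x₀ R, ENNReal.ofReal κ ^ n ≤
      ENNReal.ofReal ((κ * (R * (volume.real (ball (0 : En n) 1) + 1))) ^ n) := by
  set V := volume.real (ball (0 : En n) 1) with hV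
  have hV0 : 0 ≤ V := measureReal_nonneg
  have hVn : V ≤ (V + 1) ^ n :=
    (le_add_of_nonneg_right zero_le_one).trans (le_self_pow₀ (by linarith) (NeZero.ne n))
  calc ∫⁻ _ in ball x₀ R, ENNReal.ofReal κ ^ n
      = ENNReal.ofReal (κ ^ n * (R ^ n * V)) := by
        rw [setLIntegral_const, addHaar_ball_of_pos _ _ hR, finrank_euclideanSpace_fin,
          ← ofReal_measureReal measure_ball_lt_top.ne, ← hV, ← ENNReal.ofReal_pow hκ,
          ← ENNReal.ofReal_mul (by positivity), ← ENNReal.ofReal_mul (by positivity)]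
    _ ≤ ENNReal.ofReal (κ ^ n * (R ^ n * (V + 1) ^ n)) := by gcongr
    _ = _ := by rw [mul_pow, mul_pow]

theorem IsSubsolution.exists_center_le_of_lateral_le [NeZero n] {ν : ℝ} (hν : 0 < ν) (S : ℝ) :
    ∃ C > 0, ∀ {u : En n × ℝ → ℝ} {g : En n → ℝ} {y : En n} {R s h M m : ℝ}, 0 < R → 0 < h →
      C * R ^ 2 ≤ h → 0 < m → IsSubsolution ν S y R (s - h) s g (fun _ => 0) u →
      (∀ X ∈ closedCyl y R (s - h) s, u X ≤ M) →
      (∀ x ∈ sphere y R, ∀ t ∈ Icc (s - h) s, u (x, t) ≤ M - m) → u (y, s) ≤ M - m / 2 := by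
  obtain ⟨C, hC, habp⟩ := exists_le_mul_of_boundary_nonpos (n := n) hν S
  set V := volume.real (ball (0 : En n) 1)
  have : 0 ≤ V := measureReal_nonneg
  refine ⟨2 * C * (V + 1), by positivity, fun {u g y R s h M m} hR hh hCR hm hu hM hside => ?_⟩
  set φ : ℝ → ℝ := fun t => -(M - m) - m / h * (s - t) with hφ
  have hφ' : ∀ t, HasDerivAt φ (m / h) t := fun t =>
    ((((hasDerivAt_id t).const_sub s).const_mul (m / h)).const_sub (-(M - m))).congr_deriv
      (by simp)
  have hsub : IsSubsolution ν S y R (s - h) s g (fun _ => m / h) (u + fun X => φ X.2) :=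
    hu.add_barrier (Continuous.continuousOn (by fun_prop))
      (isDiff21_comp_snd (fun t => (hφ' t).differentiableAt) _)
      fun X _ => isBarrierAt_comp_snd (hφ' X.2)
  have hinitial : ∀ x ∈ closedBall y R, u (x, s - h) + φ (s - h) ≤ 0 := by
    intro x hx
    have hφ₀ : φ (s - h) = -M := by
      simp only [hφ]
      field_simp
      ring
    linarith [hM (x, s - h) ⟨hx, le_rfl, by linarith⟩]
  have hlateral : ∀ x ∈ sphere y R, ∀ t ∈ Icc (s - h) s, u (x, t) + φ t ≤ 0 := by
    intro x hx t ht
    have hdecr : 0 ≤ m / h * (s - t) := mul_nonneg (by positivity) (sub_nonneg.2 ht.2)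
    simp only [hφ]
    linarith [hside x hx t ht]
  have hcenter : u (y, s) + φ s ≤ C * R * (m / h * (R * (V + 1))) :=
    habp hR hsub measurable_const (fun _ => by positivity) hinitial hlateral (by positivity)
      (lintegral_ball_ofReal_const_pow_le y hR (by positivity)) (y, s)
      ⟨mem_closedBall_self hR.le, by linarith, le_rfl⟩
  have hφs : φ s = -(M - m) := by simp [hφ]
  have herror : C * R * (m / h * (R * (V + 1))) ≤ m / 2 :=
    calc C * R * (m / h * (R * (V + 1))) = m / 2 * (2 * C * (V + 1) * R ^ 2 / h) := by field_simp
      _ ≤ m / 2 := mul_le_of_le_one_right (by positivity) ((div_le_one hh).2 hCR)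
  linarith [hcenter, hφs, herror]

/-! ### Paths along which the drift is small -/

section Geometry

variable {E : Type*} [NormedAddCommGroup E] [InnerProductSpace ℝ E]

lemma exists_norm_eq_one_eq_norm_smul {V : Type*} [NormedAddCommGroup V] [NormedSpace ℝ V]
    [Nontrivial V] (v : V) : ∃ e : V, ‖e‖ = 1 ∧ v = ‖v‖ • e := by
  rcases eq_or_ne v 0 with rfl | hv
  · obtain ⟨e, he⟩ := exists_norm_eq V zero_le_one
    exact ⟨e, he, by simp⟩
  · exact ⟨‖v‖⁻¹ • v, norm_smul_inv_norm hv, (smul_inv_smul₀ (norm_ne_zero_iff.2 hv) v).symm⟩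

lemma nontrivial_orthogonal_span_singleton (hE : 1 < Module.rank ℝ E) (v : E) :
    Nontrivial (ℝ ∙ v)ᗮ := by
  rw [Submodule.nontrivial_iff_ne_bot, Ne, Submodule.orthogonal_eq_bot_iff]
  intro htop
  refine hE.not_ge ?_
  rw [← rank_top, ← htop]
  exact (rank_span_le _).trans (by simp)

lemma exists_norm_eq_one_inner_eq_zero (hE : 1 < Module.rank ℝ E) (v : E) :
    ∃ e : E, ‖e‖ = 1 ∧ ⟪v, e⟫ = 0 := by
  have := nontrivial_orthogonal_span_singleton hE v
  obtain ⟨⟨e, he⟩, hnorm, -⟩ := exists_norm_eq_one_eq_norm_smul (0 : (ℝ ∙ v)ᗮ)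
  exact ⟨e, hnorm, Submodule.mem_orthogonal_singleton_iff_inner_right.1 he⟩

lemma norm_cos_smul_add_sin_smul {v e : E} (hve : ⟪v, e⟫ = 0) (hnorm : ‖e‖ = ‖v‖) (t : ℝ) :
    ‖Real.cos t • v + Real.sin t • e‖ = ‖v‖ := by
  refine (sq_eq_sq₀ (norm_nonneg _) (norm_nonneg _)).1 ?_
  rw [norm_add_sq_real, inner_smul_left, inner_smul_right, hve, norm_smul, norm_smul, hnorm,
    mul_pow, mul_pow, Real.norm_eq_abs, Real.norm_eq_abs, sq_abs, sq_abs]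
  linear_combination ‖v‖ ^ 2 * Real.cos_sq_add_sin_sq t

lemma exists_eq_cos_smul_add_sin_smul (hE : 1 < Module.rank ℝ E) {v v' : E} (h : ‖v‖ = ‖v'‖) :
    ∃ e, ⟪v, e⟫ = 0 ∧ ‖e‖ = ‖v‖ ∧ v' = Real.cos (InnerProductGeometry.angle v v') • v +
      Real.sin (InnerProductGeometry.angle v v') • e := by
  set φ := InnerProductGeometry.angle v v'
  have hinner : Real.cos φ * ‖v‖ ^ 2 = ⟪v, v'⟫ := by
    rw [← InnerProductGeometry.cos_angle_mul_norm_mul_norm, ← h, sq]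
  set w := v' - Real.cos φ • v with hw
  have hvw : ⟪v, w⟫ = 0 := by
    rw [hw, inner_sub_right, inner_smul_right, real_inner_self_eq_norm_sq, hinner, sub_self]
  have hnorm : ‖w‖ = Real.sin φ * ‖v‖ := by
    refine (sq_eq_sq₀ (norm_nonneg _) (mul_nonneg (InnerProductGeometry.sin_angle_nonneg v v')
      (norm_nonneg _))).1 ?_
    rw [hw, norm_sub_sq_real, inner_smul_right, real_inner_comm, ← hinner, norm_smul, ← h,
      mul_pow, mul_pow, Real.norm_eq_abs, sq_abs]
    linear_combination -‖v‖ ^ 2 * Real.cos_sq_add_sin_sq φ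
  have := nontrivial_orthogonal_span_singleton hE v
  obtain ⟨⟨e, he⟩, he1, hwe⟩ := exists_norm_eq_one_eq_norm_smul
    (⟨w, Submodule.mem_orthogonal_singleton_iff_inner_right.2 hvw⟩ : (ℝ ∙ v)ᗮ)
  replace he1 : ‖e‖ = 1 := he1
  replace hwe : w = ‖w‖ • e := congrArg Subtype.val hwe
  refine ⟨‖v‖ • e, ?_, by rw [norm_smul, he1, norm_norm, mul_one], ?_⟩
  · rw [inner_smul_right, Submodule.mem_orthogonal_singleton_iff_inner_right.1 he, mul_zero]
  · rw [smul_smul, ← hnorm, ← hwe, hw, add_sub_cancel]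

lemma exists_lipschitzWith_arc (hE : 1 < Module.rank ℝ E) {c x y : E} {R : ℝ}
    (hx : x ∈ sphere c R) (hy : y ∈ sphere c R) :
    ∃ γ : ℝ → E, LipschitzWith (4 * R.toNNReal) γ ∧ (∀ t, γ t ∈ sphere c R) ∧
      γ 0 = x ∧ γ 1 = y := by
  rw [mem_sphere_iff_norm] at hx hy
  obtain ⟨e, hxe, he, hye⟩ := exists_eq_cos_smul_add_sin_smul hE (hx.trans hy.symm)
  set φ := InnerProductGeometry.angle (x - c) (y - c)
  have hderiv : ∀ t, HasDerivAt
      (fun t : ℝ => c + (Real.cos (t * φ) • (x - c) + Real.sin (t * φ) • e))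
      (φ • (Real.cos (t * φ) • e + Real.sin (t * φ) • -(x - c))) t := by
    intro t
    have hφ : HasDerivAt (fun t : ℝ => t * φ) φ t := hasDerivAt_mul_const φ
    refine ((hφ.cos.smul_const (x - c)).add (hφ.sin.smul_const e)).const_add c |>.congr_deriv ?_
    module
  refine ⟨fun t => c + (Real.cos (t * φ) • (x - c) + Real.sin (t * φ) • e),
    lipschitzWith_of_nnnorm_deriv_le (fun t => (hderiv t).differentiableAt) fun t => ?_,
    fun t => ?_, by simp, by simp [← hye]⟩
  · rw [(hderiv t).deriv, ← NNReal.coe_le_coe, coe_nnnorm, norm_smul, norm_cos_smul_add_sin_smul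
      (by rw [inner_neg_right, real_inner_comm, hxe, neg_zero]) (by rw [norm_neg, he]), he, hx,
      NNReal.coe_mul, Real.coe_toNNReal R (hx ▸ norm_nonneg _), Real.norm_eq_abs,
      abs_of_nonneg (InnerProductGeometry.angle_nonneg _ _)]
    gcongr
    · exact hx ▸ norm_nonneg _
    · exact (InnerProductGeometry.angle_le_pi _ _).trans Real.pi_le_four
  · rw [mem_sphere_iff_norm, add_sub_cancel_left, norm_cos_smul_add_sin_smul hxe he, hx]

lemma exists_mem_sphere_inner_eq (hE : 1 < Module.rank ℝ E) (c : E) {e : E} (he : ‖e‖ = 1)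
    {R s : ℝ} (hR : 0 ≤ R) (hs : |s| ≤ R) : ∃ q ∈ sphere c R, ⟪e, q - c⟫ = s := by
  obtain ⟨e', he', hee'⟩ := exists_norm_eq_one_inner_eq_zero hE e
  have hs2 : 0 ≤ R ^ 2 - s ^ 2 := sub_nonneg.2 (sq_le_sq.2 (hs.trans (le_abs_self R)))
  refine ⟨c + (s • e + √(R ^ 2 - s ^ 2) • e'), ?_, ?_⟩
  · rw [mem_sphere_iff_norm, add_sub_cancel_left]
    refine (sq_eq_sq₀ (norm_nonneg _) hR).1 ?_
    rw [norm_add_sq_real, inner_smul_left, inner_smul_right, hee', norm_smul, norm_smul, he, he',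
      mul_one, mul_one, Real.norm_eq_abs, Real.norm_eq_abs, sq_abs, sq_abs, Real.sq_sqrt hs2]
    ring
  · rw [add_sub_cancel_left, inner_add_right, inner_smul_right, inner_smul_right, hee',
      real_inner_self_eq_norm_sq, he]
    ring

end Geometry

lemma convex_setOf_ball_subset {V : Type*} [SeminormedAddCommGroup V] [NormedSpace ℝ V] {s : Set V}
    (hs : Convex ℝ s) (δ : ℝ) : Convex ℝ {x | ball x δ ⊆ s} := by
  intro x hx y hy a b ha hb hab w hw
  rw [mem_ball_iff_norm] at hw
  have hshift : ∀ v, v + (w - (a • x + b • y)) ∈ ball v δ := fun v => by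
    rwa [mem_ball_iff_norm, add_sub_cancel_left]
  convert hs (hx (hshift x)) (hy (hshift y)) ha hb hab using 1
  linear_combination (norm := module) -hab • (w - (a • x + b • y))

/-- Cut the range `[a, a + h]` of `f` into `N` layers of half-width `h / (2 N) ≥ δ`; `F` has a
small integral over at least one of them. -/
lemma exists_level_setLIntegral_ball_le {α : Type*} [PseudoMetricSpace α] [MeasurableSpace α]
    [OpensMeasurableSpace α] {μ : Measure α} {D : Set α} (hD : MeasurableSet D) {F : α → ℝ≥0∞}
    {S e h δ : ℝ} {N : ℕ} (hN : 0 < N) (hS : S ≤ N * e) (hF : ∫⁻ x in D, F x ∂μ ≤ .ofReal S)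
    (hh : 0 ≤ h) (hδ : 2 * N * δ ≤ h) {f : α → ℝ} (hf : LipschitzWith 1 f) (a : ℝ) :
    ∃ c ∈ Icc a (a + h), ∀ x, f x = c → ball x δ ⊆ D → ∫⁻ y in ball x δ, F y ∂μ ≤ .ofReal e := by
  have hN0 : (0 : ℝ) < N := by exact_mod_cast hN
  set w := h / (2 * N)
  have hw0 : 0 ≤ w := by positivity
  have hNw : 2 * N * w = h := mul_div_cancel₀ _ (by positivity)
  have hδw : δ ≤ w := (le_div_iff₀ (by positivity)).2 (by linarith)
  set c : ℕ → ℝ := fun j => a + (2 * j + 1) * w with hc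
  have hdisj : (Finset.range N : Set ℕ).PairwiseDisjoint fun j => D ∩ f ⁻¹' ball (c j) w := by
    intro i _ j _ hij
    refine ((ball_disjoint_ball ?_).preimage f).mono inter_subset_right inter_subset_right
    have hone : (1 : ℝ) ≤ |(i : ℝ) - j| := by
      exact_mod_cast Int.one_le_abs (sub_ne_zero.2 (Nat.cast_injective.ne hij) : (i : ℤ) - j ≠ 0)
    calc w + w ≤ |(i : ℝ) - j| * (2 * w) := by nlinarith
      _ = dist (c i) (c j) := by
        have hsub : c i - c j = (i - j) * (2 * w) := by ring
        rw [Real.dist_eq, hsub, abs_mul, abs_of_nonneg (by positivity : 0 ≤ 2 * w)]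
  obtain ⟨j, hj, hjS⟩ := exists_card_mul_setLIntegral_le (μ := μ)
    (Finset.nonempty_range_iff.2 hN.ne') (E := fun j => D ∩ f ⁻¹' ball (c j) w)
    (fun j _ => hD.inter (hf.continuous.measurable measurableSet_ball)) hdisj
    (fun _ _ => inter_subset_left) F
  have hjN : (j : ℝ) + 1 ≤ N := by exact_mod_cast Finset.mem_range.1 hj
  refine ⟨c j, ⟨le_add_of_nonneg_right (by positivity), ?_⟩, fun x hx hxD => ?_⟩
  · have : (2 * j + 1) * w ≤ 2 * N * w := by gcongr; linarith
    simp only [hc]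
    linarith
  · have hlayer : ball x δ ⊆ D ∩ f ⁻¹' ball (c j) w := fun y hy => by
      refine ⟨hxD hy, mem_ball.2 ?_⟩
      rw [← hx]
      exact ((hf.dist_le_mul y x).trans_eq (one_mul _)).trans_lt ((mem_ball.1 hy).trans_le hδw)
    refine (lintegral_mono_set hlayer).trans ?_
    rw [Finset.card_range] at hjS
    refine (ENNReal.mul_le_mul_iff_right (a := N) (by exact_mod_cast hN.ne')
      (natCast_ne_top N)).1 (hjS.trans (hF.trans ?_))
    rw [← ofReal_natCast, ← ofReal_mul hN0.le]
    exact ofReal_le_ofReal hS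

/-- The sphere is a level set of the distance to `y`; the segment lies in a level set of a linear
form which takes the same value at `y` and at `z`. -/
lemma exists_segment_sphere_setLIntegral_ball_le {E : Type*} [NormedAddCommGroup E]
    [InnerProductSpace ℝ E] [MeasurableSpace E] [OpensMeasurableSpace E]
    (hE : 1 < Module.rank ℝ E) {μ : Measure E} {D : Set E} (hD : MeasurableSet D) {F : E → ℝ≥0∞}
    {S e h δ : ℝ} {N : ℕ} (hN : 0 < N) (hS : S ≤ N * e) (hF : ∫⁻ x in D, F x ∂μ ≤ .ofReal S)
    (hh : 0 ≤ h) (hδ : 2 * N * δ ≤ h) (y z : E) :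
    ∃ R ∈ Icc h (2 * h), ∃ q₀ ∈ closedBall z h, ∃ q ∈ sphere y R,
      ∀ p ∈ segment ℝ q₀ q ∪ sphere y R, ball p δ ⊆ D → ∫⁻ x in ball p δ, F x ∂μ ≤ .ofReal e := by
  obtain ⟨R, hR, hsphere⟩ := exists_level_setLIntegral_ball_le hD hN hS hF hh hδ
    (LipschitzWith.dist_left y) h
  obtain ⟨e', he', hze'⟩ := exists_norm_eq_one_inner_eq_zero hE (z - y)
  have hlip : LipschitzWith 1 fun x => ⟪e', x - y⟫ := LipschitzWith.of_dist_le_mul fun x x' => by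
    rw [Real.dist_eq, ← inner_sub_right, sub_sub_sub_cancel_right, NNReal.coe_one, dist_eq_norm,
      ← he']
    exact abs_real_inner_le_norm e' (x - x')
  obtain ⟨s, hs, hslab⟩ := exists_level_setLIntegral_ball_le hD hN hS hF hh hδ hlip 0
  rw [zero_add] at hs
  obtain ⟨q, hq, hqs⟩ := exists_mem_sphere_inner_eq hE y he' (hh.trans hR.1)
    ((abs_of_nonneg hs.1).trans_le (hs.2.trans hR.1))
  refine ⟨R, ⟨hR.1, hR.2.trans_eq (two_mul h).symm⟩, z + s • e', ?_, q, hq, ?_⟩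
  · rw [mem_closedBall_iff_norm, add_sub_cancel_left, norm_smul, he', mul_one, Real.norm_eq_abs,
      abs_of_nonneg hs.1]
    exact hs.2
  · rintro p (⟨a, b, -, -, hab, rfl⟩ | hp)
    · refine hslab _ ?_
      have hq₀ : ⟪e', z + s • e' - y⟫ = s := by
        rw [add_sub_right_comm, inner_add_right, real_inner_comm, hze', inner_smul_right,
          real_inner_self_eq_norm_sq, he']
        ring
      have hsplit : a • (z + s • e') + b • q - y = a • (z + s • e' - y) + b • (q - y) := by
        linear_combination (norm := module) hab • y
      rw [hsplit, inner_add_right, inner_smul_right, inner_smul_right, hq₀, hqs, ← add_mul, hab,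
        one_mul]
    · exact hsphere p (mem_sphere.1 hp)

lemma exists_segment_sphere_ball_subset_setLIntegral_le {E : Type*} [NormedAddCommGroup E]
    [InnerProductSpace ℝ E] [MeasurableSpace E] [OpensMeasurableSpace E]
    (hE : 1 < Module.rank ℝ E) {μ : Measure E} {F : E → ℝ≥0∞} {S e h r δ : ℝ} {N : ℕ} {y z : E}
    (hN : 0 < N) (hS : S ≤ N * e) (hF : ∫⁻ x in ball y r, F x ∂μ ≤ .ofReal S) (hδ0 : 0 ≤ δ)
    (hδ : 2 * N * δ ≤ h) (hr : 4 * h ≤ r) (hz : ball z (2 * h) ⊆ ball y r) :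
    ∃ R ∈ Icc h (2 * h), ∃ q₀ ∈ closedBall z h, ∃ q ∈ sphere y R,
      ∀ p ∈ segment ℝ q₀ q ∪ sphere y R,
        ball p δ ⊆ ball y r ∧ ∫⁻ x in ball p δ, F x ∂μ ≤ .ofReal e := by
  have hN1 : (1 : ℝ) ≤ N := by exact_mod_cast hN
  have hδh : 2 * δ ≤ h := by nlinarith
  obtain ⟨R, hR, q₀, hq₀, q, hq, hint⟩ := exists_segment_sphere_setLIntegral_ball_le hE
    measurableSet_ball hN hS hF (by linarith) hδ y z
  have hsphere : ∀ p ∈ sphere y R, ball p δ ⊆ ball y r := fun p hp =>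
    ball_subset_ball' (by linarith [mem_sphere.1 hp, hR.2])
  have hsegment : ∀ p ∈ segment ℝ q₀ q, ball p δ ⊆ ball y r := fun p hp =>
    (convex_setOf_ball_subset (convex_ball y r) δ).segment_subset
      ((ball_subset_ball' (by linarith [mem_closedBall.1 hq₀])).trans hz) (hsphere q hq) hp
  refine ⟨R, hR, q₀, hq₀, q, hq, fun p hp => ?_⟩
  have hball : ball p δ ⊆ ball y r := hp.elim (hsegment p) (hsphere p)
  exact ⟨hball, hint p hp hball⟩

/-! ### Growth in dimension at least two -/

/-- `β` is a constant in the growth theorem for subsolutions: if `u ≤ M` on a cylinder of radius `r`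
and `u ≤ 0` on a disk of radius `θ r` at a time which precedes the top of the cylinder by at least
`κ r²`, then `u ≤ β M` at the centre of the top. -/
def IsGrowthConstant (n : ℕ) (ν S θ κ β : ℝ) : Prop :=
  ∀ ⦃u : En n × ℝ → ℝ⦄ ⦃g : En n → ℝ⦄ ⦃y z : En n⦄ ⦃s r τ M : ℝ⦄, 0 < r →
    ball z (θ * r) ⊆ ball y r → s - r ^ 2 ≤ τ → τ ≤ s - κ * r ^ 2 →
    IsSubsolution ν S y r (s - r ^ 2) s g (fun _ => 0) u →
    (∀ X ∈ closedCyl y r (s - r ^ 2) s, u X ≤ M) → 0 < M →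
    (∀ x ∈ ball z (θ * r), u (x, τ) ≤ 0) → u (y, s) ≤ β * M

theorem IsSubsolution.exists_spreadsGap_of_lintegral_drift_le [NeZero n] {ν : ℝ} (hν : 0 < ν)
    (S : ℝ) : ∃ c ∈ Ioo (0 : ℝ) 1, ∃ ε > 0, ∀ {u : En n × ℝ → ℝ} {g : En n → ℝ} {x₀ y : En n}
      {r σ t₁ t₂ M : ℝ}, 0 < σ → ball x₀ (3 * σ) ⊆ ball y r →
      IsSubsolution ν S y r t₁ t₂ g (fun _ => 0) u → (∀ X ∈ closedCyl y r t₁ t₂, u X ≤ M) →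
      ∫⁻ x in ball x₀ (3 * σ), ENNReal.ofReal (g x) ^ n ≤ ENNReal.ofReal (ε ^ n) →
      SpreadsGap u M c σ t₁ t₂ x₀ := by
  obtain ⟨c, hc, ε, hε, h⟩ := IsSubsolution.exists_spreadsGap (n := n) hν one_pos le_rfl S
  refine ⟨c, hc, ε, hε, fun {u g x₀ y r σ t₁ t₂ M} hσ hball hu huM hg => ?_⟩
  rw [← div_one (3 * σ)] at hball hg
  exact h hσ hball hu huM (isDistSqProfile_sq_norm hν.le x₀) hu.drift_measurable hu.drift_pos
    (fun x => (zero_add (g x)).ge) hg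

theorem SpreadsGap.le_on_sphere {u : En n × ℝ → ℝ} {M c σ t₁ t₂ R μ : ℝ} {q₀ q y : En n} {K : ℕ}
    (hn : 1 < Module.rank ℝ (En n)) (hq : q ∈ sphere y R)
    (h : ∀ p ∈ segment ℝ q₀ q ∪ sphere y R, SpreadsGap u M c σ t₁ t₂ p) (hc : c ∈ Ioo (0 : ℝ) 1)
    (hσ : 0 < σ) (hσt : 2 * σ ^ 2 ≤ t₂ - t₁) (hdist : 4 * dist q₀ q * σ ≤ t₂ - t₁)
    (hR : 16 * R * σ ≤ t₂ - t₁) (hK : t₂ - t₁ ≤ 2 * (K * σ ^ 2)) (hμ : 0 < μ)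
    (hgap : ∀ x ∈ ball q₀ σ, u (x, t₁) ≤ M - μ) :
    ∀ x ∈ sphere y R, u (x, t₂) ≤ M - c ^ K * (c ^ K * μ) := by
  have hR0 : 0 ≤ R := nonneg_of_mem_sphere hq
  have ht : 0 ≤ t₂ - t₁ := (by positivity : 0 ≤ 2 * σ ^ 2).trans hσt
  obtain ⟨t, rfl⟩ : ∃ t, t₂ = t + (t - t₁) := ⟨(t₁ + t₂) / 2, by ring⟩
  have hmid : ∀ x ∈ ball q σ, u (x, t) ≤ M - c ^ K * μ := by
    rw [← AffineMap.lineMap_apply_one (k := ℝ) q₀ q]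
    refine SpreadsGap.along_curve (t₁ := t₁) (L := nndist q₀ q) (fun a ha => ?_)
      (lipschitzWith_lineMap q₀ q).lipschitzOnWith hc hσ (by linarith)
      (by rw [coe_nndist]; linarith) (by linarith) hμ (by rwa [AffineMap.lineMap_apply_zero])
    refine (h _ (.inl ?_)).mono le_rfl (by linarith)
    rw [segment_eq_image_lineMap]
    exact mem_image_of_mem _ ha
  intro x hx
  obtain ⟨γ, hγ, hγR, rfl, rfl⟩ := exists_lipschitzWith_arc hn hq hx
  refine SpreadsGap.along_curve (fun a _ => (h _ (.inr (hγR a))).mono (by linarith) le_rfl)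
    hγ.lipschitzOnWith hc hσ (by linarith) ?_ (by linarith) (mul_pos (pow_pos hc.1 K) hμ) hmid _
    (mem_ball_self hσ)
  rw [NNReal.coe_mul, NNReal.coe_ofNat, Real.coe_toNNReal R hR0]
  linarith

/-- The gap travels along a segment from the disk to a sphere about `y`, and then around that
sphere. -/
theorem IsSubsolution.exists_gap_on_sphere [NeZero n] (hn : 1 < Module.rank ℝ (En n)) {ν δ : ℝ}
    (hν : 0 < ν) (hδ : 0 < δ) (hδ1 : 4 * δ ≤ 1) (S : ℝ) :
    ∃ c ∈ Ioc (0 : ℝ) 1, ∀ {u : En n × ℝ → ℝ} {g : En n → ℝ} {y z : En n} {s r τ M : ℝ}, 0 < r →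
      ball z (2 * δ * r) ⊆ ball y r → s - τ ≤ r ^ 2 →
      IsSubsolution ν S y r τ s g (fun _ => 0) u → (∀ X ∈ closedCyl y r τ s, u X ≤ M) → 0 < M →
      (∀ x ∈ ball z (2 * δ * r), u (x, τ) ≤ 0) →
      ∃ R ∈ Icc (δ * r) (2 * (δ * r)), ∀ x ∈ sphere y R, ∀ t ∈ Icc (τ + δ * r ^ 2) s,
        u (x, t) ≤ M - c * M := by
  obtain ⟨c, hc, ε, hε, hspread⟩ :=
    IsSubsolution.exists_spreadsGap_of_lintegral_drift_le (n := n) hν S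
  obtain ⟨N, hN⟩ := exists_nat_gt (max 0 (S / ε ^ n))
  have hN0 : (0 : ℝ) < N := (le_max_left _ _).trans_lt hN
  have hSN : S ≤ N * ε ^ n :=
    ((div_lt_iff₀ (by positivity)).1 ((le_max_right _ _).trans_lt hN)).le
  have hN1 : (1 : ℝ) ≤ N := by exact_mod_cast hN0
  set σ := δ / (8 * N)
  have hσ0 : 0 < σ := by positivity
  have hσN : 8 * N * σ = δ := mul_div_cancel₀ _ (by positivity)
  have hσδ : 8 * σ ≤ δ := by nlinarith
  obtain ⟨K, hK⟩ := exists_nat_ge (1 / σ ^ 2)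
  replace hK : 1 ≤ K * σ ^ 2 := (div_le_iff₀ (by positivity)).1 hK
  have hcK : c ^ K ∈ Ioc (0 : ℝ) 1 := ⟨pow_pos hc.1 K, pow_le_one₀ hc.1.le hc.2.le⟩
  refine ⟨c ^ K * c ^ K, ⟨mul_pos hcK.1 hcK.1, mul_le_one₀ hcK.2 hcK.1.le hcK.2⟩,
    fun {u g y z s r τ M} hr hz hsτ hu huM hM hdisk => ?_⟩
  obtain ⟨R, hR, q₀, hq₀, q, hq, hpath⟩ := exists_segment_sphere_ball_subset_setLIntegral_le hn
    (by exact_mod_cast hN0) hSN hu.lintegral_drift_le (by positivity : 0 ≤ 3 * (σ * r))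
    (h := δ * r) (by nlinarith) (by nlinarith) (by rwa [← mul_assoc])
  have hRr : 2 * R ≤ r := by nlinarith [hR.2]
  have hqq : dist q₀ q ≤ 2 * r := by
    have hq₀y : dist q₀ y < r :=
      (hpath q₀ (.inl (left_mem_segment ℝ q₀ q))).1 (mem_ball_self (by positivity))
    linarith [dist_triangle_right q₀ q y, mem_sphere.1 hq]
  refine ⟨R, hR, fun x hx t ht => ?_⟩
  have hspreads : ∀ p ∈ segment ℝ q₀ q ∪ sphere y R, SpreadsGap u M c (σ * r) τ t p := fun p hp =>
    (hspread (by positivity) (hpath p hp).1 hu huM (hpath p hp).2).mono le_rfl ht.2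
  have hbudget : 8 * (σ * r ^ 2) ≤ t - τ := by nlinarith [ht.1, sq_nonneg r]
  rw [mul_assoc]
  refine SpreadsGap.le_on_sphere hn hq hspreads hc (by positivity) ?_ ?_ ?_ ?_ hM
    (fun x hx => (hdisk x (ball_subset_ball' ?_ hx)).trans_eq (sub_self M).symm) x hx
  · have : σ * (σ * r ^ 2) ≤ 1 * (σ * r ^ 2) := by gcongr; linarith
    nlinarith
  · have : 4 * dist q₀ q * (σ * r) ≤ 4 * (2 * r) * (σ * r) := by gcongr
    linarith
  · have : 8 * (2 * R) * (σ * r) ≤ 8 * r * (σ * r) := by gcongr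
    linarith
  · have : 1 * r ^ 2 ≤ K * σ ^ 2 * r ^ 2 := by gcongr
    linarith [ht.2, sq_nonneg r]
  · nlinarith [mem_closedBall.1 hq₀]

theorem exists_isGrowthConstant_of_two_le (hn : 2 ≤ n) {ν θ κ : ℝ} (hν : 0 < ν) (hθ : 0 < θ)
    (hκ : 0 < κ) (S : ℝ) : ∃ β ∈ Ioo (0 : ℝ) 1, IsGrowthConstant n ν S θ κ β := by
  have : NeZero n := ⟨by omega⟩
  have hrank : 1 < Module.rank ℝ (En n) := by
    rw [← Module.finrank_eq_rank, finrank_euclideanSpace_fin]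
    exact_mod_cast hn
  obtain ⟨C, hC, hcenter⟩ := IsSubsolution.exists_center_le_of_lateral_le (n := n) hν S
  obtain ⟨δ, hδ, hδ1, hδθ, hδκ, hδC⟩ :
      ∃ δ > 0, 4 * δ ≤ 1 ∧ 2 * δ ≤ θ ∧ 2 * δ ≤ κ ∧ C * (2 * δ) ≤ κ := by
    refine ⟨min (min 1 θ) (min κ (κ / C)) / 4, by positivity, ?_, ?_, ?_, ?_⟩
    · linarith [(min_le_left (min 1 θ) (min κ (κ / C))).trans (min_le_left 1 θ)]
    · linarith [(min_le_left (min 1 θ) (min κ (κ / C))).trans (min_le_right 1 θ)]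
    · linarith [(min_le_right (min 1 θ) (min κ (κ / C))).trans (min_le_left κ (κ / C))]
    · have := (min_le_right (min 1 θ) (min κ (κ / C))).trans (min_le_right κ (κ / C))
      rw [le_div_iff₀' hC] at this
      linarith
  obtain ⟨c, hc, hgap⟩ := IsSubsolution.exists_gap_on_sphere hrank hν hδ hδ1 S
  refine ⟨1 - c / 2, ⟨by linarith [hc.2], by linarith [hc.1]⟩, ?_⟩
  intro u g y z s r τ M hr hz hτ₁ hτ₂ hu huM hM hdisk
  have hdisk_sub : ball z (2 * δ * r) ⊆ ball z (θ * r) := ball_subset_ball (by gcongr)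
  obtain ⟨R, hR, hsphere⟩ := hgap hr (hdisk_sub.trans hz) (by linarith)
    (hu.mono hr.ne' Subset.rfl hτ₁ le_rfl) (fun X hX => huM X ⟨hX.1, hτ₁.trans hX.2.1, hX.2.2⟩) hM
    fun x hx => hdisk x (hdisk_sub hx)
  have hR0 : 0 < R := (by positivity : 0 < δ * r).trans_le hR.1
  have hRr : R ≤ r := hR.2.trans (by nlinarith)
  have hτs : s - r ^ 2 ≤ s - κ / 2 * r ^ 2 := by linarith [sq_nonneg r]
  have hCR : C * R ^ 2 ≤ κ / 2 * r ^ 2 := by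
    calc C * R ^ 2 ≤ C * (2 * (δ * r)) ^ 2 := by gcongr; exact hR.2
      _ = C * (2 * δ) * (2 * δ) * r ^ 2 := by ring
      _ ≤ κ * (1 / 2) * r ^ 2 := by gcongr; linarith
      _ = κ / 2 * r ^ 2 := by ring
  have hle := hcenter (h := κ / 2 * r ^ 2) hR0 (by positivity) hCR (mul_pos hc.1 hM)
    (hu.mono hR0.ne' (ball_subset_ball hRr) hτs le_rfl)
    (fun X hX => huM X ⟨closedBall_subset_closedBall hRr hX.1, hτs.trans hX.2.1, hX.2.2⟩)
    (fun x hx t ht => hsphere x hx t ⟨by nlinarith [ht.1, sq_nonneg r], ht.2⟩)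
  linarith

/-! ### Growth in dimension one -/

section DriftDist

/-- The density on the line, with respect to the base point `p`, whose logarithmic derivative
balances a drift of size `ν G` pointing away from `p`. -/
def driftWeight (ν : ℝ) (G : ℝ → ℝ) (p w : ℝ) : ℝ :=
  Real.exp (-(ν * |∫ v in p..w, G v|))

/-- The signed distance to `p` measured with the density `driftWeight`; its square is the
replacement of `|w - p|²` adapted to the drift `G`. -/
def driftDist (ν : ℝ) (G : ℝ → ℝ) (p w : ℝ) : ℝ :=
  ∫ v in p..w, driftWeight ν G p v

variable {ν B p w : ℝ} {G : ℝ → ℝ}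

lemma driftWeight_pos : 0 < driftWeight ν G p w := Real.exp_pos _

lemma driftWeight_le_one (hν : 0 ≤ ν) : driftWeight ν G p w ≤ 1 :=
  Real.exp_le_one_iff.2 (neg_nonpos.2 (mul_nonneg hν (abs_nonneg _)))

lemma exp_le_driftWeight (hν : 0 ≤ ν) (hB : |∫ v in p..w, G v| ≤ B) :
    Real.exp (-(ν * B)) ≤ driftWeight ν G p w :=
  Real.exp_le_exp.2 (neg_le_neg (mul_le_mul_of_nonneg_left hB hν))

lemma integral_nonpos_of_nonneg_of_le {f : ℝ → ℝ} (hf : ∀ v, 0 ≤ f v) (h : w ≤ p) :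
    ∫ v in p..w, f v ≤ 0 := by
  rw [intervalIntegral.integral_symm]
  exact neg_nonpos.2 (intervalIntegral.integral_nonneg h fun v _ => hf v)

lemma mul_abs_sub_le_abs_integral {f : ℝ → ℝ} {l : ℝ} (hf : Continuous f)
    (h : ∀ v, l ≤ f v) (p w : ℝ) : l * |w - p| ≤ |∫ v in p..w, f v| := by
  wlog hpw : p ≤ w generalizing p w
  · rw [abs_sub_comm, intervalIntegral.integral_symm, abs_neg]
    exact this w p (le_of_not_ge hpw)
  calc l * |w - p| = ∫ _ in p..w, l := by
        rw [abs_of_nonneg (sub_nonneg.2 hpw), intervalIntegral.integral_const, smul_eq_mul,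
          mul_comm]
    _ ≤ ∫ v in p..w, f v :=
        intervalIntegral.integral_mono hpw intervalIntegrable_const
          (hf.intervalIntegrable p w) h
    _ ≤ _ := le_abs_self _

lemma abs_driftDist_le (hν : 0 ≤ ν) : |driftDist ν G p w| ≤ |w - p| := by
  rw [← one_mul |w - p|, ← Real.norm_eq_abs]
  refine intervalIntegral.norm_integral_le_of_norm_le_const fun v _ => ?_
  rw [Real.norm_eq_abs, abs_of_pos driftWeight_pos]
  exact driftWeight_le_one hν

variable (hG : Continuous G)

include hG

lemma hasDerivAt_integral_left (p w : ℝ) : HasDerivAt (fun w => ∫ v in p..w, G v) (G w) w :=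
  (hG.integral_hasStrictDerivAt p w).hasDerivAt

lemma continuous_driftWeight : Continuous (driftWeight ν G p) := by
  have : Continuous fun w => ∫ v in p..w, G v :=
    continuous_iff_continuousAt.2 fun w => (hasDerivAt_integral_left hG p w).continuousAt
  unfold driftWeight
  fun_prop

lemma exp_mul_abs_sub_le_abs_driftDist (hν : 0 ≤ ν) (hB : ∀ v, |∫ v in p..v, G v| ≤ B) :
    Real.exp (-(ν * B)) * |w - p| ≤ |driftDist ν G p w| :=
  mul_abs_sub_le_abs_integral (continuous_driftWeight hG)
    (fun v => exp_le_driftWeight hν (hB v)) p w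

lemma hasDerivAt_driftDist : HasDerivAt (driftDist ν G p) (driftWeight ν G p w) w :=
  hasDerivAt_integral_left (continuous_driftWeight hG) p w

lemma hasDerivAt_driftWeight {κ : ℝ}
    (h : ∀ᶠ v in 𝓝 w, |∫ x in p..v, G x| = κ * ∫ x in p..v, G x) :
    HasDerivAt (driftWeight ν G p) (-(ν * (κ * G w)) * driftWeight ν G p w) w := by
  have heq : driftWeight ν G p =ᶠ[𝓝 w] fun v => Real.exp (-(ν * (κ * ∫ x in p..v, G x))) :=
    h.mono fun v hv => congrArg (fun c => Real.exp (-(ν * c))) hv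
  rw [heq.self_of_nhds, mul_comm]
  exact (((hasDerivAt_integral_left hG p w).const_mul κ).const_mul ν).neg.exp
    |>.congr_of_eventuallyEq heq

lemma hasDerivAt_driftDist_mul_driftWeight (hG0 : ∀ v, 0 ≤ G v) :
    HasDerivAt (fun v => driftDist ν G p v * driftWeight ν G p v)
      (driftWeight ν G p w ^ 2 - ν * G w * |driftDist ν G p w| * driftWeight ν G p w) w := by
  rcases lt_trichotomy w p with hw | rfl | hw
  · have hweight : HasDerivAt (driftWeight ν G p) _ w := hasDerivAt_driftWeight hG (κ := -1) <| by
      filter_upwards [Iio_mem_nhds hw] with v hv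
      rw [abs_of_nonpos (integral_nonpos_of_nonneg_of_le hG0 hv.le), neg_one_mul]
    have hdist : driftDist ν G p w ≤ 0 :=
      integral_nonpos_of_nonneg_of_le (fun _ => driftWeight_pos.le) hw.le
    refine ((hasDerivAt_driftDist hG).mul hweight).congr_deriv ?_
    rw [abs_of_nonpos hdist]
    ring
  · have hzero : driftDist ν G w w = 0 := intervalIntegral.integral_same
    rw [hzero, abs_zero, mul_zero, zero_mul, sub_zero, sq, hasDerivAt_iff_tendsto_slope]
    refine ((hasDerivAt_driftDist hG).tendsto_slope.mul
      ((continuous_driftWeight hG).tendsto w |>.mono_left nhdsWithin_le_nhds)).congr fun v => ?_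
    simp only [slope_def_field, hzero]
    ring
  · have hweight : HasDerivAt (driftWeight ν G p) _ w := hasDerivAt_driftWeight hG (κ := 1) <| by
      filter_upwards [Ioi_mem_nhds hw] with v hv
      rw [abs_of_nonneg (intervalIntegral.integral_nonneg hv.le fun x _ => hG0 x), one_mul]
    have hdist : 0 ≤ driftDist ν G p w :=
      intervalIntegral.integral_nonneg hw.le fun _ _ => driftWeight_pos.le
    refine ((hasDerivAt_driftDist hG).mul hweight).congr_deriv ?_
    rw [abs_of_nonneg hdist]
    ring

end DriftDist

lemma hasGradientAt_comp_apply {φ : ℝ → ℝ} {φ' : ℝ} {i : Fin n} {x : En n}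
    (h : HasDerivAt φ φ' (x i)) :
    HasGradientAt (fun x : En n => φ (x i)) (φ' • EuclideanSpace.single i 1) x := by
  have hd := h.comp_hasFDerivAt x (EuclideanSpace.proj i : En n →L[ℝ] ℝ).hasFDerivAt
  rw [hasGradientAt_iff_hasFDerivAt]
  refine hd.congr_fderiv ?_
  ext v
  simp [EuclideanSpace.inner_single_left]

lemma hasFDerivAt_smul_comp_apply {φ : ℝ → ℝ} {φ' : ℝ} {i : Fin n} {x : En n}
    (h : HasDerivAt φ φ' (x i)) (v : En n) :
    HasFDerivAt (fun x : En n => φ (x i) • v)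
      ((φ' • (EuclideanSpace.proj i : En n →L[ℝ] ℝ)).smulRight v) x :=
  (h.comp_hasFDerivAt x (EuclideanSpace.proj i : En n →L[ℝ] ℝ).hasFDerivAt).smul_const v

lemma norm_eq_abs_apply_zero (x : En 1) : ‖x‖ = |x 0| := by
  simp [EuclideanSpace.norm_eq, Real.sqrt_sq_eq_abs]

lemma norm_smul_single_one (c : ℝ) (i : Fin n) :
    ‖c • (EuclideanSpace.single i 1 : En n)‖ = |c| := by
  simp [norm_smul]

lemma measurePreserving_toLp_const :
    MeasurePreserving fun w : ℝ => (WithLp.toLp 2 fun _ => w : En 1) :=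
  (PiLp.volume_preserving_toLp (Fin 1)).comp (volume_preserving_funUnique (Fin 1) ℝ).symm

lemma IsUnifElliptic.inv_le_apply_zero {ν : ℝ} {A : Matrix (Fin 1) (Fin 1) ℝ}
    (hA : IsUnifElliptic ν A) : ν⁻¹ ≤ A 0 0 := by
  simpa using hA.1 fun _ => 1

lemma isDistSqProfile_driftDist {ν B : ℝ} {G : ℝ → ℝ} {x₀ : En 1} (hν : 0 < ν) (hG : Continuous G)
    (hG0 : ∀ v, 0 ≤ G v) (hB : ∀ w, |∫ v in x₀ 0..w, G v| ≤ B) :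
    IsDistSqProfile ν (Real.exp (-(ν * B))) x₀ (fun x => G (x 0))
      (fun x => driftDist ν G (x₀ 0) (x 0) ^ 2)
      (fun x => (2 * (driftDist ν G (x₀ 0) (x 0) * driftWeight ν G (x₀ 0) (x 0))) •
        EuclideanSpace.single 0 1)
      (fun x => ((2 * (driftWeight ν G (x₀ 0) (x 0) ^ 2 - ν * G (x 0) *
        |driftDist ν G (x₀ 0) (x 0)| * driftWeight ν G (x₀ 0) (x 0))) •
        (EuclideanSpace.proj 0 : En 1 →L[ℝ] ℝ)).smulRight (EuclideanSpace.single 0 1)) where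
  hasGradientAt x := hasGradientAt_comp_apply <|
    ((hasDerivAt_driftDist hG).pow 2).congr_deriv (by push_cast; ring)
  hasFDerivAt x := hasFDerivAt_smul_comp_apply
    ((hasDerivAt_driftDist_mul_driftWeight hG hG0).const_mul 2) _
  mul_sq_norm_le x := by
    rw [norm_eq_abs_apply_zero, ← mul_pow, ← sq_abs (driftDist ν G _ _)]
    exact pow_le_pow_left₀ (by positivity) (exp_mul_abs_sub_le_abs_driftDist hG hν.le hB) 2
  le_sq_norm x := by
    rw [norm_eq_abs_apply_zero, ← sq_abs (driftDist ν G _ _)]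
    exact pow_le_pow_left₀ (abs_nonneg _) (abs_driftDist_le hν.le) 2
  sq_norm_grad_le x := by
    have hE : driftWeight ν G (x₀ 0) (x 0) ^ 2 ≤ 1 :=
      pow_le_one₀ driftWeight_pos.le (driftWeight_le_one hν.le)
    rw [norm_smul_single_one, sq_abs]
    linarith [mul_le_mul_of_nonneg_left hE (sq_nonneg (driftDist ν G (x₀ 0) (x 0)))]
  le_sq_norm_grad x := by
    have hE : Real.exp (-(ν * B)) ^ 2 ≤ driftWeight ν G (x₀ 0) (x 0) ^ 2 :=
      pow_le_pow_left₀ (Real.exp_pos _).le (exp_le_driftWeight hν.le (hB _)) 2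
    rw [norm_smul_single_one, sq_abs]
    linarith [mul_le_mul_of_nonneg_left hE (sq_nonneg (driftDist ν G (x₀ 0) (x 0)))]
  hess_add_drift_le x A hA := by
    set E := driftWeight ν G (x₀ 0) (x 0)
    set D := |driftDist ν G (x₀ 0) (x 0)|
    have hE0 : 0 < E := driftWeight_pos
    have hE : E ^ 2 ≤ 1 := pow_le_one₀ hE0.le (driftWeight_le_one hν.le)
    have hA1 : 1 ≤ A 0 0 * ν := (inv_le_iff_one_le_mul₀ hν).1 hA.inv_le_apply_zero
    have hAν : A 0 0 ≤ ν := le_of_sq_le_sq (hA.sq_apply_le 0 0) hν.le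
    have hdrift : 0 ≤ G (x 0) * D * E := mul_nonneg (mul_nonneg (hG0 _) (abs_nonneg _)) hE0.le
    have hnorm (i : Fin 1) : ‖(2 * (driftDist ν G (x₀ 0) (x 0) * E)) •
        (EuclideanSpace.single i 1 : En 1)‖ = 2 * (D * E) := by
      rw [norm_smul_single_one, abs_mul, abs_mul, abs_of_pos hE0, abs_two]
    calc _ = A 0 0 * (2 * (E ^ 2 - ν * G (x 0) * D * E)) + G (x 0) * (2 * (D * E)) := by
          rw [hnorm]
          simp
      _ = 2 * (A 0 0 * E ^ 2) - 2 * ((A 0 0 * ν - 1) * (G (x 0) * D * E)) := by ring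
      _ ≤ 2 * (ν * 1) - 2 * 0 := by
          gcongr
          exact mul_nonneg (sub_nonneg.2 hA1) hdrift
      _ = 2 * (1 : ℕ) * ν := by push_cast; ring

lemma exists_isDistSqProfile_one {ν B : ℝ} (hν : 0 < ν) (hB : 0 ≤ B) {f : En 1 → ℝ}
    (hf : Continuous f) (hf0 : ∀ x, 0 ≤ f x) (hfB : ∫⁻ x, ‖f x‖ₑ ≤ ENNReal.ofReal B) (x₀ : En 1) :
    ∃ Φ Φ' Φ'', IsDistSqProfile ν (Real.exp (-(ν * B))) x₀ f Φ Φ' Φ'' := by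
  set G : ℝ → ℝ := fun w => f (WithLp.toLp 2 fun _ => w)
  have hGf : (fun x : En 1 => G (x 0)) = f := funext fun x => congrArg f <| by
    ext i
    rw [Subsingleton.elim i 0]
  have hGB (p w : ℝ) : |∫ v in p..w, G v| ≤ B := by
    have h : ‖∫ v in p..w, G v‖ₑ ≤ ENNReal.ofReal B :=
      calc ‖∫ v in p..w, G v‖ₑ = ‖∫ v in uIoc p w, G v‖ₑ := by
            rw [← ofReal_norm, ← ofReal_norm, intervalIntegral.norm_integral_eq_norm_integral_uIoc]
        _ ≤ ∫⁻ v in uIoc p w, ‖G v‖ₑ := enorm_integral_le_lintegral_enorm _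
        _ ≤ ∫⁻ v, ‖G v‖ₑ := setLIntegral_le_lintegral _ _
        _ = ∫⁻ x, ‖f x‖ₑ := measurePreserving_toLp_const.lintegral_comp hf.measurable.enorm
        _ ≤ _ := hfB
    rwa [← ofReal_norm, ENNReal.ofReal_le_ofReal_iff hB, Real.norm_eq_abs] at h
  rw [← hGf]
  exact ⟨_, _, _, isDistSqProfile_driftDist hν (by fun_prop) (fun _ => hf0 _) (hGB _)⟩

section Approximation

variable {α : Type*} [TopologicalSpace α] [NormalSpace α] [R1Space α] [WeaklyLocallyCompactSpace α]
  [MeasurableSpace α] [BorelSpace α] {μ : Measure α} [μ.Regular] {s : Set α} {g : α → ℝ}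

lemma exists_continuous_nonneg_setLIntegral_sub_le {S ε : ℝ≥0∞} (hs : MeasurableSet s)
    (hg : Measurable g) (hg0 : ∀ x, 0 ≤ g x) (hS : S ≠ ∞) (hgS : ∫⁻ x in s, ‖g x‖ₑ ∂μ ≤ S)
    (hε : ε ≠ 0) : ∃ f : α → ℝ, Continuous f ∧ (∀ x, 0 ≤ f x) ∧ ∫⁻ x, ‖f x‖ₑ ∂μ ≤ S + ε ∧
      ∫⁻ x in s, ‖g x - f x‖ₑ ∂μ ≤ ε := by
  have hint : Integrable (s.indicator g) μ := by
    rw [integrable_indicator_iff hs]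
    exact ⟨hg.aestronglyMeasurable, hgS.trans_lt hS.lt_top⟩
  obtain ⟨f, -, hf, hfc, -⟩ := hint.exists_hasCompactSupport_lintegral_sub_le hε
  refine ⟨fun x => |f x|, hfc.abs, fun x => abs_nonneg _, ?_, ?_⟩
  · calc ∫⁻ x, ‖|f x|‖ₑ ∂μ ≤ ∫⁻ x, (‖s.indicator g x‖ₑ + ‖s.indicator g x - f x‖ₑ) ∂μ := by
          refine lintegral_mono fun x => ?_
          rw [Real.enorm_abs, ← enorm_sub_rev (f x)]
          simpa using enorm_add_le (s.indicator g x) (f x - s.indicator g x)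
      _ = ∫⁻ x in s, ‖g x‖ₑ ∂μ + ∫⁻ x, ‖s.indicator g x - f x‖ₑ ∂μ := by
          rw [lintegral_add_left (hg.indicator hs).enorm, ← lintegral_indicator hs]
          simp only [enorm_indicator_eq_indicator_enorm]
      _ ≤ _ := by gcongr
  · refine (setLIntegral_mono' hs fun x hx => ?_).trans ((setLIntegral_le_lintegral s _).trans hf)
    rw [indicator_of_mem hx, ← ofReal_norm, ← ofReal_norm]
    have := abs_abs_sub_abs_le_abs_sub (g x) (f x)
    rw [abs_of_nonneg (hg0 x)] at this
    exact ENNReal.ofReal_le_ofReal this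

lemma exists_continuous_le_add_setLIntegral_le {S ε : ℝ} (hs : MeasurableSet s) (hμs : μ s ≠ ∞)
    (hg : Measurable g) (hg0 : ∀ x, 0 ≤ g x) (hS : 0 ≤ S)
    (hgS : ∫⁻ x in s, ENNReal.ofReal (g x) ∂μ ≤ ENNReal.ofReal S) (hε : 0 < ε) :
    ∃ g₁ g₂ : α → ℝ, Continuous g₁ ∧ (∀ x, 0 ≤ g₁ x) ∧
      ∫⁻ x, ‖g₁ x‖ₑ ∂μ ≤ ENNReal.ofReal (S + ε) ∧ Measurable g₂ ∧ (∀ x, 0 < g₂ x) ∧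
      (∀ x, g x ≤ g₁ x + g₂ x) ∧ ∫⁻ x in s, ENNReal.ofReal (g₂ x) ∂μ ≤ ENNReal.ofReal ε := by
  have hgS' : ∫⁻ x in s, ‖g x‖ₑ ∂μ ≤ ENNReal.ofReal S := by
    simpa only [Real.enorm_eq_ofReal (hg0 _)] using hgS
  obtain ⟨g₁, hg₁c, hg₁0, hg₁S, hg₁⟩ := exists_continuous_nonneg_setLIntegral_sub_le hs hg hg0
    ENNReal.ofReal_ne_top hgS' (ENNReal.ofReal_pos.2 (half_pos hε)).ne'
  have hg₁m := hg₁c.measurable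
  set δ : ℝ := ε / 2 / (μ.real s + 1)
  have hδ : 0 < δ := by positivity
  have hδμ : δ * μ.real s ≤ ε / 2 := by
    rw [div_mul_eq_mul_div, div_le_iff₀ (by positivity)]
    gcongr
    linarith
  refine ⟨g₁, fun x => |g x - g₁ x| + δ, hg₁c, hg₁0, ?_, by fun_prop, fun x => by positivity,
    fun x => by linarith [le_abs_self (g x - g₁ x)], ?_⟩
  · rw [← ENNReal.ofReal_add hS (by positivity)] at hg₁S
    exact hg₁S.trans (ENNReal.ofReal_le_ofReal (by linarith))
  · calc ∫⁻ x in s, ENNReal.ofReal (|g x - g₁ x| + δ) ∂μ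
        = ∫⁻ x in s, ‖g x - g₁ x‖ₑ ∂μ + ENNReal.ofReal δ * μ s := by
          rw [← setLIntegral_const, ← lintegral_add_right _ measurable_const]
          refine lintegral_congr fun x => ?_
          rw [ENNReal.ofReal_add (abs_nonneg _) hδ.le, ← Real.norm_eq_abs, ofReal_norm]
      _ ≤ ENNReal.ofReal (ε / 2) + ENNReal.ofReal (ε / 2) := by
          gcongr
          rw [← ofReal_measureReal hμs, ← ENNReal.ofReal_mul hδ.le]
          exact ENNReal.ofReal_le_ofReal hδμ
      _ = _ := by rw [← ENNReal.ofReal_add (by positivity) (by positivity), add_halves]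

end Approximation

theorem IsSubsolution.exists_spreadsGap_one {ν : ℝ} (hν : 0 < ν) (S : ℝ) :
    ∃ l ∈ Ioc (0 : ℝ) 1, ∃ c ∈ Ioo (0 : ℝ) 1, ∀ {u : En 1 × ℝ → ℝ} {g : En 1 → ℝ} {x₀ y : En 1}
      {r σ t₁ t₂ M : ℝ}, 0 < σ → ball x₀ (3 * σ / l) ⊆ ball y r →
      IsSubsolution ν S y r t₁ t₂ g (fun _ => 0) u → (∀ X ∈ closedCyl y r t₁ t₂, u X ≤ M) →
      SpreadsGap u M c σ t₁ t₂ x₀ := by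
  have hB : 0 ≤ max S 0 + 1 := by positivity
  have hl : Real.exp (-(ν * (max S 0 + 1))) ≤ 1 :=
    Real.exp_le_one_iff.2 (neg_nonpos.2 (mul_nonneg hν.le hB))
  obtain ⟨c, hc, ε, hε, hspread⟩ :=
    IsSubsolution.exists_spreadsGap (n := 1) hν (Real.exp_pos _) hl S
  refine ⟨_, ⟨Real.exp_pos _, hl⟩, c, hc, fun {u g x₀ y r σ t₁ t₂ M} hσ hball hu huM => ?_⟩
  have hgS : ∫⁻ x in ball y r, ENNReal.ofReal (g x) ≤ ENNReal.ofReal (max S 0) := by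
    simpa only [pow_one] using
      hu.lintegral_drift_le.trans (ENNReal.ofReal_le_ofReal (le_max_left S 0))
  obtain ⟨g₁, g₂, hg₁c, hg₁0, hg₁, hg₂m, hg₂0, hle, hg₂⟩ :=
    exists_continuous_le_add_setLIntegral_le measurableSet_ball measure_ball_lt_top.ne
      hu.drift_measurable (fun x => (hu.drift_pos x).le) (le_max_right S 0) hgS
      (lt_min hε one_pos)
  have hg₁B := hg₁.trans (ENNReal.ofReal_le_ofReal (add_le_add_right (min_le_right ε 1) (max S 0)))
  obtain ⟨Φ, Φ', Φ'', hΦ⟩ := exists_isDistSqProfile_one hν hB hg₁c hg₁0 hg₁B x₀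
  refine hspread hσ hball hu huM hΦ hg₂m hg₂0 hle ?_
  simp only [pow_one]
  exact (lintegral_mono_set hball).trans
    (hg₂.trans (ENNReal.ofReal_le_ofReal (min_le_left ε 1)))

theorem SpreadsGap.along_segment {u : En n × ℝ → ℝ} {z y : En n} {M c r δ κ t₁ t₂ μ : ℝ} {K : ℕ}
    (h : ∀ a ∈ Icc (0 : ℝ) 1, SpreadsGap u M c (δ * r) t₁ t₂ (AffineMap.lineMap z y a))
    (hc : c ∈ Ioo (0 : ℝ) 1) (hr : 0 < r) (hzy : dist z y ≤ r) (hδ : δ ∈ Ioc (0 : ℝ) 1)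
    (hδκ : 2 * δ ≤ κ) (hK : 1 ≤ K * δ ^ 2) (ht : t₂ - t₁ ∈ Icc (κ * r ^ 2) (r ^ 2)) (hμ : 0 < μ)
    (hgap : ∀ x ∈ ball z (δ * r), u (x, t₁) ≤ M - μ) : u (y, t₂) ≤ M - c ^ K * μ := by
  have hδ0 : 0 < δ := hδ.1
  have hσ : 0 < δ * r := mul_pos hδ0 hr
  have hσt : (δ * r) ^ 2 ≤ t₂ - t₁ := by
    calc (δ * r) ^ 2 = δ * δ * r ^ 2 := by ring
      _ ≤ 1 * (2 * δ) * r ^ 2 := by gcongr; exacts [hδ.2, by linarith]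
      _ ≤ κ * r ^ 2 := by rw [one_mul]; gcongr
      _ ≤ t₂ - t₁ := ht.1
  have hL : 2 * (nndist z y : ℝ) * (δ * r) ≤ t₂ - t₁ := by
    calc 2 * (nndist z y : ℝ) * (δ * r) ≤ 2 * r * (δ * r) := by gcongr; exact hzy
      _ = 2 * δ * r ^ 2 := by ring
      _ ≤ κ * r ^ 2 := by gcongr
      _ ≤ t₂ - t₁ := ht.1
  have hKt : t₂ - t₁ ≤ K * (δ * r) ^ 2 := by
    calc t₂ - t₁ ≤ 1 * r ^ 2 := by rw [one_mul]; exact ht.2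
      _ ≤ K * δ ^ 2 * r ^ 2 := by gcongr
      _ = K * (δ * r) ^ 2 := by ring
  refine SpreadsGap.along_curve (t₁ := t₁) h (lipschitzWith_lineMap z y).lipschitzOnWith hc hσ hσt
    hL hKt hμ (fun x hx => hgap x ?_) y (by simpa using hσ)
  rwa [AffineMap.lineMap_apply_zero] at hx

theorem exists_isGrowthConstant_one {ν θ κ : ℝ} (hν : 0 < ν) (hθ : 0 < θ) (hκ : 0 < κ) (S : ℝ) :
    ∃ β ∈ Ioo (0 : ℝ) 1, IsGrowthConstant 1 ν S θ κ β := by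
  obtain ⟨l, ⟨hl0, hl1⟩, c, hc, hspread⟩ := IsSubsolution.exists_spreadsGap_one hν S
  obtain ⟨δ, hδ, hδmin, hδκ⟩ : ∃ δ > 0, 3 * δ / l ≤ min 1 θ ∧ 2 * δ ≤ κ := by
    refine ⟨min (l * min 1 θ) κ / 3, by positivity, ?_, ?_⟩
    · rw [div_le_iff₀' hl0]
      linarith [min_le_left (l * min 1 θ) κ]
    · linarith [min_le_right (l * min 1 θ) κ]
  obtain ⟨hδ1, hδθ⟩ := le_min_iff.1 hδmin
  have hδl : δ ≤ 3 * δ / l := (le_div_iff₀ hl0).2 (by nlinarith)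
  obtain ⟨K, hK⟩ := exists_nat_ge (1 / δ ^ 2)
  rw [div_le_iff₀ (by positivity)] at hK
  have hK0 : K ≠ 0 := by
    rintro rfl
    norm_num at hK
  refine ⟨1 - c ^ K, ⟨sub_pos.2 (pow_lt_one₀ hc.1.le hc.2 hK0), sub_lt_self 1 (pow_pos hc.1 _)⟩, ?_⟩
  intro u g y z s r τ M hr hz hτ₁ hτ₂ hu huM hM hdisk
  have hradius : 3 * (δ * r) / l = 3 * δ / l * r := by ring
  have hballs (a : ℝ) (ha : a ∈ Icc (0 : ℝ) 1) :
      ball (AffineMap.lineMap z y a) (3 * (δ * r) / l) ⊆ ball y r := by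
    have hzball : ball z (3 * (δ * r) / l) ⊆ ball y r :=
      (ball_subset_ball (by rw [hradius]; gcongr)).trans hz
    have hyball : ball y (3 * (δ * r) / l) ⊆ ball y r :=
      ball_subset_ball (by rw [hradius]; exact mul_le_of_le_one_left hr.le hδ1)
    exact (convex_setOf_ball_subset (convex_ball y r) _).lineMap_mem hzball hyball ha
  have hle := SpreadsGap.along_segment
    (fun a ha => (hspread (mul_pos hδ hr) (hballs a ha) hu huM).mono hτ₁ le_rfl) hc hr
    (hz (mem_ball_self (by positivity))).le ⟨hδ, hδl.trans hδ1⟩ hδκ hK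
    ⟨by linarith, by linarith⟩ hM fun x hx => by
      simpa using hdisk x (ball_subset_ball (by gcongr; exact hδl.trans hδθ) hx)
  linarith

/-! ### The growth theorem -/

theorem exists_isGrowthConstant [NeZero n] {ν θ κ : ℝ} (hν : 0 < ν) (hθ : 0 < θ) (hκ : 0 < κ)
    (S : ℝ) : ∃ β ∈ Ioo (0 : ℝ) 1, IsGrowthConstant n ν S θ κ β := by
  obtain rfl | hn : n = 1 ∨ 2 ≤ n := by have := NeZero.pos n; omega
  · exact exists_isGrowthConstant_one hν hθ hκ S
  · exact exists_isGrowthConstant_of_two_le hn hν hθ hκ S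

lemma supPos_nonneg (u : En n × ℝ → ℝ) (Q : Set (En n × ℝ)) : 0 ≤ supPos u Q := by
  refine Real.sSup_nonneg ?_
  rintro _ ⟨X, -, rfl⟩
  exact le_max_right _ _

lemma le_supPos_of_mem_closure {u : En n × ℝ → ℝ} {Q : Set (En n × ℝ)} {X : En n × ℝ}
    (hQ : IsCompact (closure Q)) (hu : ContinuousOn u (closure Q)) (hX : X ∈ closure Q) :
    u X ≤ supPos u Q := by
  have hbdd : BddAbove ((fun X => max (u X) 0) '' Q) :=
    (hQ.bddAbove_image (hu.sup continuousOn_const)).mono (image_mono subset_closure)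
  exact le_on_closure (fun Y hY => (le_max_left _ _).trans (le_csSup hbdd (mem_image_of_mem _ hY)))
    hu continuousOn_const hX

theorem second_growth_theorem_general [NeZero n] {ν θ κ : ℝ} (hν : 0 < ν) (hθ : 0 < θ)
    (hκ : 0 < κ) (S : ℝ) :
    ∃ β ∈ Ioo (0 : ℝ) 1, ∀ (y z : En n) (s r τ : ℝ) (u : En n × ℝ → ℝ)
        (a : En n × ℝ → Matrix (Fin n) (Fin n) ℝ) (b : En n × ℝ → En n),
        0 < r → ball z (θ * r) ⊆ ball y r → s - r ^ 2 ≤ τ → τ ≤ s - κ * r ^ 2 →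
        IsC21 u (closure (pcyl (y, s) r)) → UnifParabolic ν a (pcyl (y, s) r) →
        LxnLtinfPow b (pcyl (y, s) r) ≤ ENNReal.ofReal S →
        (∀ X ∈ pcyl (y, s) r, 0 ≤ -Dt u X + Lop a b u X) →
        (∀ x ∈ ball z (θ * r), u (x, τ) ≤ 0) →
        u (y, s) ≤ β * supPos u (pcyl (y, s) r) := by
  obtain ⟨β, hβ, hgrowth⟩ := exists_isGrowthConstant (n := n) hν hθ hκ
    (max S 0 + volume.real (ball (0 : En n) 1))
  refine ⟨β, hβ, fun y z s r τ u a b hr hz hτ₁ hτ₂ hu ha hb hL hdisk => ?_⟩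
  have hcl : closure (pcyl (y, s) r) = closedCyl y r (s - r ^ 2) s := closure_pcyl hr
  have hcompact : IsCompact (closure (pcyl (y, s) r)) := by
    rw [hcl]
    exact (isCompact_closedBall y r).prod isCompact_Icc
  have hle (X : En n × ℝ) (hX : X ∈ closedCyl y r (s - r ^ 2) s) : u X ≤ supPos u (pcyl (y, s) r) :=
    le_supPos_of_mem_closure hcompact hu.cont (hcl.symm ▸ hX)
  obtain ⟨g, hg⟩ := exists_isSubsolution hr hu ha hb hL
  rcases (supPos_nonneg u (pcyl (y, s) r)).eq_or_lt with hzero | hpos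
  · rw [← hzero, mul_zero, hzero]
    exact hle _ ⟨mem_closedBall_self hr.le, sub_le_self s (sq_nonneg r), le_rfl⟩
  · exact hgrowth hr hz hτ₁ hτ₂ hg hle hpos hdisk

/-- **Second Growth Theorem** (Theorem 4.1). -/
theorem second_growth_theorem
    (n : ℕ) (hn : 0 < n) (ν S θ : ℝ) (hν : 1 ≤ ν) (hθ : 0 < θ) :
    ∃ β₃ : ℝ, 0 < β₃ ∧ β₃ < 1 ∧
      ∀ (y z : En n) (s r ρ τ : ℝ) (u : En n × ℝ → ℝ)
        (a : En n × ℝ → Matrix (Fin n) (Fin n) ℝ) (b : En n × ℝ → En n),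
        0 < r → 0 < ρ → ρ = θ * r →
        ball z ρ ⊆ ball y r →
        s - r ^ 2 ≤ τ → τ ≤ s - r ^ 2 / 4 - ρ ^ 2 →
        IsC21 u (closure (pcyl (y, s) r)) →
        UnifParabolic ν a (pcyl (y, s) r) →
        LxnLtinfPow b (pcyl (y, s) r) ≤ ENNReal.ofReal S →
        (∀ X ∈ pcyl (y, s) r, 0 ≤ -Dt u X + Lop a b u X) →
        (∀ x ∈ ball z ρ, u (x, τ) ≤ 0) →
        u (y, s) ≤ β₃ * supPos u (pcyl (y, s) r) := by
  have : NeZero n := ⟨hn.ne'⟩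
  obtain ⟨β, hβ, h⟩ := second_growth_theorem_general (n := n) (by linarith : 0 < ν) hθ
    (by norm_num : (0 : ℝ) < 1 / 4) S
  refine ⟨β, hβ.1, hβ.2, fun y z s r ρ τ u a b hr _ hρ hz hτ₁ hτ₂ => ?_⟩
  subst hρ
  exact h y z s r τ u a b hr hz hτ₁ (by linarith [sq_nonneg (θ * r)])
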